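/- arXiv:1007.4621 — 6 statements merged into one kernel-verified Lean document; each statement's English description precedes it below -/
import Mathlib

section
/- There is an absolute constant C > 0 such that for every odd prime power q, every integer d ≥ 3, and every monic square-free polynomial h ∈ 𝔽_q[X], one has |(1/#H_{d,q}) · #{F ∈ H_{d,q} : gcd(F,h) = 1} − ∏_{P | h} (1 + |P|^{−1})^{−1}| ≤ C q^{−d/2} σ(h), where the product is over the monic irreducible polynomials P dividing h and σ(h) denotes the number of monic divisors of h. -/
/-!
Write `r = √q`. For a finite set `S` of monic irreducibles let `N(S, m)` be the number of monic
square-free `F` of degree `m` divisible by no `P ∈ S`, and let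
`M(S, m) = (1 - 1/q) q ^ m ∏_{P ∈ S} (1 + 1/|P|)⁻¹`. The core is `error_bound`:
`|N(S, m) - M(S, m)| ≤ K(S) r ^ m` for all `m`, where `K(S) = ∏_{P ∈ S} (1 - |P| ^ (-1/2))⁻¹`.

* For `S = ∅`, unique factorization `F = A² B` with `B` square-free gives
  `N(∅, m) = q ^ m - q ^ (m - 1)` for `m ≥ 2` (`card_sqfree_add_two`), so the error vanishes except
  for `m ≤ 1`.
* For the induction step, sorting by divisibility by `P` gives
  `N(S, m) = N(S ∪ {P}, m) + N(S ∪ {P}, m - deg P)` (`card_sqfree_insert`). `M` satisfies the same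
  relation, hence so does the error, and the bound follows by strong induction on `m`, because
  `K(S ∪ {P}) = K(S) + K(S ∪ {P}) |P| ^ (-1/2)`.

Finally `K(S) ≤ 8 · 2 ^ #S` (`euler_factor_bound`): a factor exceeds `2` only when `|P| = 3`, which
happens for at most three `P`. The products of subsets of the primes dividing `h` are distinct monic
divisors of `h`, so `2 ^ #S ≤ σ(h)` (`two_pow_card_le`), and dividing by `N(∅, d)` yields the claim
with `C = 12`.
-/

open Polynomial

namespace CoprimeCount

variable {Fq : Type} [Field Fq] [Fintype Fq]

/-! ### Counting monic and square-free polynomials -/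

/-- Monic polynomials of degree `n` correspond to their `n` lower coefficients. -/
noncomputable def monicEquiv (Fq : Type) [Field Fq] (n : ℕ) :
    {p : Fq[X] // p.Monic ∧ p.natDegree = n} ≃ (Fin n → Fq) :=
  (monicEquivDegreeLT n).trans (degreeLTEquiv Fq n).toEquiv

lemma finite_monic (Fq : Type) [Field Fq] [Fintype Fq] (n : ℕ) :
    {p : Fq[X] | p.Monic ∧ p.natDegree = n}.Finite :=
  Finite.of_equiv _ (monicEquiv Fq n).symm

/-- The monic polynomials of degree `n`. -/
noncomputable def monics (Fq : Type) [Field Fq] [Fintype Fq] (n : ℕ) : Finset Fq[X] :=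
  (finite_monic Fq n).toFinset

lemma mem_monics {n : ℕ} {F : Fq[X]} : F ∈ monics Fq n ↔ F.Monic ∧ F.natDegree = n := by
  simp [monics]

lemma card_monics (n : ℕ) : (monics Fq n).card = Fintype.card Fq ^ n := by
  rw [monics, ← Set.ncard_eq_toFinset_card _ (finite_monic Fq n)]
  rw [← Nat.card_coe_set_eq]
  refine (Nat.card_congr (monicEquiv Fq n)).trans ?_
  simp

open Classical in
/-- The monic square-free polynomials of degree `n` divisible by no member of `S`. -/
noncomputable def sqfree (S : Finset Fq[X]) (n : ℕ) : Finset Fq[X] :=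
  {F ∈ monics Fq n | Squarefree F ∧ ∀ P ∈ S, ¬ P ∣ F}

lemma mem_sqfree {S : Finset Fq[X]} {n : ℕ} {F : Fq[X]} :
    F ∈ sqfree S n ↔ F.Monic ∧ F.natDegree = n ∧ Squarefree F ∧ ∀ P ∈ S, ¬ P ∣ F := by
  simp [sqfree, mem_monics, and_assoc]

lemma dvd_of_sq_dvd {Fq : Type} [Field Fq] {x y b : Fq[X]} (hx : x ≠ 0) (hb : Squarefree b)
    (h : x * x ∣ y * y * b) : x ∣ y := by
  let : GCDMonoid Fq[X] := UniqueFactorizationMonoid.toGCDMonoid _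
  obtain ⟨x', y', h1, h2, h3⟩ := _root_.extract_gcd x y
  have hg : gcd x y ≠ 0 := fun h0 => hx (by rw [h1, h0, zero_mul])
  set g := gcd x y
  have hco : IsCoprime x' y' := (gcd_isUnit_iff x' y').1 h3
  have h4 : x' * x' ∣ y' * y' * b := by
    rw [h1, h2] at h
    have : (g * g) * (x' * x') ∣ (g * g) * (y' * y' * b) := by
      convert h using 1 <;> ring
    exact (mul_dvd_mul_iff_left (mul_ne_zero hg hg)).1 this
  have h5 : IsCoprime (x' * x') (y' * y') :=
    (hco.mul_right hco).mul_left (hco.mul_right hco)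
  have h6 : IsUnit x' := hb _ (h5.dvd_of_dvd_mul_left h4)
  rw [h1]
  exact (h6.mul_right_dvd).2 (h2 ▸ dvd_mul_right g y')

lemma exists_sq_mul {Fq : Type} [Field Fq] (n : ℕ) : ∀ F : Fq[X], F.Monic → F.natDegree = n →
    ∃ A B : Fq[X], A.Monic ∧ B.Monic ∧ Squarefree B ∧ A * A * B = F := by
  induction n using Nat.strong_induction_on with
  | _ n ih =>
    intro F hF hn
    by_cases hs : Squarefree F
    · exact ⟨1, F, monic_one, hF, hs, by simp⟩
    · simp only [Squarefree, not_forall] at hs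
      obtain ⟨x, hx, hxu⟩ := hs
      obtain ⟨P, hPm, hPi, hPx⟩ := exists_monic_irreducible_factor x hxu
      obtain ⟨G, rfl⟩ := (mul_dvd_mul hPx hPx).trans hx
      have hG : G.Monic := (hPm.mul hPm).of_mul_monic_left hF
      have hd := (hPm.mul hPm).natDegree_mul hG
      have hd2 := hPm.natDegree_mul hPm
      have := hPi.natDegree_pos
      obtain ⟨A, B, hA, hB, hBs, rfl⟩ := ih G.natDegree (by omega) G hG rfl
      exact ⟨P * A, B, hPm.mul hA, hB, hBs, by ring⟩

/-- Every monic polynomial is uniquely `A² B` with `A` monic and `B` monic square-free; the sum runs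
over `k = deg A`. -/
lemma monics_card_eq_sum (n : ℕ) :
    (monics Fq n).card =
      ∑ k ∈ Finset.range (n / 2 + 1), Fintype.card Fq ^ k * (sqfree (∅ : Finset Fq[X]) (n - 2 * k)).card := by
  have : ∀ k, Fintype.card Fq ^ k * (sqfree (∅ : Finset Fq[X]) (n - 2 * k)).card =
      (monics Fq k ×ˢ sqfree (∅ : Finset Fq[X]) (n - 2 * k)).card := by
    intro k; rw [Finset.card_product, card_monics]
  simp_rw [this]
  rw [← Finset.card_sigma]
  symm
  refine Finset.card_bij (fun x _ => x.2.1 * x.2.1 * x.2.2) ?_ ?_ ?_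
  · rintro ⟨k, A, B⟩ h
    simp only [Finset.mem_sigma, Finset.mem_range, Finset.mem_product, mem_monics, mem_sqfree] at h ⊢
    obtain ⟨hk, ⟨hA, hAk⟩, hB, hBk, -⟩ := h
    refine ⟨(hA.mul hA).mul hB, ?_⟩
    rw [(hA.mul hA).natDegree_mul hB, hA.natDegree_mul hA]
    omega
  · rintro ⟨k, A, B⟩ h ⟨k', A', B'⟩ h' e
    simp only [Finset.mem_sigma, Finset.mem_range, Finset.mem_product, mem_monics, mem_sqfree] at h h' e
    obtain ⟨hk, ⟨hA, hAk⟩, hB, hBk, hBs, -⟩ := h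
    obtain ⟨hk', ⟨hA', hAk'⟩, hB', hBk', hBs', -⟩ := h'
    have h1 : A ∣ A' := dvd_of_sq_dvd hA.ne_zero hBs' (e ▸ dvd_mul_right _ _)
    have h2 : A' ∣ A := dvd_of_sq_dvd hA'.ne_zero hBs (e ▸ dvd_mul_right _ _)
    obtain rfl : A = A' := eq_of_monic_of_associated hA hA' (associated_of_dvd_dvd h1 h2)
    obtain rfl : B = B' := mul_left_cancel₀ (mul_ne_zero hA.ne_zero hA.ne_zero) e
    obtain rfl : k = k' := by omega
    rfl
  · intro F hF
    rw [mem_monics] at hF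
    obtain ⟨A, B, hA, hB, hBs, rfl⟩ := exists_sq_mul n F hF.1 hF.2
    have h1 := (hA.mul hA).natDegree_mul hB
    have h2 := hA.natDegree_mul hA
    refine ⟨⟨A.natDegree, A, B⟩, ?_, rfl⟩
    simp only [Finset.mem_sigma, Finset.mem_range, Finset.mem_product, mem_monics, mem_sqfree]
    refine ⟨by omega, ⟨hA, trivial⟩, hB, by omega, hBs, by simp⟩

/-- The number of monic square-free polynomials of degree `m ≥ 2` is `q ^ m - q ^ (m - 1)`. -/
lemma card_sqfree_add_two (n : ℕ) :
    (sqfree (∅ : Finset Fq[X]) (n + 2)).card + Fintype.card Fq ^ (n + 1) =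
      Fintype.card Fq ^ (n + 2) := by
  have h := monics_card_eq_sum (Fq := Fq) (n + 2)
  have h0 := monics_card_eq_sum (Fq := Fq) n
  rw [card_monics] at h h0
  rw [show (n + 2) / 2 = n / 2 + 1 by omega, Finset.sum_range_succ'] at h
  rw [h, pow_succ', h0, Finset.mul_sum, add_comm]
  simp only [pow_zero, one_mul, mul_zero, Nat.sub_zero]
  congr 1
  refine Finset.sum_congr rfl fun k _ => ?_
  rw [show n + 2 - 2 * (k + 1) = n - 2 * k by omega]
  ring

lemma card_sqfree_of_le_one {n : ℕ} (hn : n ≤ 1) :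
    (sqfree (∅ : Finset Fq[X]) n).card = Fintype.card Fq ^ n := by
  have h := monics_card_eq_sum (Fq := Fq) n
  rw [card_monics, show n / 2 = 0 by omega] at h
  simpa using h.symm

lemma not_dvd_of_ne {Fq : Type} [Field Fq] {P Q : Fq[X]} (hP : P.Monic) (hPi : Irreducible P)
    (hQ : Q.Monic) (hQi : Irreducible Q) (hne : Q ≠ P) : ¬ Q ∣ P := fun h =>
  hne (eq_of_monic_of_associated hQ hP (hQi.associated_of_dvd hPi h))

open Classical in
/-- The members of `sqfree S n` not divisible by `P` form `sqfree (insert P S) n`; those divisible by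
`P` are `P * G` with `G ∈ sqfree (insert P S) (n - deg P)`, as square-freeness forces `P ∤ G`. -/
lemma card_sqfree_insert {S : Finset Fq[X]} {P : Fq[X]} (hPS : P ∉ S)
    (hP : P.Monic) (hPi : Irreducible P) (hS : ∀ Q ∈ S, Q.Monic ∧ Irreducible Q) (n : ℕ) :
    (sqfree S n).card = (sqfree (insert P S) n).card +
      if P.natDegree ≤ n then (sqfree (insert P S) (n - P.natDegree)).card else 0 := by
  rw [← Finset.card_filter_add_card_filter_not (s := sqfree S n) (fun F => P ∣ F), add_comm]
  congr 1
  · congr 1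
    ext F
    simp only [Finset.mem_filter, mem_sqfree, Finset.forall_mem_insert]
    tauto
  · split_ifs with hn
    · symm
      refine Finset.card_bij (fun F _ => P * F) ?_ ?_ ?_
      · intro F hF
        simp only [Finset.mem_filter, mem_sqfree, Finset.forall_mem_insert] at hF ⊢
        obtain ⟨hF, hd, hs, hPF, hSF⟩ := hF
        refine ⟨⟨hP.mul hF, ?_, ?_, ?_⟩, dvd_mul_right _ _⟩
        · rw [hP.natDegree_mul hF]; omega
        · rw [squarefree_mul_iff]
          exact ⟨hPi.isRelPrime_iff_not_dvd.2 hPF, hPi.squarefree, hs⟩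
        · intro Q hQ hdvd
          rcases (hS Q hQ).2.prime.dvd_or_dvd hdvd with h | h
          · exact not_dvd_of_ne hP hPi (hS Q hQ).1 (hS Q hQ).2 (fun e => hPS (e ▸ hQ)) h
          · exact hSF Q hQ h
      · intro F _ G _ h
        exact mul_left_cancel₀ hP.ne_zero h
      · intro F hF
        simp only [Finset.mem_filter, mem_sqfree] at hF
        obtain ⟨⟨hF, hd, hs, hSF⟩, G, rfl⟩ := hF
        have hG := hP.of_mul_monic_left hF
        refine ⟨G, ?_, rfl⟩
        simp only [mem_sqfree, Finset.forall_mem_insert]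
        rw [hP.natDegree_mul hG] at hd
        rw [squarefree_mul_iff] at hs
        exact ⟨hG, by omega, hs.2.2, hPi.isRelPrime_iff_not_dvd.1 hs.1,
          fun Q hQ h => hSF Q hQ (h.mul_left P)⟩
    · rw [Finset.card_eq_zero, Finset.filter_eq_empty_iff]
      intro F hF hPF
      rw [mem_sqfree] at hF
      exact hn (hF.2.1 ▸ natDegree_le_of_dvd hPF hF.1.ne_zero)

/-! ### The error term -/

/-- The expected size of `sqfree S m`. -/
noncomputable def mainTerm (S : Finset Fq[X]) (m : ℕ) : ℝ :=
  (1 - (Fintype.card Fq : ℝ)⁻¹) * (Fintype.card Fq : ℝ) ^ m *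
    ∏ P ∈ S, (1 + ((Fintype.card Fq : ℝ) ^ P.natDegree)⁻¹)⁻¹

lemma base_bound (m : ℕ) :
    |((sqfree (∅ : Finset Fq[X]) m).card : ℝ) - mainTerm (∅ : Finset Fq[X]) m| ≤
      √(Fintype.card Fq : ℝ) ^ m := by
  have hq : (1 : ℝ) < Fintype.card Fq := by exact_mod_cast Fintype.one_lt_card
  have hr : (1 : ℝ) ≤ √(Fintype.card Fq : ℝ) := by
    rw [Real.one_le_sqrt]; exact hq.le
  match m with
  | 0 =>
    rw [card_sqfree_of_le_one (by norm_num)]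
    simp only [mainTerm, Finset.prod_empty, pow_zero, Nat.cast_one, mul_one]
    rw [sub_sub_cancel, abs_of_pos (by positivity)]
    exact inv_le_one_of_one_le₀ hq.le
  | 1 =>
    rw [card_sqfree_of_le_one (by norm_num)]
    simp only [mainTerm, Finset.prod_empty, pow_one, mul_one]
    rw [show (Fintype.card Fq : ℝ) - (1 - (Fintype.card Fq : ℝ)⁻¹) * Fintype.card Fq = 1 by
      field_simp; ring]
    simpa using hr
  | n + 2 =>
    have h : ((sqfree (∅ : Finset Fq[X]) (n + 2)).card : ℝ) + (Fintype.card Fq : ℝ) ^ (n + 1) =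
      (Fintype.card Fq : ℝ) ^ (n + 2) := by exact_mod_cast card_sqfree_add_two (Fq := Fq) n
    rw [show ((sqfree (∅ : Finset Fq[X]) (n + 2)).card : ℝ) - mainTerm (∅ : Finset Fq[X]) (n + 2)
      = 0 by
        rw [eq_sub_of_add_eq h, mainTerm, Finset.prod_empty]
        field_simp; ring]
    simp only [abs_zero]
    positivity

open Classical in
lemma error_bound (S : Finset Fq[X]) (hS : ∀ Q ∈ S, Q.Monic ∧ Irreducible Q) :
    ∀ m : ℕ, |((sqfree S m).card : ℝ) - mainTerm S m| ≤
      (∏ P ∈ S, (1 - (√(Fintype.card Fq : ℝ) ^ P.natDegree)⁻¹)⁻¹) *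
        √(Fintype.card Fq : ℝ) ^ m := by
  have hq : (1 : ℝ) < Fintype.card Fq := by exact_mod_cast Fintype.one_lt_card
  have hr : (1 : ℝ) < √(Fintype.card Fq : ℝ) := by
    rw [Real.lt_sqrt] <;> linarith
  have hrq : √(Fintype.card Fq : ℝ) ^ 2 = Fintype.card Fq := Real.sq_sqrt (by linarith)
  induction S using Finset.induction_on with
  | empty => simpa using base_bound (Fq := Fq)
  | insert P S hPS ih =>
    obtain ⟨⟨hP, hPi⟩, hS⟩ := (Finset.forall_mem_insert ..).1 hS
    specialize ih hS
    have hrec := card_sqfree_insert hPS hP hPi hS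
    have hd := hPi.natDegree_pos
    rw [Finset.prod_insert hPS]
    set r := √(Fintype.card Fq : ℝ)
    set K := ∏ P ∈ S, (1 - (r ^ P.natDegree)⁻¹)⁻¹
    have hr1 : ∀ Q ∈ S, 0 < (r ^ Q.natDegree)⁻¹ ∧ (r ^ Q.natDegree)⁻¹ < 1 := fun Q hQ =>
      ⟨by positivity, inv_lt_one_of_one_lt₀
        (one_lt_pow₀ hr (hS Q hQ).2.natDegree_pos.ne')⟩
    have hK1 : 1 ≤ K := by
      refine (Finset.prod_const_one (s := S)).symm.le.trans ?_
      refine Finset.prod_le_prod (fun _ _ => zero_le_one) fun Q hQ => ?_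
      obtain ⟨h1, h2⟩ := hr1 Q hQ
      exact one_le_inv_iff₀.2 ⟨by linarith, by linarith⟩
    set x := (r ^ P.natDegree)⁻¹ with hx
    have hx0 : 0 < x := by positivity
    have hx1 : x < 1 := inv_lt_one_of_one_lt₀ (one_lt_pow₀ hr hd.ne')
    have hKx : (1 - x)⁻¹ * K = K + (1 - x)⁻¹ * K * x := by
      have : 1 - x ≠ 0 := by linarith
      field_simp; ring
    have hK'1 : 1 ≤ (1 - x)⁻¹ * K := by
      rw [hKx]
      have : 0 < 1 - x := by linarith
      have : 0 ≤ (1 - x)⁻¹ * K * x := by positivity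
      linarith
    -- `|P|⁻¹ = x ^ 2`, so `hmain` says that the main terms obey the recursion of `card_sqfree_insert`.
    have hqx : ((Fintype.card Fq : ℝ) ^ P.natDegree)⁻¹ = x ^ 2 := by
      rw [← hrq, hx, inv_pow, ← pow_mul, ← pow_mul, mul_comm]
    have hmain : ∀ m, mainTerm S m = mainTerm (insert P S) m * (1 + x ^ 2) := by
      intro m
      rw [mainTerm, mainTerm, Finset.prod_insert hPS, hqx]
      have : 1 + x ^ 2 ≠ 0 := by positivity
      field_simp
    have hmain_nonneg : ∀ m, 0 ≤ mainTerm (insert P S) m := by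
      intro m
      have : 0 ≤ 1 - (Fintype.card Fq : ℝ)⁻¹ := by
        linarith [inv_le_one_of_one_le₀ hq.le]
      unfold mainTerm
      positivity
    have hmain_le : ∀ m, mainTerm (insert P S) m ≤ r ^ m * r ^ m := by
      intro m
      have h1 : (1 - (Fintype.card Fq : ℝ)⁻¹) ≤ 1 := by
        have : 0 ≤ (Fintype.card Fq : ℝ)⁻¹ := by positivity
        linarith
      have h2 : ∏ P ∈ insert P S, (1 + ((Fintype.card Fq : ℝ) ^ P.natDegree)⁻¹)⁻¹ ≤ 1 := by
        refine Finset.prod_le_one (fun _ _ => by positivity) fun Q _ => ?_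
        have : 0 ≤ ((Fintype.card Fq : ℝ) ^ Q.natDegree)⁻¹ := by positivity
        exact inv_le_one_of_one_le₀ (by linarith)
      rw [← mul_pow, ← sq, hrq]
      unfold mainTerm
      calc _ ≤ 1 * (Fintype.card Fq : ℝ) ^ m * 1 := by gcongr
        _ = _ := by ring
    intro m
    induction m using Nat.strong_induction_on with
    | _ m ihm =>
      have e := ih m
      have hrecm := hrec m
      rw [hmain] at e
      rw [hKx, add_mul]
      by_cases hm : P.natDegree ≤ m
      · rw [if_pos hm] at hrecm
        have e2 := ihm (m - P.natDegree) (by omega)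
        have hrm : r ^ (m - P.natDegree) = r ^ m * x := pow_sub₀ r (by positivity) hm
        have hmm : mainTerm (insert P S) (m - P.natDegree) = mainTerm (insert P S) m * x ^ 2 := by
          unfold mainTerm
          rw [pow_sub₀ _ (by positivity) hm, hqx]; ring
        rw [hmm, hrm] at e2
        have hrecm' : ((sqfree S m).card : ℝ) = (sqfree (insert P S) m).card +
          (sqfree (insert P S) (m - P.natDegree)).card := by exact_mod_cast hrecm
        rw [hrecm'] at e
        rw [abs_le] at *
        constructor <;> linarith
      -- Here `N(S ∪ {P}, m - deg P)` is absent from the recursion, while the matching main term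
      -- `M(S ∪ {P}, m) x ^ 2` is at most `r ^ m x`.
      · rw [if_neg hm, add_zero] at hrecm
        rw [hrecm] at e
        have h1 : mainTerm (insert P S) m * x ^ 2 ≤ r ^ m * x := by
          have h2 : r ^ m * x ≤ 1 := by
            rw [hx, ← div_eq_mul_inv]
            exact div_le_one_of_le₀ (pow_le_pow_right₀ hr.le (by omega)) (by positivity)
          calc _ ≤ r ^ m * r ^ m * x ^ 2 := by gcongr; exact hmain_le m
            _ = (r ^ m * x) * (r ^ m * x) := by ring
            _ ≤ (r ^ m * x) * 1 := by gcongr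
            _ = _ := mul_one _
        have h2 : r ^ m * x ≤ (1 - x)⁻¹ * K * x * r ^ m := by
          calc _ = 1 * x * r ^ m := by ring
            _ ≤ _ := by gcongr
        have h3 : 0 ≤ mainTerm (insert P S) m * x ^ 2 := mul_nonneg (hmain_nonneg m) (by positivity)
        rw [abs_le] at *
        constructor <;> linarith

open Classical in
lemma euler_factor_bound (hq : 3 ≤ Fintype.card Fq) (S : Finset Fq[X])
    (hS : ∀ Q ∈ S, Q.Monic ∧ Irreducible Q) :
    ∏ P ∈ S, (1 - (√(Fintype.card Fq : ℝ) ^ P.natDegree)⁻¹)⁻¹ ≤ 8 * 2 ^ S.card := by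
  have hq' : (3 : ℝ) ≤ Fintype.card Fq := by exact_mod_cast hq
  have hr0 : 0 ≤ √(Fintype.card Fq : ℝ) := Real.sqrt_nonneg _
  have hrq : √(Fintype.card Fq : ℝ) ^ 2 = Fintype.card Fq := Real.sq_sqrt (by linarith)
  set r := √(Fintype.card Fq : ℝ)
  have hr : (3 / 2 : ℝ) ≤ r := by nlinarith
  have hone : ∀ Q ∈ S, 3 / 2 ≤ r ^ Q.natDegree := fun Q hQ =>
    hr.trans (le_self_pow₀ (by linarith) (hS Q hQ).2.natDegree_pos.ne')
  -- `T` collects the primes with `|P| < 4`; these are linear, and exist only for `q = 3`.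
  let T : Finset Fq[X] := {P ∈ S | r ^ P.natDegree < 2}
  have hT : T.card ≤ 3 := by
    by_cases h3 : Fintype.card Fq = 3
    · have : T ⊆ monics Fq 1 := by
        intro P hP
        obtain ⟨hPS, hP2⟩ := Finset.mem_filter.1 hP
        rw [mem_monics]
        refine ⟨(hS P hPS).1, ?_⟩
        have := (hS P hPS).2.natDegree_pos
        by_contra hne
        have h2 : r ^ 2 ≤ r ^ P.natDegree := pow_le_pow_right₀ (by linarith) (by omega)
        rw [hrq] at h2
        linarith
      calc T.card ≤ (monics Fq 1).card := Finset.card_le_card this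
        _ = 3 := by rw [card_monics, h3, pow_one]
    · have h4 : (4 : ℝ) ≤ Fintype.card Fq := by
        exact_mod_cast (by omega : 4 ≤ Fintype.card Fq)
      have : T = ∅ := by
        rw [Finset.filter_eq_empty_iff]
        intro P hP
        have h2 : (2 : ℝ) ≤ r := by nlinarith
        exact not_lt.2 (h2.trans (le_self_pow₀ (by linarith) (hS P hP).2.natDegree_pos.ne'))
      simp [this]
  calc ∏ P ∈ S, (1 - (r ^ P.natDegree)⁻¹)⁻¹
      ≤ ∏ P ∈ S, (if r ^ P.natDegree < 2 then (2 : ℝ) else 1) * 2 := by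
        refine Finset.prod_le_prod (fun P hP => ?_) fun P hP => ?_
        · have := hone P hP
          have : (r ^ P.natDegree)⁻¹ ≤ 1 := inv_le_one_of_one_le₀ (by linarith)
          exact inv_nonneg.2 (by linarith)
        · have h1 := hone P hP
          split_ifs with h
          · have : (r ^ P.natDegree)⁻¹ ≤ (3 / 2)⁻¹ := inv_anti₀ (by norm_num) h1
            refine inv_le_of_inv_le₀ (by norm_num) ?_
            norm_num at this ⊢
            linarith
          · have : (r ^ P.natDegree)⁻¹ ≤ 2⁻¹ := inv_anti₀ (by norm_num) (not_lt.1 h)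
            refine inv_le_of_inv_le₀ (by norm_num) ?_
            norm_num at this ⊢
            linarith
    _ = 2 ^ T.card * 2 ^ S.card := by
        rw [Finset.prod_mul_distrib, Finset.prod_const, ← Finset.prod_filter, Finset.prod_const]
    _ ≤ 2 ^ 3 * 2 ^ S.card := by
        gcongr
        norm_num
    _ = _ := by norm_num

/-! ### Divisors of `h` -/

lemma finite_monic_dvd {h : Fq[X]} (hh : h ≠ 0) : {D : Fq[X] | D.Monic ∧ D ∣ h}.Finite := by
  refine (Set.Finite.biUnion (Set.finite_Iic h.natDegree) fun n _ => finite_monic Fq n).subset ?_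
  rintro D ⟨hD, hDh⟩
  simp only [Set.mem_iUnion]
  exact ⟨D.natDegree, natDegree_le_of_dvd hDh hh, hD, rfl⟩

open Classical in
lemma two_pow_card_le {h : Fq[X]} (hh : h ≠ 0) (S : Finset Fq[X])
    (hS : ∀ Q ∈ S, Q.Monic ∧ Irreducible Q ∧ Q ∣ h) :
    2 ^ S.card ≤ {D : Fq[X] | D.Monic ∧ D ∣ h}.ncard := by
  rw [← Finset.card_powerset, ← Set.ncard_coe_finset]
  have hmem : ∀ T ⊆ S, ∀ Q ∈ S, Q ∣ ∏ P ∈ T, P → Q ∈ T := by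
    intro T hT Q hQ hdvd
    obtain ⟨P, hP, hQP⟩ := (hS Q hQ).2.1.prime.exists_mem_finset_dvd hdvd
    obtain ⟨hPm, hPi, -⟩ := hS P (hT hP)
    by_contra hQT
    exact not_dvd_of_ne hPm hPi (hS Q hQ).1 (hS Q hQ).2.1 (fun e => hQT (e ▸ hP)) hQP
  refine Set.ncard_le_ncard_of_injOn (fun T => ∏ P ∈ T, P) ?_ ?_ (finite_monic_dvd hh)
  · intro T hT
    have hT : T ⊆ S := by simpa using hT
    refine ⟨monic_prod_of_monic _ _ fun P hP => (hS P (hT hP)).1, ?_⟩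
    refine Finset.prod_dvd_of_coprime (fun P hP Q hQ hne => ?_) fun P hP => (hS P (hT hP)).2.2
    exact (hS P (hT hP)).2.1.coprime_iff_not_dvd.2
      (not_dvd_of_ne (hS Q (hT hQ)).1 (hS Q (hT hQ)).2.1 (hS P (hT hP)).1 (hS P (hT hP)).2.1 hne)
  · intro T hT U hU e
    have hT : T ⊆ S := by simpa using hT
    have hU : U ⊆ S := by simpa using hU
    have e : ∏ P ∈ T, P = ∏ P ∈ U, P := e
    ext P
    exact ⟨fun hP => hmem U hU P (hT hP) (e ▸ Finset.dvd_prod_of_mem _ hP),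
      fun hP => hmem T hT P (hU hP) (e ▸ Finset.dvd_prod_of_mem _ hP)⟩

lemma isCoprime_iff {Fq : Type} [Field Fq] {F h : Fq[X]} (hh : h ≠ 0) :
    IsCoprime F h ↔ ∀ P : Fq[X], P.Monic ∧ Irreducible P ∧ P ∣ h → ¬ P ∣ F := by
  constructor
  · rintro hc P ⟨-, hPi, hPh⟩ hPF
    exact hPi.not_isUnit (hc.isUnit_of_dvd' hPF hPh)
  · intro H
    refine isCoprime_of_irreducible_dvd (fun h0 => hh h0.2) fun z hz hzF hzh => ?_
    obtain ⟨P, hPm, hPi, hPz⟩ := exists_monic_irreducible_factor z hz.not_isUnit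
    exact H P ⟨hPm, hPi, hPz.trans hzh⟩ (hPz.trans hzF)

end CoprimeCount

/-- There is an absolute constant `C > 0` such that for every odd prime power `q`
(realized as the cardinality of a finite field `Fq`), every integer `d ≥ 3`, and every
monic square-free polynomial `h ∈ Fq[X]`, one has
`|(1/#H_{d,q}) · #{F ∈ H_{d,q} : gcd(F,h) = 1} - ∏_{P ∣ h} (1 + |P|⁻¹)⁻¹| ≤ C q^(-d/2) σ(h)`,
where the product runs over the monic irreducible polynomials `P` dividing `h`,
`|P| = q^(deg P)`, and `σ(h)` is the number of monic divisors of `h`. -/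
theorem coprime_count_mean :
    ∃ C : ℝ, 0 < C ∧
      ∀ (Fq : Type) [Field Fq] [Fintype Fq], Odd (Fintype.card Fq) →
        ∀ d : ℕ, 3 ≤ d → ∀ h : Polynomial Fq, h.Monic → Squarefree h →
          |(({F : Polynomial Fq | F.Monic ∧ Squarefree F ∧ F.natDegree = d}.ncard : ℝ))⁻¹ *
                ({F : Polynomial Fq |
                    F.Monic ∧ Squarefree F ∧ F.natDegree = d ∧ IsCoprime F h}.ncard : ℝ)
              - ∏ᶠ P ∈ {P : Polynomial Fq | P.Monic ∧ Irreducible P ∧ P ∣ h},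
                  (1 + ((Fintype.card Fq : ℝ) ^ P.natDegree)⁻¹)⁻¹|
            ≤ C * (Fintype.card Fq : ℝ) ^ (-(d : ℝ) / 2) *
                ({D : Polynomial Fq | D.Monic ∧ D ∣ h}.ncard : ℝ) := by
  refine ⟨12, by norm_num, ?_⟩
  intro Fq _ _ hodd d hd h hh hsq
  have hq1 : 1 < Fintype.card Fq := Fintype.one_lt_card
  have hq3 : 3 ≤ Fintype.card Fq := by
    obtain ⟨k, hk⟩ := hodd
    omega
  have hfin : {P : Fq[X] | P.Monic ∧ Irreducible P ∧ P ∣ h}.Finite :=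
    (CoprimeCount.finite_monic_dvd hh.ne_zero).subset fun P hP => ⟨hP.1, hP.2.2⟩
  rw [finprod_mem_eq_finite_toFinset_prod _ hfin]
  have hmem : ∀ P, P ∈ hfin.toFinset ↔ P.Monic ∧ Irreducible P ∧ P ∣ h := by
    intro P; simp
  set S := hfin.toFinset
  have hS : ∀ Q ∈ S, Q.Monic ∧ Irreducible Q := fun Q hQ =>
    ⟨((hmem Q).1 hQ).1, ((hmem Q).1 hQ).2.1⟩
  have hall : {F : Fq[X] | F.Monic ∧ Squarefree F ∧ F.natDegree = d} =
      (CoprimeCount.sqfree (∅ : Finset Fq[X]) d : Set Fq[X]) := by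
    ext F
    simp [CoprimeCount.mem_sqfree]
    tauto
  have hcop : {F : Fq[X] | F.Monic ∧ Squarefree F ∧ F.natDegree = d ∧ IsCoprime F h} =
      (CoprimeCount.sqfree S d : Set Fq[X]) := by
    ext F
    simp only [Set.mem_ofPred_eq, Finset.mem_coe, CoprimeCount.mem_sqfree, hmem,
      CoprimeCount.isCoprime_iff hh.ne_zero]
    tauto
  rw [hall, hcop, Set.ncard_coe_finset, Set.ncard_coe_finset]
  have hσ : (2 : ℝ) ^ S.card ≤ ({D : Fq[X] | D.Monic ∧ D ∣ h}.ncard : ℝ) := by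
    exact_mod_cast CoprimeCount.two_pow_card_le hh.ne_zero S fun Q hQ => (hmem Q).1 hQ
  have herr := CoprimeCount.error_bound S hS d
  have hK := CoprimeCount.euler_factor_bound hq3 S hS
  have hq : (3 : ℝ) ≤ Fintype.card Fq := by exact_mod_cast hq3
  have hcount : ((CoprimeCount.sqfree (∅ : Finset Fq[X]) d).card : ℝ) =
      (1 - (Fintype.card Fq : ℝ)⁻¹) * (Fintype.card Fq : ℝ) ^ d := by
    obtain ⟨n, rfl⟩ : ∃ n, d = n + 2 := ⟨d - 2, by omega⟩
    have e : ((CoprimeCount.sqfree (∅ : Finset Fq[X]) (n + 2)).card : ℝ) +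
        (Fintype.card Fq : ℝ) ^ (n + 1) = (Fintype.card Fq : ℝ) ^ (n + 2) := by
      exact_mod_cast CoprimeCount.card_sqfree_add_two (Fq := Fq) n
    rw [eq_sub_of_add_eq e]
    field_simp; ring
  have hrpow : (Fintype.card Fq : ℝ) ^ (-(d : ℝ) / 2) = (√(Fintype.card Fq : ℝ) ^ d)⁻¹ := by
    rw [Real.sqrt_eq_rpow, ← Real.rpow_natCast, ← Real.rpow_mul (by linarith),
      ← Real.rpow_neg (by linarith)]
    congr 1
    ring
  rw [hrpow, hcount]
  unfold CoprimeCount.mainTerm at herr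
  set σ : ℝ := ({D : Fq[X] | D.Monic ∧ D ∣ h}.ncard : ℝ)
  set N : ℝ := ((CoprimeCount.sqfree S d).card : ℝ)
  set eul := ∏ P ∈ S, (1 + ((Fintype.card Fq : ℝ) ^ P.natDegree)⁻¹)⁻¹
  set K := ∏ P ∈ S, (1 - (√(Fintype.card Fq : ℝ) ^ P.natDegree)⁻¹)⁻¹
  have hrq : √(Fintype.card Fq : ℝ) ^ 2 = Fintype.card Fq := Real.sq_sqrt (by linarith)
  have hr0 : 0 < √(Fintype.card Fq : ℝ) := Real.sqrt_pos.2 (by linarith)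
  set r := √(Fintype.card Fq : ℝ)
  have hqd : (Fintype.card Fq : ℝ) ^ d = r ^ d * r ^ d := by rw [← hrq]; ring
  have hc : (2 / 3 : ℝ) ≤ 1 - (Fintype.card Fq : ℝ)⁻¹ := by
    have := inv_anti₀ (by norm_num) hq
    linarith
  set c := 1 - (Fintype.card Fq : ℝ)⁻¹
  rw [hqd] at *
  have hrd : 0 < r ^ d := by positivity
  have hA : 0 < c * (r ^ d * r ^ d) := by positivity
  have key : (c * (r ^ d * r ^ d))⁻¹ * N - eul =
      (c * (r ^ d * r ^ d))⁻¹ * (N - c * (r ^ d * r ^ d) * eul) := by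
    field_simp
  rw [key, abs_mul, abs_of_pos (inv_pos.2 hA), inv_mul_le_iff₀ hA]
  calc _ ≤ K * r ^ d := herr
    _ ≤ 8 * σ * r ^ d := by
        gcongr
        linarith
    _ ≤ 12 * c * σ * r ^ d := by
        have : 0 ≤ σ := le_trans (by positivity) hσ
        gcongr
        linarith
    _ = _ := by field_simp
end

section
/- For every prime power q and every positive integer s, one has H(s) = ∑_{r=1}^{s} (s!/(2^r r!)) · ∑_{λ_1+⋯+λ_r=s, λ_i ≥ 1} ∑_{P_1, …, P_r distinct} ∏_{i=1}^{r} (u_{P_i}^{λ_i} + (−1)^{λ_i} v_{P_i}^{λ_i}) / (λ_i! · (1 + |P_i|^{−1})), where the middle sum is over all r-tuples of positive integers λ_1, …, λ_r with λ_1 + ⋯ + λ_r = s and the inner sum is over all r-tuples of pairwise distinct monic irreducible polynomials P_1, …, P_r ∈ 𝔽_q[X] (all series involved have nonnegative terms and converge). -/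
/-!
The summand of `H(s)` vanishes unless every `f i` is a prime power `Q i ^ m i`, so `H(s)` is a sum
over tuples of primes `Q` and tuples of positive exponents `m` (`tsum_HtermE`). Writing `Q = P ∘ φ`
with `P : Fin r → _` injective and `φ : Fin s → Fin r` surjective, which is possible in exactly
`r!` ways for `r` the number of distinct values of `Q`, turns the sum over `Q` into `1/r!` times a
sum over `P` and `φ` (`tsum_factor`).

For fixed `P` and `φ`, the product of the `f i` is a square if and only if the total exponent of
each `P j` is even, so the sum over exponents factors over `j` (`tsum_HtermE_comp`). The factor of
`P j`, with `n` the size of the fibre of `j` and `x = |P j|⁻¹`, is the sum of `∏ x ^ mᵢ / mᵢ` over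
the `n`-tuples of positive integers of even sum, which is `(u ^ n + (-v) ^ n) / 2`
(`paritySum_eq`). Finally the surjections `φ` with fibre sizes `lam` number `s! / ∏ (lam j)!`
(`card_fibers`, `sum_surj`).

All rearrangements take place in `ℝ≥0∞`. The passage to `ℝ` uses that the factor of `P` is
`O(|P|⁻²)` for every `n ≥ 1` (`weight_le`) and that `∑ |P|⁻²` converges
(`tsum_normInv_sq_ne_top`).
-/

open Polynomial

open Classical in
/-- The function-field von Mangoldt function: `Λ(f) = deg P` if `f = P^k` is a positive
power of a monic irreducible polynomial `P`, and `Λ(f) = 0` otherwise. -/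
noncomputable def vonMangoldt {Fq : Type} [Field Fq] (f : Polynomial Fq) : ℝ :=
  if h : ∃ P : Polynomial Fq, ∃ k : ℕ, P.Monic ∧ Irreducible P ∧ 1 ≤ k ∧ f = P ^ k
  then (h.choose.natDegree : ℝ)
  else 0

/-- `H(s)`: the sum of `(∏ i, Λ(f i) q^(-deg f i) / deg (f i)) · ∏_{P ∣ f 1 ⋯ f s} (1+|P|⁻¹)⁻¹`
over all `s`-tuples of monic polynomials of positive degree in `Fq[X]` whose product is a
square, where the inner product runs over monic irreducible polynomials dividing the
product and `|P| = q^(deg P)`. -/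
noncomputable def Hfun (Fq : Type) [Field Fq] [Fintype Fq] (s : ℕ) : ℝ :=
  ∑' f : {f : Fin s → Polynomial Fq //
      (∀ i, (f i).Monic ∧ 0 < (f i).natDegree) ∧ IsSquare (∏ i, f i)},
    (∏ i, vonMangoldt (f.1 i) * ((Fintype.card Fq : ℝ) ^ (f.1 i).natDegree)⁻¹ /
        ((f.1 i).natDegree : ℝ)) *
      ∏ᶠ P ∈ {P : Polynomial Fq | P.Monic ∧ Irreducible P ∧ P ∣ ∏ i, f.1 i},
        (1 + ((Fintype.card Fq : ℝ) ^ P.natDegree)⁻¹)⁻¹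

/-- `u_P = -log(1 - |P|⁻¹)` where `|P| = q^(deg P)`. -/
noncomputable def uP {Fq : Type} [Field Fq] [Fintype Fq] (P : Polynomial Fq) : ℝ :=
  -Real.log (1 - ((Fintype.card Fq : ℝ) ^ P.natDegree)⁻¹)

/-- `v_P = log(1 + |P|⁻¹)` where `|P| = q^(deg P)`. -/
noncomputable def vP {Fq : Type} [Field Fq] [Fintype Fq] (P : Polynomial Fq) : ℝ :=
  Real.log (1 + ((Fintype.card Fq : ℝ) ^ P.natDegree)⁻¹)

open scoped ENNReal

/-! ### Logarithmic series restricted by parity -/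

/-- A product of finitely many series of extended nonnegative reals is the series over the
dependent product of the index types. -/
theorem ennreal_tsum_pi_fin : ∀ (r : ℕ) (κ : Fin r → Type) (F : ∀ j, κ j → ℝ≥0∞),
    ∑' k : ∀ j, κ j, ∏ j, F j (k j) = ∏ j, ∑' x, F j x := by
  intro r
  induction r with
  | zero => intro κ F; simp
  | succ r ih =>
    intro κ F
    rw [← (Fin.consEquiv κ).tsum_eq, ENNReal.tsum_prod', Fin.prod_univ_succ, ← ih]
    simp_rw [Fin.prod_univ_succ]
    simp only [Fin.consEquiv, Equiv.coe_fn_mk, Fin.cons_zero, Fin.cons_succ, ENNReal.tsum_mul_left,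
      ENNReal.tsum_mul_right]

/-- The term `x ^ m / m` of the series of `-log (1 - x)`, with `m = k + 1`. -/
noncomputable def logTerm (x : ℝ) (k : ℕ) : ℝ≥0∞ := ENNReal.ofReal (x ^ (k + 1) / (k + 1))

/-- The sum of `∏ x ^ mᵢ / mᵢ` over the tuples `(m₁, …, mₙ)` of positive integers (`mᵢ = kᵢ + 1`)
whose sum has the same parity as `ε`. -/
noncomputable def paritySum (x : ℝ) (n ε : ℕ) : ℝ≥0∞ :=
  ∑' k : Fin n → ℕ,
    if (ε + ∑ i, (k i + 1)) % 2 = 0 then ∏ i, logTerm x (k i) else 0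

theorem paritySum_congr (x : ℝ) (n : ℕ) {a b : ℕ} (h : a % 2 = b % 2) :
    paritySum x n a = paritySum x n b := by
  unfold paritySum
  refine tsum_congr fun k => ?_
  rw [Nat.add_mod, h, ← Nat.add_mod]

/-- The one-variable case: the parity condition is detected by averaging the logarithmic series at
`x` and at `-x`. -/
theorem logSeries {x : ℝ} (hx0 : 0 < x) (hx1 : x < 1) (ε : ℕ) :
    ∑' k : ℕ, (if (ε + (k + 1)) % 2 = 0 then logTerm x k else 0) =
      ENNReal.ofReal ((-Real.log (1 - x) - (-1) ^ ε * Real.log (1 + x)) / 2) := by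
  have h1 := Real.hasSum_pow_div_log_of_abs_lt_one (x := x)
    (by rw [abs_lt]; constructor <;> linarith)
  have h2 := Real.hasSum_pow_div_log_of_abs_lt_one (x := -x)
    (by rw [abs_lt]; constructor <;> linarith)
  have h3 := (h1.add (h2.mul_left ((-1) ^ ε))).div_const 2
  rw [sub_neg_eq_add] at h3
  have key : ∀ k : ℕ, (x ^ (k + 1) / (k + 1) + (-1) ^ ε * ((-x) ^ (k + 1) / (k + 1))) / 2 =
      if (ε + (k + 1)) % 2 = 0 then x ^ (k + 1) / ((k : ℝ) + 1) else 0 := by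
    intro k
    rw [neg_pow x, mul_div_assoc, ← mul_assoc, ← pow_add]
    split_ifs with h
    · rw [(Nat.even_iff.2 h).neg_one_pow]; ring
    · rw [(Nat.odd_iff.2 (by omega : (ε + (k + 1)) % 2 = 1)).neg_one_pow]; ring
  simp_rw [key] at h3
  rw [sub_eq_add_neg, ← mul_neg, ← h3.tsum_eq, ENNReal.ofReal_tsum_of_nonneg _ h3.summable]
  · refine tsum_congr fun k => ?_
    unfold logTerm
    split_ifs <;> simp
  · intro k; split_ifs <;> positivity

theorem log_bounds {x : ℝ} (hx0 : 0 < x) (hx1 : x < 1) :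
    0 ≤ Real.log (1 + x) ∧ Real.log (1 + x) ≤ -Real.log (1 - x) := by
  refine ⟨Real.log_nonneg (by linarith), ?_⟩
  rw [← Real.log_inv]
  refine Real.log_le_log (by linarith) ?_
  rw [← one_div, le_div_iff₀ (by linarith)]
  nlinarith

/-- Closed form of the parity-restricted sum, by induction on `n`: splitting off the first exponent
expresses the sum through the two parity classes of the remaining exponents. -/
theorem paritySum_eq {x : ℝ} (hx0 : 0 < x) (hx1 : x < 1) (n : ℕ) : ∀ ε : ℕ,
    paritySum x n ε = ENNReal.ofReal (((-Real.log (1 - x)) ^ n +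
      (-1) ^ ε * (-Real.log (1 + x)) ^ n) / 2) := by
  obtain ⟨hv, huv⟩ := log_bounds hx0 hx1
  set u := -Real.log (1 - x)
  set v := Real.log (1 + x)
  have hu : 0 ≤ u := hv.trans huv
  have nonneg : ∀ (n ε : ℕ), 0 ≤ (u ^ n + (-1) ^ ε * (-v) ^ n) / 2 := by
    intro n ε
    have : |(-1) ^ ε * (-v) ^ n| ≤ u ^ n := by
      rw [abs_mul, abs_pow, abs_pow, abs_neg, abs_neg, abs_one, one_pow, one_mul, abs_of_nonneg hv]
      gcongr
    have := (abs_le.1 this).1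
    linarith
  induction n with
  | zero =>
    intro ε
    rcases Nat.even_or_odd ε with h | h
    · simp [paritySum, h.neg_one_pow, Nat.even_iff.1 h]
    · simp [paritySum, h.neg_one_pow, Nat.odd_iff.1 h]
  | succ n ih =>
    intro ε
    have step : paritySum x (n + 1) ε =
        (∑' k : ℕ, (if (ε + (k + 1)) % 2 = 0 then logTerm x k else 0)) * paritySum x n 0 +
        (∑' k : ℕ, (if ((ε + 1) + (k + 1)) % 2 = 0 then logTerm x k else 0)) * paritySum x n 1 := by
      rw [paritySum, ← (Fin.consEquiv (fun _ => ℕ)).tsum_eq, ENNReal.tsum_prod',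
        ← ENNReal.tsum_mul_right, ← ENNReal.tsum_mul_right, ← ENNReal.tsum_add]
      refine tsum_congr fun k => ?_
      simp only [Fin.consEquiv, Equiv.coe_fn_mk, Fin.sum_univ_succ, Fin.prod_univ_succ,
        Fin.cons_zero, Fin.cons_succ]
      have h : paritySum x n (ε + (k + 1)) * logTerm x k =
        ∑' a : Fin n → ℕ, (if (ε + (k + 1 + ∑ i, (a i + 1))) % 2 = 0 then
          logTerm x k * ∏ i, logTerm x (a i) else 0) := by
        rw [paritySum, ← ENNReal.tsum_mul_right]
        refine tsum_congr fun a => ?_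
        rw [ite_mul, zero_mul, mul_comm, add_assoc ε (k + 1)]
      rw [← h]
      rcases Nat.mod_two_eq_zero_or_one (ε + (k + 1)) with h0 | h0
      · rw [paritySum_congr x n (b := 0) h0, if_pos h0, if_neg (by omega)]; ring
      · rw [paritySum_congr x n (b := 1) h0, if_neg (by omega), if_pos (by omega)]; ring
    have n1 := nonneg 1 ε
    have n2 := nonneg 1 (ε + 1)
    have e1 : (u ^ 1 + (-1) ^ ε * (-v) ^ 1) / 2 = (u - (-1) ^ ε * v) / 2 := by ring
    have e2 : (u ^ 1 + (-1) ^ (ε + 1) * (-v) ^ 1) / 2 = (u - (-1) ^ (ε + 1) * v) / 2 := by ring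
    rw [e1] at n1
    rw [e2] at n2
    rw [step, ih, ih, logSeries hx0 hx1, logSeries hx0 hx1, ← ENNReal.ofReal_mul n1,
      ← ENNReal.ofReal_mul n2, ← ENNReal.ofReal_add (mul_nonneg n1 (nonneg _ _))
        (mul_nonneg n2 (nonneg _ _))]
    congr 1
    simp only [pow_succ, pow_zero]
    ring

/-! ### Factoring maps and counting fibres -/

/-- The number of maps `Fin s → Fin r` with prescribed fibre sizes is a multinomial coefficient,
read off from the coefficients of `(∑ Xⱼ) ^ s`. -/
theorem card_fibers {s r : ℕ} (lam : Fin r → ℕ) (h : ∑ i, lam i = s) :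
    ((Finset.univ.filter fun φ : Fin s → Fin r =>
      (fun j => (Finset.univ.filter fun i => φ i = j).card) = lam).card) * ∏ j, (lam j).factorial
      = s.factorial := by
  classical
  have h1 := MvPolynomial.coeff_sum_X_pow_of_fintype (R := ℕ) (Finsupp.equivFunOnFinite.symm lam) s
  have h2 : (Finsupp.equivFunOnFinite.symm lam).sum (fun _ m => m) = s := by
    rw [Finsupp.sum_fintype _ _ (by simp)]; simpa using h
  rw [if_pos h2, Finsupp.multinomial_eq_of_support_subset (Finset.subset_univ _)] at h1
  have h3 : (∑ i, MvPolynomial.X i : MvPolynomial (Fin r) ℕ) ^ s =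
      ∑ φ : Fin s → Fin r, ∏ i, MvPolynomial.X (φ i) := by
    rw [← Fin.prod_const, Finset.prod_univ_sum]; simp
  have h4 : ∀ φ : Fin s → Fin r, (∏ i, MvPolynomial.X (φ i) : MvPolynomial (Fin r) ℕ) =
      MvPolynomial.monomial (Finsupp.equivFunOnFinite.symm
        (fun j => (Finset.univ.filter fun i => φ i = j).card)) 1 := by
    intro φ
    rw [← Finset.prod_fiberwise_of_maps_to (g := φ) (t := Finset.univ) (by simp),
      MvPolynomial.monomial_eq,
      Finsupp.prod_fintype _ _ (by simp)]
    simp only [map_one, one_mul, Finsupp.equivFunOnFinite_symm_apply_apply]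
    refine Finset.prod_congr rfl fun j _ => ?_
    rw [Finset.prod_congr rfl (g := fun _ => MvPolynomial.X j)]
    · simp
    · intro i hi; simp at hi; rw [hi]
  rw [h3, MvPolynomial.coeff_sum] at h1
  simp_rw [h4, MvPolynomial.coeff_monomial] at h1
  have := Nat.multinomial_spec Finset.univ lam
  rw [h] at this
  rw [← this, mul_comm, Finset.card_filter]
  congr 1
  simpa using h1

/-- A sum over all exponent tuples whose summand is a product over the fibres of `φ` factors into
one parity-restricted sum for each fibre. -/
theorem tsum_fiberwise {s r : ℕ} (φ : Fin s → Fin r) (x : Fin r → ℝ) (c : Fin r → ℝ≥0∞) :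
    ∑' k : Fin s → ℕ, ∏ j, (c j *
      if (∑ i with φ i = j, (k i + 1)) % 2 = 0 then
        ∏ i with φ i = j, logTerm (x j) (k i) else 0) =
    ∏ j, (c j * paritySum (x j) (Finset.univ.filter fun i => φ i = j).card 0) := by
  classical
  let e : ∀ j : Fin r, {i // φ i = j} ≃ Fin (Finset.univ.filter fun i => φ i = j).card := fun j =>
    Fintype.equivFinOfCardEq (Fintype.card_subtype _)
  let E : (Fin s → ℕ) ≃ (∀ j : Fin r, Fin (Finset.univ.filter fun i => φ i = j).card → ℕ) :=
    Equiv.piCongrFiberwise (f := φ) (γ₁ := fun _ => ℕ)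
      (fun j => Equiv.arrowCongr (e j) (Equiv.refl ℕ))
  simp_rw [paritySum, ← ENNReal.tsum_mul_left]
  rw [← ennreal_tsum_pi_fin, ← E.tsum_eq]
  refine tsum_congr fun k => Finset.prod_congr rfl fun j _ => ?_
  have hE : ∀ i, E k j i = k ((e j).symm i).1 := fun i => rfl
  have h1 : ∑ i, (E k j i + 1) = ∑ i with φ i = j, (k i + 1) := by
    simp_rw [hE]
    rw [(e j).symm.sum_comp (fun i => k i.1 + 1)]
    exact (Finset.sum_subtype _ (by simp) (fun i => k i + 1)).symm
  have h2 : ∏ i, logTerm (x j) (E k j i) = ∏ i with φ i = j, logTerm (x j) (k i) := by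
    simp_rw [hE]
    rw [(e j).symm.prod_comp (fun i => logTerm (x j) (k i.1))]
    exact (Finset.prod_subtype _ (by simp) (fun i => logTerm (x j) (k i))).symm
  rw [h1, h2, zero_add]

/-- The factorizations `Q = P ∘ φ` of a fixed map through `Fin r`, with `P` injective and `φ`
surjective, correspond to the bijections from `Fin r` to the range of `Q`. -/
noncomputable def factorizationEquiv {s r : ℕ} {α : Type} (Q : Fin s → α) :
    {x : {P : Fin r → α // Function.Injective P} ×
        {φ : Fin s → Fin r // Function.Surjective φ} // x.1.1 ∘ x.2.1 = Q} ≃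
      (Fin r ≃ Set.range Q) where
  toFun x := Equiv.ofBijective
    (fun j => ⟨x.1.1.1 j, by
      obtain ⟨i, rfl⟩ := x.1.2.2 j
      exact ⟨i, (congrFun x.2 i).symm⟩⟩)
    ⟨fun a b h => x.1.1.2 (congrArg Subtype.val h), by
      rintro ⟨_, i, rfl⟩
      exact ⟨x.1.2.1 i, Subtype.ext (congrFun x.2 i)⟩⟩
  invFun e := ⟨⟨⟨fun j => (e j).1, fun a b h => e.injective (Subtype.ext h)⟩,
    ⟨fun i => e.symm ⟨Q i, i, rfl⟩, fun j => by
      obtain ⟨i, hi⟩ := (e j).2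
      exact ⟨i, by rw [Equiv.symm_apply_eq]; exact Subtype.ext hi⟩⟩⟩, by
    funext i; simp⟩
  left_inv x := by
    obtain ⟨⟨⟨P, hP⟩, ⟨φ, hφ⟩⟩, rfl⟩ := x
    refine Subtype.ext (Prod.ext rfl (Subtype.ext (funext fun i => ?_)))
    simp only [Equiv.symm_apply_eq]
    rfl
  right_inv e := by
    ext j; rfl

/-- Summation over all `Q` through factorizations `Q = P ∘ φ`: each `Q` with `r` distinct values
has exactly `r!` of them. -/
theorem tsum_factor {s : ℕ} (hs : 1 ≤ s) {α : Type} (G : (Fin s → α) → ℝ≥0∞) :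
    ∑' Q, G Q = ∑ r ∈ Finset.Icc 1 s, (r.factorial : ℝ≥0∞)⁻¹ *
      ∑' P : {P : Fin r → α // Function.Injective P},
        ∑' φ : {φ : Fin s → Fin r // Function.Surjective φ}, G (P.1 ∘ φ.1) := by
  classical
  have h1 : ∀ r : ℕ, (r.factorial : ℝ≥0∞)⁻¹ * ∑' P : {P : Fin r → α // Function.Injective P},
        ∑' φ : {φ : Fin s → Fin r // Function.Surjective φ}, G (P.1 ∘ φ.1) =
      ∑' Q : Fin s → α, if (Finset.univ.image Q).card = r then G Q else 0 := by
    intro r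
    rw [← ENNReal.tsum_prod (f := fun (P : {P : Fin r → α // Function.Injective P})
      (φ : {φ : Fin s → Fin r // Function.Surjective φ}) => G (P.1 ∘ φ.1)),
      ← (Equiv.sigmaFiberEquiv (fun x : {P : Fin r → α // Function.Injective P} ×
        {φ : Fin s → Fin r // Function.Surjective φ} => x.1.1 ∘ x.2.1)).tsum_eq,
      ENNReal.tsum_sigma', ← ENNReal.tsum_mul_left]
    refine tsum_congr fun Q => ?_
    rw [← (factorizationEquiv Q).symm.tsum_eq, tsum_congr (g := fun _ => G Q)]
    swap
    · exact fun e => congrArg G ((factorizationEquiv Q).symm e).2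
    have hc : Fintype.card (Set.range Q) = (Finset.univ.image Q).card := by
      rw [← Set.toFinset_card, Set.toFinset_range]
    rw [tsum_fintype, Finset.sum_const, Finset.card_univ]
    split_ifs with h
    · have e : Fin r ≃ Set.range Q := (Fintype.equivFinOfCardEq (hc.trans h)).symm
      rw [Fintype.card_equiv e, Fintype.card_fin, nsmul_eq_mul, ← mul_assoc,
        ENNReal.inv_mul_cancel (by exact_mod_cast r.factorial_ne_zero) (ENNReal.natCast_ne_top _),
        one_mul]
    · have : IsEmpty (Fin r ≃ Set.range Q) :=
        ⟨fun e => h (by rw [← hc, ← Fintype.card_congr e, Fintype.card_fin])⟩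
      simp
  simp_rw [h1]
  rw [← Summable.tsum_finsetSum (fun _ _ => ENNReal.summable)]
  refine tsum_congr fun Q => ?_
  rw [Finset.sum_ite_eq, if_pos]
  rw [Finset.mem_Icc]
  constructor
  · exact Finset.card_pos.2 ⟨Q ⟨0, hs⟩, by simp⟩
  · simpa using Finset.card_image_le (s := Finset.univ) (f := Q)

/-- Grouping the surjections by their fibre sizes `lam`; there are `s! / ∏ (lam j)!` for
each `lam`. -/
theorem sum_surj {s r : ℕ} (g : Fin r → ℕ → ℝ≥0∞) :
    ∑' φ : {φ : Fin s → Fin r // Function.Surjective φ},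
      ∏ j, g j (Finset.univ.filter fun i => φ.1 i = j).card =
    ∑' lam : {lam : Fin r → ℕ // (∀ i, 0 < lam i) ∧ ∑ i, lam i = s},
      (s.factorial : ℝ≥0∞) * ∏ j, (g j (lam.1 j) * ((lam.1 j).factorial : ℝ≥0∞)⁻¹) := by
  classical
  let T : {φ : Fin s → Fin r // Function.Surjective φ} →
      {lam : Fin r → ℕ // (∀ i, 0 < lam i) ∧ ∑ i, lam i = s} := fun φ =>
    ⟨fun j => (Finset.univ.filter fun i => φ.1 i = j).card, fun j => by
      obtain ⟨i, hi⟩ := φ.2 j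
      exact Finset.card_pos.2 ⟨i, by simpa using hi⟩, by
      rw [← Finset.card_eq_sum_card_fiberwise (f := φ.1) (t := Finset.univ) (by simp)]
      simp⟩
  rw [← (Equiv.sigmaFiberEquiv T).tsum_eq, ENNReal.tsum_sigma']
  refine tsum_congr fun lam => ?_
  rw [tsum_congr (g := fun _ => ∏ j, g j (lam.1 j))]
  · rw [tsum_fintype, Finset.sum_const, Finset.card_univ, nsmul_eq_mul, Finset.prod_mul_distrib]
    have hc := card_fibers lam.1 lam.2.2
    have hcard : Fintype.card {φ // T φ = lam} = (Finset.univ.filter fun φ : Fin s → Fin r =>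
        (fun j => (Finset.univ.filter fun i => φ i = j).card) = lam.1).card := by
      rw [← Fintype.card_subtype]
      refine Fintype.card_congr ⟨fun x => ⟨x.1.1, congrArg Subtype.val x.2⟩,
        fun x => ⟨⟨x.1, fun j => ?_⟩, Subtype.ext x.2⟩, fun _ => rfl, fun _ => rfl⟩
      have := lam.2.1 j
      rw [← x.2, Finset.card_pos] at this
      obtain ⟨i, hi⟩ := this
      exact ⟨i, by simpa using hi⟩
    rw [hcard, ← hc]
    push_cast
    rw [← ENNReal.prod_inv_distrib (by simp [Set.Pairwise])]
    have h0 : (∏ j, ((lam.1 j).factorial : ℝ≥0∞)) ≠ 0 := by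
      rw [Finset.prod_ne_zero_iff]
      intro j _
      exact_mod_cast (lam.1 j).factorial_ne_zero
    have ht : (∏ j, ((lam.1 j).factorial : ℝ≥0∞)) ≠ ⊤ :=
      ENNReal.prod_ne_top fun j _ => ENNReal.natCast_ne_top _
    rw [mul_assoc, mul_left_comm (∏ j, ((lam.1 j).factorial : ℝ≥0∞)),
      ENNReal.mul_inv_cancel h0 ht, mul_one]
  · rintro ⟨φ, rfl⟩
    rfl

/-! ### Prime powers and the summand of `H(s)` -/

/-- The type of monic irreducible polynomials over `Fq`. -/
abbrev MonicIrr (Fq : Type) [Field Fq] : Type := {P : Polynomial Fq // P.Monic ∧ Irreducible P}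

section Arithmetic

variable {Fq : Type} [Field Fq]

theorem monicIrr_eq_of_dvd {P R : MonicIrr Fq} (h : P.1 ∣ R.1) : P = R :=
  Subtype.ext (eq_of_monic_of_associated P.2.1 R.2.1 (P.2.2.associated_of_dvd R.2.2 h))

theorem monicIrr_pow_inj {P R : MonicIrr Fq} {a b : ℕ} (h : P.1 ^ (a + 1) = R.1 ^ (b + 1)) :
    P = R ∧ a = b := by
  have h1 : P = R := monicIrr_eq_of_dvd (P.2.2.prime.dvd_of_dvd_pow
    (h ▸ dvd_pow_self P.1 (Nat.succ_ne_zero a)))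
  refine ⟨h1, ?_⟩
  subst h1
  have h2 := congrArg natDegree h
  rw [natDegree_pow, natDegree_pow] at h2
  have := Nat.eq_of_mul_eq_mul_right P.2.2.natDegree_pos h2
  omega

theorem vonMangoldt_pow (P : MonicIrr Fq) (k : ℕ) :
    vonMangoldt (P.1 ^ (k + 1)) = (P.1.natDegree : ℝ) := by
  have h : ∃ R : Polynomial Fq, ∃ m : ℕ, R.Monic ∧ Irreducible R ∧ 1 ≤ m ∧ P.1 ^ (k + 1) = R ^ m :=
    ⟨P.1, k + 1, P.2.1, P.2.2, by omega, rfl⟩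
  rw [vonMangoldt, dif_pos h]
  have hs := h.choose_spec
  generalize h.choose = R at hs ⊢
  obtain ⟨m, h1, h2, h3, h4⟩ := hs
  obtain ⟨m, rfl⟩ : ∃ l, m = l + 1 := ⟨m - 1, by omega⟩
  have := (monicIrr_pow_inj (R := ⟨R, h1, h2⟩) h4).1
  rw [this]

theorem vonMangoldt_nonneg (f : Polynomial Fq) : 0 ≤ vonMangoldt f := by
  unfold vonMangoldt
  split_ifs <;> positivity

theorem prod_pow_comp {s r : ℕ} (P : Fin r → MonicIrr Fq) (φ : Fin s → Fin r) (k : Fin s → ℕ) :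
    ∏ i, (P (φ i)).1 ^ (k i + 1) = ∏ j, (P j).1 ^ (∑ i with φ i = j, (k i + 1)) := by
  rw [← Finset.prod_fiberwise_of_maps_to (g := φ) (t := Finset.univ) (by simp)]
  refine Finset.prod_congr rfl fun j _ => ?_
  rw [← Finset.prod_pow_eq_pow_sum]
  refine Finset.prod_congr rfl fun i hi => ?_
  rw [(Finset.mem_filter.1 hi).2]

theorem isSquare_prod_iff {r : ℕ} {P : Fin r → MonicIrr Fq} (hP : Function.Injective P)
    (n : Fin r → ℕ) :
    IsSquare (∏ j, (P j).1 ^ n j) ↔ ∀ j, n j % 2 = 0 := by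
  classical
  constructor
  · rintro ⟨g, hg⟩ j
    have hp := (P j).2.2.prime
    have h0 : g ≠ 0 := by
      rintro rfl
      rw [mul_zero, Finset.prod_eq_zero_iff] at hg
      obtain ⟨i, -, hi⟩ := hg
      exact (P i).2.2.ne_zero (pow_eq_zero_iff (n := n i) (by rintro h; simp [h] at hi) |>.1 hi)
    have h1 : emultiplicity (P j).1 (∏ j, (P j).1 ^ n j) = n j := by
      rw [Finset.emultiplicity_prod hp, Finset.sum_eq_single j]
      · exact emultiplicity_pow_self_of_prime hp _
      · intro i _ hij
        rw [emultiplicity_eq_zero]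
        intro hd
        exact hij (hP (monicIrr_eq_of_dvd (hp.dvd_of_dvd_pow hd))).symm
      · simp
    have hf : FiniteMultiplicity (P j).1 g := FiniteMultiplicity.of_prime_left hp h0
    rw [hg, emultiplicity_mul hp, hf.emultiplicity_eq_multiplicity] at h1
    have : multiplicity (P j).1 g + multiplicity (P j).1 g = n j := by exact_mod_cast h1
    omega
  · intro h
    refine ⟨∏ j, (P j).1 ^ (n j / 2), ?_⟩
    rw [← Finset.prod_mul_distrib]
    refine Finset.prod_congr rfl fun j _ => ?_
    rw [← pow_add]
    congr 1
    have := h j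
    omega

theorem divisors_eq_range {s r : ℕ} (P : Fin r → MonicIrr Fq) {φ : Fin s → Fin r}
    (hφ : Function.Surjective φ) (k : Fin s → ℕ) :
    {R : Polynomial Fq | R.Monic ∧ Irreducible R ∧ R ∣ ∏ i, (P (φ i)).1 ^ (k i + 1)} =
      Set.range fun j => (P j).1 := by
  ext R
  constructor
  · rintro ⟨h1, h2, h3⟩
    obtain ⟨i, -, hi⟩ := (h2.prime.dvd_finsetProd_iff _).1 h3
    exact ⟨φ i, congrArg Subtype.val
      (monicIrr_eq_of_dvd (P := ⟨R, h1, h2⟩) (h2.prime.dvd_of_dvd_pow hi)).symm⟩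
  · rintro ⟨j, rfl⟩
    obtain ⟨i, rfl⟩ := hφ j
    exact ⟨(P _).2.1, (P _).2.2, (dvd_pow_self _ (Nat.succ_ne_zero _)).trans
      (Finset.dvd_prod_of_mem (fun i => (P (φ i)).1 ^ (k i + 1)) (Finset.mem_univ i))⟩

variable [Fintype Fq]

/-- The inverse norm `|P|⁻¹ = q ^ (-deg P)`. -/
noncomputable def normInv (P : Polynomial Fq) : ℝ := ((Fintype.card Fq : ℝ) ^ P.natDegree)⁻¹

theorem normInv_pos (P : Polynomial Fq) : 0 < normInv P := by
  have : 0 < Fintype.card Fq := Fintype.card_pos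
  unfold normInv
  positivity

theorem normInv_le_half (P : MonicIrr Fq) : normInv P.1 ≤ 1 / 2 := by
  have h1 : (2 : ℝ) ≤ Fintype.card Fq := by exact_mod_cast Fintype.one_lt_card (α := Fq)
  have h2 : (2 : ℝ) ≤ (Fintype.card Fq : ℝ) ^ P.1.natDegree :=
    h1.trans (le_self_pow₀ (by linarith) P.2.2.natDegree_pos.ne')
  rw [normInv, one_div]
  exact inv_anti₀ (by norm_num) h2

theorem normInv_lt_one (P : MonicIrr Fq) : normInv P.1 < 1 :=
  (normInv_le_half P).trans_lt (by norm_num)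

/-- The summand of `Hfun` at a tuple `f`, without the conditions on `f`. -/
noncomputable def Hterm {s : ℕ} (f : Fin s → Polynomial Fq) : ℝ :=
  (∏ i, vonMangoldt (f i) * ((Fintype.card Fq : ℝ) ^ (f i).natDegree)⁻¹ /
        ((f i).natDegree : ℝ)) *
      ∏ᶠ P ∈ {P : Polynomial Fq | P.Monic ∧ Irreducible P ∧ P ∣ ∏ i, f i},
        (1 + ((Fintype.card Fq : ℝ) ^ P.natDegree)⁻¹)⁻¹

theorem Hterm_nonneg {s : ℕ} (f : Fin s → Polynomial Fq) : 0 ≤ Hterm f := by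
  refine mul_nonneg (Finset.prod_nonneg fun i _ => ?_)
    (finprod_nonneg fun P => finprod_nonneg fun _ => ?_)
  · have := vonMangoldt_nonneg (f i)
    positivity
  · positivity

/-- At `P ^ (k + 1)` the factor of `Hterm` is `|P|⁻ᵐ / m` with `m = k + 1`. -/
theorem factor_eq (P : MonicIrr Fq) (k : ℕ) :
    vonMangoldt (P.1 ^ (k + 1)) * ((Fintype.card Fq : ℝ) ^ (P.1 ^ (k + 1)).natDegree)⁻¹ /
        ((P.1 ^ (k + 1)).natDegree : ℝ) = normInv P.1 ^ (k + 1) / (k + 1) := by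
  have h : (P.1.natDegree : ℝ) ≠ 0 := by exact_mod_cast P.2.2.natDegree_pos.ne'
  rw [vonMangoldt_pow, natDegree_pow, normInv, inv_pow, ← pow_mul, mul_comm P.1.natDegree]
  push_cast
  field_simp

theorem Hterm_eq {s r : ℕ} {P : Fin r → MonicIrr Fq} (hP : Function.Injective P)
    {φ : Fin s → Fin r} (hφ : Function.Surjective φ) (k : Fin s → ℕ) :
    ENNReal.ofReal (Hterm fun i => (P (φ i)).1 ^ (k i + 1)) =
      ∏ j, (ENNReal.ofReal (1 + normInv (P j).1)⁻¹ *
        ∏ i with φ i = j, logTerm (normInv (P j).1) (k i)) := by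
  have hx := fun j => (normInv_pos (P j).1).le
  have h1 : ∏ᶠ R ∈ {R : Polynomial Fq | R.Monic ∧ Irreducible R ∧
        R ∣ ∏ i, (P (φ i)).1 ^ (k i + 1)}, (1 + ((Fintype.card Fq : ℝ) ^ R.natDegree)⁻¹)⁻¹ =
      ∏ j, (1 + normInv (P j).1)⁻¹ := by
    rw [divisors_eq_range P hφ, finprod_mem_range (fun a b h => hP (Subtype.ext h)),
      finprod_eq_prod_of_fintype]
    rfl
  rw [Hterm, h1]
  simp_rw [factor_eq]
  rw [mul_comm, ENNReal.ofReal_mul (Finset.prod_nonneg fun j _ => by have := hx j; positivity),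
    ENNReal.ofReal_prod_of_nonneg (fun j _ => by have := hx j; positivity),
    ENNReal.ofReal_prod_of_nonneg (fun i _ => by have := hx (φ i); positivity),
    Finset.prod_mul_distrib]
  congr 1
  rw [← Finset.prod_fiberwise_of_maps_to (g := φ) (t := Finset.univ) (by simp)]
  refine Finset.prod_congr rfl fun j _ => Finset.prod_congr rfl fun i hi => ?_
  rw [(Finset.mem_filter.1 hi).2]
  rfl

open Classical in
/-- The summand of `Hfun` extended by zero to all tuples, with values in `ℝ≥0∞`. -/
noncomputable def HtermE {s : ℕ} (f : Fin s → Polynomial Fq) : ℝ≥0∞ :=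
  if (∀ i, (f i).Monic ∧ 0 < (f i).natDegree) ∧ IsSquare (∏ i, f i)
  then ENNReal.ofReal (Hterm f) else 0

theorem Hfun_eq_toReal (s : ℕ) :
    Hfun Fq s = (∑' f : Fin s → Polynomial Fq, HtermE f).toReal := by
  classical
  have h := tsum_subtype {f : Fin s → Polynomial Fq |
      (∀ i, (f i).Monic ∧ 0 < (f i).natDegree) ∧ IsSquare (∏ i, f i)}
      (fun f => ENNReal.ofReal (Hterm f))
  have h2 : ∑' f : Fin s → Polynomial Fq, HtermE f =
      ∑' f : {f : Fin s → Polynomial Fq //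
      (∀ i, (f i).Monic ∧ 0 < (f i).natDegree) ∧ IsSquare (∏ i, f i)},
      ENNReal.ofReal (Hterm f.1) := by
    refine Eq.trans (tsum_congr fun f => ?_) h.symm
    rw [Set.indicator_apply]
    rfl
  rw [h2, ENNReal.tsum_toReal_eq (fun _ => ENNReal.ofReal_ne_top)]
  refine tsum_congr fun f => ?_
  rw [ENNReal.toReal_ofReal (Hterm_nonneg _)]
  rfl

/-- Only tuples of prime powers contribute, since `vonMangoldt` vanishes elsewhere. -/
theorem tsum_HtermE (s : ℕ) :
    ∑' f : Fin s → Polynomial Fq, HtermE f =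
      ∑' Q : Fin s → MonicIrr Fq, ∑' k : Fin s → ℕ, HtermE fun i => (Q i).1 ^ (k i + 1) := by
  rw [← ENNReal.tsum_prod (f := fun (Q : Fin s → MonicIrr Fq) (k : Fin s → ℕ) =>
    HtermE fun i => (Q i).1 ^ (k i + 1))]
  symm
  let ι : (Fin s → MonicIrr Fq) × (Fin s → ℕ) → (Fin s → Polynomial Fq) :=
    fun p i => (p.1 i).1 ^ (p.2 i + 1)
  have hι : Function.Injective ι := by
    rintro ⟨Q, k⟩ ⟨R, l⟩ h
    have := fun i => monicIrr_pow_inj (congrFun h i)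
    exact Prod.ext (funext fun i => (this i).1) (funext fun i => (this i).2)
  refine hι.tsum_eq (f := HtermE) ?_
  intro f hf
  have hΛ : ∀ i, vonMangoldt (f i) ≠ 0 := by
    intro i h0
    apply hf
    rw [HtermE]
    split_ifs
    · have : Hterm f = 0 := by
        rw [Hterm, Finset.prod_eq_zero (Finset.mem_univ i) (by rw [h0]; simp), zero_mul]
      rw [this, ENNReal.ofReal_zero]
    · rfl
  have : ∀ i, ∃ p : MonicIrr Fq × ℕ, p.1.1 ^ (p.2 + 1) = f i := by
    intro i
    by_contra hcon
    refine hΛ i ?_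
    rw [vonMangoldt, dif_neg]
    rintro ⟨R, m, h1, h2, h3, h4⟩
    exact hcon ⟨(⟨R, h1, h2⟩, m - 1), by rw [h4]; congr 1; omega⟩
  choose p hp using this
  exact ⟨(fun i => (p i).1, fun i => (p i).2), funext hp⟩

/-- For fixed primes `P ∘ φ`, the sum over the exponents factors over the distinct primes `P j`,
because the square condition says that the total exponent of every `P j` is even. -/
theorem tsum_HtermE_comp {s r : ℕ} {P : Fin r → MonicIrr Fq} (hP : Function.Injective P)
    {φ : Fin s → Fin r} (hφ : Function.Surjective φ) :
    ∑' k : Fin s → ℕ, HtermE (fun i => ((P ∘ φ) i).1 ^ (k i + 1)) =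
      ∏ j, (ENNReal.ofReal (1 + normInv (P j).1)⁻¹ *
        paritySum (normInv (P j).1) (Finset.univ.filter fun i => φ i = j).card 0) := by
  rw [← tsum_fiberwise]
  refine tsum_congr fun k => ?_
  have h1 : ∀ i, ((P (φ i)).1 ^ (k i + 1)).Monic ∧ 0 < ((P (φ i)).1 ^ (k i + 1)).natDegree :=
    fun i => ⟨(P (φ i)).2.1.pow _, by
      rw [natDegree_pow]; exact Nat.mul_pos (Nat.succ_pos _) (P (φ i)).2.2.natDegree_pos⟩
  have h2 := isSquare_prod_iff hP (fun j => ∑ i with φ i = j, (k i + 1))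
  rw [← prod_pow_comp] at h2
  simp only [HtermE, Function.comp_apply]
  split_ifs with h
  · rw [Hterm_eq hP hφ]
    refine Finset.prod_congr rfl fun j _ => ?_
    rw [if_pos (h2.1 h.2 j)]
  · obtain ⟨j, hj⟩ := not_forall.1 (fun hall => h ⟨h1, h2.2 hall⟩)
    rw [Finset.prod_eq_zero (Finset.mem_univ j)]
    rw [if_neg hj, mul_zero]

end Arithmetic

/-! ### Convergence and the closed formula -/

section Convergence

variable {Fq : Type} [Field Fq] [Fintype Fq]

/-- The factor attached to a prime `P` occurring with multiplicity `n` in the closed formula. -/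
noncomputable def weight (P : Polynomial Fq) (n : ℕ) : ℝ :=
  (uP P ^ n + (-1 : ℝ) ^ n * vP P ^ n) /
    ((n.factorial : ℝ) * (1 + ((Fintype.card Fq : ℝ) ^ P.natDegree)⁻¹))

theorem signed_power_sum_nonneg (P : MonicIrr Fq) (n : ℕ) :
    0 ≤ uP P.1 ^ n + (-1 : ℝ) ^ n * vP P.1 ^ n := by
  obtain ⟨hv, huv⟩ := log_bounds (normInv_pos P.1) (normInv_lt_one P)
  change 0 ≤ vP P.1 at hv
  change vP P.1 ≤ uP P.1 at huv
  have h1 : vP P.1 ^ n ≤ uP P.1 ^ n := by gcongr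
  have h2 : 0 ≤ vP P.1 ^ n := by positivity
  rcases neg_one_pow_eq_or ℝ n with h | h <;> rw [h] <;> linarith

theorem weight_nonneg (P : MonicIrr Fq) (n : ℕ) : 0 ≤ weight P.1 n :=
  div_nonneg (signed_power_sum_nonneg P n) (by positivity)

theorem paritySum_normInv (P : MonicIrr Fq) (n : ℕ) :
    ENNReal.ofReal (1 + normInv P.1)⁻¹ * paritySum (normInv P.1) n 0 *
      (n.factorial : ℝ≥0∞)⁻¹ = ENNReal.ofReal (weight P.1 n / 2) := by
  have hx := normInv_pos P.1
  have hn : (0 : ℝ) < n.factorial := by exact_mod_cast n.factorial_pos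
  rw [paritySum_eq hx (normInv_lt_one P), ← ENNReal.ofReal_natCast,
    ← ENNReal.ofReal_inv_of_pos hn, ← ENNReal.ofReal_mul (by positivity),
    ← ENNReal.ofReal_mul' (by positivity)]
  congr 1
  change _ = (uP P.1 ^ n + (-1 : ℝ) ^ n * vP P.1 ^ n) / (n.factorial * (1 + normInv P.1)) / 2
  change (1 + normInv P.1)⁻¹ * ((uP P.1 ^ n + (-1) ^ 0 * (- vP P.1) ^ n) / 2) * _ = _
  rw [neg_pow (vP P.1)]
  field_simp

/-- The quadratic decay in `|P|⁻¹` responsible for convergence. For `n = 1` it comes from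
`u_P - v_P = -log (1 - |P|⁻²)`. -/
theorem weight_le (P : MonicIrr Fq) {n : ℕ} (hn : 0 < n) :
    weight P.1 n / 2 ≤ 2 ^ n * normInv P.1 ^ 2 := by
  have hx := normInv_pos P.1
  have hx2 := normInv_le_half P
  obtain ⟨hv, huv⟩ := log_bounds hx (normInv_lt_one P)
  -- `-log (1 - y) ≤ y / (1 - y) ≤ 2 y` for `0 ≤ y ≤ 1/2`
  have hlog : ∀ y : ℝ, 0 ≤ y → y ≤ 1 / 2 → -Real.log (1 - y) ≤ 2 * y := by
    intro y h0 h1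
    have h := Real.one_sub_inv_le_log_of_pos (show 0 < 1 - y by linarith)
    have h2 : (1 - y)⁻¹ ≤ 1 + 2 * y := by
      rw [← one_div, div_le_iff₀ (by linarith)]
      nlinarith
    linarith
  have key : (uP P.1 ^ n + (-1 : ℝ) ^ n * vP P.1 ^ n) / 2 ≤ 2 ^ n * normInv P.1 ^ 2 := by
    change 0 ≤ vP P.1 at hv
    change vP P.1 ≤ uP P.1 at huv
    rcases Nat.lt_or_ge 1 n with h | h
    · have hu : uP P.1 ≤ 2 * normInv P.1 := hlog _ hx.le hx2
      have h1 : vP P.1 ^ n ≤ uP P.1 ^ n := by gcongr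
      have h2 : uP P.1 ^ n ≤ (2 * normInv P.1) ^ n := by
        have := hv.trans huv
        gcongr
      have h3 : normInv P.1 ^ n ≤ normInv P.1 ^ 2 :=
        pow_le_pow_of_le_one hx.le (normInv_lt_one P).le h
      have h4 : 0 ≤ vP P.1 ^ n := by positivity
      rw [mul_pow] at h2
      have h5 : (2 : ℝ) ^ n * normInv P.1 ^ n ≤ 2 ^ n * normInv P.1 ^ 2 := by gcongr
      rcases neg_one_pow_eq_or ℝ n with h | h <;> rw [h] <;> linarith
    · obtain rfl : n = 1 := by omega
      have h1 : uP P.1 - vP P.1 = -Real.log (1 - normInv P.1 ^ 2) := by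
        have : (1 - normInv P.1 ^ 2) = (1 - normInv P.1) * (1 + normInv P.1) := by ring
        rw [this, Real.log_mul (by linarith) (by linarith)]
        change -Real.log (1 - normInv P.1) - Real.log (1 + normInv P.1) = _
        ring
      have h2 := hlog (normInv P.1 ^ 2) (by positivity) (by nlinarith)
      nlinarith [sq_nonneg (normInv P.1)]
  refine le_trans ?_ key
  rw [weight, div_right_comm]
  refine div_le_self (div_nonneg (signed_power_sum_nonneg P n) (by norm_num)) ?_
  have h1 : (1 : ℝ) ≤ n.factorial := by exact_mod_cast n.factorial_pos
  change 1 ≤ (n.factorial : ℝ) * (1 + normInv P.1)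
  nlinarith

/-- Convergence of `∑ |P|⁻²`, by comparison with the sum over all monic polynomials, which are
determined by their degree `n` and their `n` lower coefficients. -/
theorem tsum_normInv_sq_ne_top :
    ∑' P : MonicIrr Fq, ENNReal.ofReal (normInv P.1 ^ 2) ≠ ⊤ := by
  let ι : MonicIrr Fq → (Σ n : ℕ, (Fin n → Fq)) := fun P => ⟨P.1.natDegree, fun i => P.1.coeff i⟩
  have hι : Function.Injective ι := by
    intro P R h
    have hd : P.1.natDegree = R.1.natDegree := congrArg Sigma.fst h
    refine Subtype.ext (Polynomial.ext fun m => ?_)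
    have hc : ∀ m (a b : Σ n : ℕ, (Fin n → Fq)), a = b → ∀ (ha : m < a.1) (hb : m < b.1),
        a.2 ⟨m, ha⟩ = b.2 ⟨m, hb⟩ := by
      rintro m a b rfl _ _
      rfl
    rcases lt_trichotomy m P.1.natDegree with hm | hm | hm
    · exact hc m _ _ h hm (hd ▸ hm : m < R.1.natDegree)
    · have h1 : P.1.coeff m = 1 := by rw [hm]; exact P.2.1
      have h2 : R.1.coeff m = 1 := by rw [hm, hd]; exact R.2.1
      rw [h1, h2]
    · rw [coeff_eq_zero_of_natDegree_lt hm, coeff_eq_zero_of_natDegree_lt (hd ▸ hm)]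
  have hq : 1 < Fintype.card Fq := Fintype.one_lt_card
  have hq0 : (0 : ℝ) < Fintype.card Fq := by exact_mod_cast hq.trans' one_pos
  have hle := ENNReal.tsum_comp_le_tsum_of_injective hι
    (fun x => ENNReal.ofReal ((((Fintype.card Fq : ℝ) ^ x.1)⁻¹) ^ 2))
  refine ne_top_of_le_ne_top ?_ hle
  rw [ENNReal.tsum_sigma']
  have hn : ∀ n : ℕ, ∑' _ : Fin n → Fq, ENNReal.ofReal ((((Fintype.card Fq : ℝ) ^ n)⁻¹) ^ 2) =
      ENNReal.ofReal ((Fintype.card Fq : ℝ)⁻¹ ^ n) := by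
    intro n
    rw [tsum_fintype, Finset.sum_const, Finset.card_univ, Fintype.card_fun, Fintype.card_fin,
      nsmul_eq_mul, ← ENNReal.ofReal_natCast, ← ENNReal.ofReal_mul (by positivity)]
    congr 1
    push_cast
    simp only [inv_pow]
    field_simp
  simp_rw [hn]
  have hs : Summable fun n : ℕ => (Fintype.card Fq : ℝ)⁻¹ ^ n :=
    summable_geometric_of_lt_one (by positivity) (inv_lt_one_of_one_lt₀ (by exact_mod_cast hq))
  rw [← ENNReal.ofReal_tsum_of_nonneg (fun n => by positivity) hs]
  exact ENNReal.ofReal_ne_top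

theorem tsum_weight_ne_top {r : ℕ} {lam : Fin r → ℕ} (hlam : ∀ i, 0 < lam i) :
    ∑' P : {P : Fin r → MonicIrr Fq // Function.Injective P},
      ∏ j, ENNReal.ofReal (weight (P.1 j).1 (lam j) / 2) ≠ ⊤ := by
  have hle := ENNReal.tsum_comp_le_tsum_of_injective
    (Subtype.val_injective (p := fun P : Fin r → MonicIrr Fq => Function.Injective P))
    (fun P => ∏ j, ENNReal.ofReal (weight (P j).1 (lam j) / 2))
  refine ne_top_of_le_ne_top ?_ hle
  rw [ennreal_tsum_pi_fin r (fun _ => MonicIrr Fq)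
    (fun j R => ENNReal.ofReal (weight R.1 (lam j) / 2))]
  refine ENNReal.prod_ne_top fun j _ => ?_
  refine ne_top_of_le_ne_top ?_ (ENNReal.tsum_le_tsum fun R =>
    ENNReal.ofReal_le_ofReal (weight_le R (hlam j)))
  simp_rw [ENNReal.ofReal_mul (show (0 : ℝ) ≤ 2 ^ lam j by positivity), ENNReal.tsum_mul_left]
  exact ENNReal.mul_ne_top ENNReal.ofReal_ne_top tsum_normInv_sq_ne_top

end Convergence

/-- The identity between series in `ℝ≥0∞`, where no convergence is needed to rearrange. -/
theorem tsum_HtermE_eq (Fq : Type) [Field Fq] [Fintype Fq] (s : ℕ) (hs : 1 ≤ s) :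
    ∑' f : Fin s → Polynomial Fq, HtermE f =
      ∑ r ∈ Finset.Icc 1 s, (r.factorial : ℝ≥0∞)⁻¹ * ((s.factorial : ℝ≥0∞) *
        ∑' lam : {lam : Fin r → ℕ // (∀ i, 0 < lam i) ∧ ∑ i, lam i = s},
          ∑' P : {P : Fin r → MonicIrr Fq // Function.Injective P},
            ∏ j, ENNReal.ofReal (weight (P.1 j).1 (lam.1 j) / 2)) := by
  rw [tsum_HtermE, tsum_factor hs]
  refine Finset.sum_congr rfl fun r _ => ?_
  congr 1
  rw [ENNReal.tsum_comm (α := {lam : Fin r → ℕ // (∀ i, 0 < lam i) ∧ ∑ i, lam i = s}),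
    ← ENNReal.tsum_mul_left]
  refine tsum_congr fun P => ?_
  refine (tsum_congr fun φ => tsum_HtermE_comp P.2 φ.2).trans ?_
  rw [sum_surj (fun j n => ENNReal.ofReal (1 + normInv (P.1 j).1)⁻¹ *
      paritySum (normInv (P.1 j).1) n 0), ENNReal.tsum_mul_left]
  simp_rw [paritySum_normInv]

/-- Injective tuples of monic irreducible polynomials, with the conditions bundled entrywise
or not. -/
def bundleEquiv (Fq : Type) [Field Fq] (r : ℕ) :
    {P : Fin r → MonicIrr Fq // Function.Injective P} ≃
      {P : Fin r → Polynomial Fq // (∀ i, (P i).Monic ∧ Irreducible (P i)) ∧ Function.Injective P}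
    where
  toFun P := ⟨fun i => (P.1 i).1, fun i => (P.1 i).2, fun _ _ h => P.2 (Subtype.ext h)⟩
  invFun P := ⟨fun i => ⟨P.1 i, P.2.1 i⟩, fun _ _ h => P.2.2 (congrArg Subtype.val h)⟩
  left_inv _ := rfl
  right_inv _ := rfl

instance finite_compositions (r s : ℕ) :
    Finite {lam : Fin r → ℕ // (∀ i, 0 < lam i) ∧ ∑ i, lam i = s} := by
  refine Finite.of_injective (β := Fin r → Fin (s + 1)) (fun lam i => ⟨lam.1 i, ?_⟩) ?_
  · have := Finset.single_le_sum (f := lam.1) (fun _ _ => Nat.zero_le _) (Finset.mem_univ i)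
    rw [lam.2.2] at this
    omega
  · intro a b h
    exact Subtype.ext (funext fun i => congrArg Fin.val (congrFun h i))

/-- For every prime power `q` (realized as the cardinality of a finite field `Fq`) and
every positive integer `s`,
`H(s) = ∑_{r=1}^{s} (s!/(2^r r!)) ∑_{λ₁+⋯+λᵣ=s, λᵢ≥1} ∑_{P₁,…,Pᵣ distinct}
   ∏_{i=1}^{r} (u_{Pᵢ}^{λᵢ} + (-1)^{λᵢ} v_{Pᵢ}^{λᵢ}) / (λᵢ! (1 + |Pᵢ|⁻¹))`,
the middle sum over tuples of positive integers summing to `s` and the inner sum over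
tuples of pairwise distinct monic irreducible polynomials in `Fq[X]`. -/
theorem Hfun_eq (Fq : Type) [Field Fq] [Fintype Fq] (s : ℕ) (hs : 1 ≤ s) :
    Hfun Fq s =
      ∑ r ∈ Finset.Icc 1 s,
        ((s.factorial : ℝ) / (2 ^ r * (r.factorial : ℝ))) *
          ∑' lam : {lam : Fin r → ℕ // (∀ i, 0 < lam i) ∧ ∑ i, lam i = s},
            ∑' P : {P : Fin r → Polynomial Fq //
                (∀ i, (P i).Monic ∧ Irreducible (P i)) ∧ Function.Injective P},
              ∏ i,
                (uP (P.1 i) ^ lam.1 i + (-1 : ℝ) ^ lam.1 i * vP (P.1 i) ^ lam.1 i) /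
                  (((lam.1 i).factorial : ℝ) *
                    (1 + ((Fintype.card Fq : ℝ) ^ (P.1 i).natDegree)⁻¹)) := by
  classical
  have hfin : ∀ (r : ℕ), ∑' lam : {lam : Fin r → ℕ // (∀ i, 0 < lam i) ∧ ∑ i, lam i = s},
      ∑' P : {P : Fin r → MonicIrr Fq // Function.Injective P},
        ∏ j, ENNReal.ofReal (weight (P.1 j).1 (lam.1 j) / 2) ≠ ⊤ := by
    intro r
    have := Fintype.ofFinite {lam : Fin r → ℕ // (∀ i, 0 < lam i) ∧ ∑ i, lam i = s}
    rw [tsum_fintype]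
    exact ENNReal.sum_ne_top.2 fun lam _ => tsum_weight_ne_top lam.2.1
  rw [Hfun_eq_toReal, tsum_HtermE_eq Fq s hs, ENNReal.toReal_sum]
  swap
  · intro r _
    exact ENNReal.mul_ne_top
      (ENNReal.inv_ne_top.2 (by exact_mod_cast r.factorial_ne_zero))
      (ENNReal.mul_ne_top (ENNReal.natCast_ne_top _) (hfin r))
  refine Finset.sum_congr rfl fun r _ => ?_
  rw [ENNReal.toReal_mul, ENNReal.toReal_mul, ENNReal.toReal_inv, ENNReal.toReal_natCast,
    ENNReal.toReal_natCast, ENNReal.tsum_toReal_eq (fun lam => tsum_weight_ne_top lam.2.1)]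
  have hlam : ∀ lam : {lam : Fin r → ℕ // (∀ i, 0 < lam i) ∧ ∑ i, lam i = s},
      (∑' P : {P : Fin r → MonicIrr Fq // Function.Injective P},
        ∏ j, ENNReal.ofReal (weight (P.1 j).1 (lam.1 j) / 2)).toReal =
      (2 ^ r)⁻¹ * ∑' P : {P : Fin r → Polynomial Fq //
          (∀ i, (P i).Monic ∧ Irreducible (P i)) ∧ Function.Injective P},
        ∏ i, weight (P.1 i) (lam.1 i) := by
    intro lam
    rw [ENNReal.tsum_toReal_eq
      (fun P => ENNReal.prod_ne_top fun j _ => ENNReal.ofReal_ne_top),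
      ← (bundleEquiv Fq r).tsum_eq, ← tsum_mul_left]
    refine tsum_congr fun P => ?_
    rw [ENNReal.toReal_prod]
    simp_rw [ENNReal.toReal_ofReal (div_nonneg (weight_nonneg _ _) zero_le_two)]
    rw [Finset.prod_div_distrib, Finset.prod_const, Finset.card_univ, Fintype.card_fin,
      div_eq_inv_mul]
    rfl
  simp_rw [hlam]
  rw [tsum_mul_left, div_eq_mul_inv, mul_inv]
  simp only [weight]
  ring
end

section
/- There is an absolute constant C > 0 such that for every prime power q and every integer s ≥ 4, one has H(s) ≤ C · (4 s log log s / (√q · log s))^s. -/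
/-!
Write `x_P = |P|⁻¹`. Only tuples of prime powers `f_i = P_i ^ k_i` contribute to `H(s)`, with weight
`∏ x_{P_i} ^ k_i / k_i` times a factor in `[0, 1]` that is dropped. Every finite partial sum
involves finitely many primes `P`; attach an independent uniform sign `ε_P` to each of them. The
average of `∏ ε_{P_i} ^ k_i` is `1` when `∏ P_i ^ k_i` is a square (`sign_of_square`) and is never
negative (`sign_sum_nonneg`), so the partial sum is at most the `s`-th moment of
`X_ε = ∑_P ∑_{1 ≤ k ≤ K+1} ε_P ^ k x_P ^ k / k` (`sign_average`, `sum_tuples_le`).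

Since `x_P ≤ 1/2`, `X_ε` is within `B = 2 / q ≥ ∑ x_P ^ 2` of the Rademacher sum `∑ ε_P x_P`
(`local_series`, `sum_norm_sq`). Hoeffding's bound for exponential moments together with
`|X| ^ s ≤ s! z ^ (-s) e ^ (z |X|)` gives
`H(s) ≤ 2 s! z ^ (-s) exp (z B + z ^ 2 B / 2)` for all `z > 0` (`moment`), and `z = √(s q)` yields
`H(s) ≤ 2 (e ^ 3 √s / √q) ^ s` (`Hfun_le`). This is stronger than required for large `s`, because
`√s = o(s / log s)`; the remaining finitely many `s` are absorbed in the constant (`final_const`).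
-/

open Polynomial

/-! ### Moments of sums over random signs -/

/-- The truncated series `-log (1 - e x)` with `e = ±1` differs from its linear term by at most
`x ^ 2`. The index `k` stands for the exponent `k + 1`, so the linear term is always present. -/
theorem local_series (x e : ℝ) (hx : 0 ≤ x) (hx2 : x ≤ 1/2) (he : |e| = 1) (K : ℕ) :
    |∑ k : Fin (K+1), e^((k:ℕ)+1) * (x^((k:ℕ)+1) / (((k:ℕ)+1 : ℕ) : ℝ)) - e * x| ≤ x^2 := by
  rw [Fin.sum_univ_eq_sum_range (fun k => e^(k+1) * (x^(k+1) / ((k+1 : ℕ) : ℝ))),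
    Finset.sum_range_succ']
  simp only [zero_add, pow_one, Nat.cast_one, div_one, add_sub_cancel_right]
  calc _ ≤ ∑ k ∈ Finset.range K, |e^(k+1+1) * (x^(k+1+1) / ((k+1+1 : ℕ) : ℝ))| :=
        Finset.abs_sum_le_sum_abs _ _
    _ ≤ ∑ k ∈ Finset.range K, x^2/2 * (1/2)^k := by
        refine Finset.sum_le_sum fun k _ => ?_
        rw [abs_mul, abs_pow, he, one_pow, one_mul, abs_of_nonneg (by positivity)]
        calc x^(k+1+1) / ((k+1+1 : ℕ) : ℝ) ≤ x^(k+1+1) / 2 := by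
              gcongr
              push_cast
              have : (0:ℝ) ≤ k := k.cast_nonneg
              linarith
          _ = x^2/2 * x^k := by ring
          _ ≤ _ := by gcongr
    _ = x^2/2 * ∑ k ∈ Finset.range K, (1/2)^k := by rw [Finset.mul_sum]
    _ ≤ x^2/2 * 2 := by gcongr; exact sum_geometric_two_le K
    _ = x^2 := by ring

/-- Exponential moment of a Rademacher sum, from `cosh y ≤ exp (y ^ 2 / 2)` and independence.
The average over signs is written as a sum over `ι → ℤˣ` against its cardinality. -/
theorem hoeffding {ι : Type} [Fintype ι] [DecidableEq ι] (y : ι → ℝ) :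
    ∑ e : ι → ℤˣ, Real.exp (∑ p, ((e p : ℤ) : ℝ) * y p) ≤
      (Fintype.card (ι → ℤˣ) : ℝ) * Real.exp ((∑ p, y p ^ 2) / 2) := by
  have h : ∀ p, ∑ u : ℤˣ, Real.exp (((u : ℤ) : ℝ) * y p) ≤ 2 * Real.exp (y p ^ 2 / 2) := by
    intro p
    have : (Finset.univ : Finset ℤˣ) = {1, -1} := rfl
    rw [this, Finset.sum_pair (by decide)]
    have := Real.cosh_le_exp_half_sq (y p)
    rw [Real.cosh_eq] at this
    simp
    linarith
  calc _ = ∏ p, ∑ u : ℤˣ, Real.exp (((u : ℤ) : ℝ) * y p) := by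
        rw [Finset.prod_univ_sum, Fintype.piFinset_univ]
        exact Finset.sum_congr rfl fun e _ => Real.exp_sum _ _
    _ ≤ ∏ p : ι, 2 * Real.exp (y p ^ 2 / 2) :=
        Finset.prod_le_prod (fun p _ => by positivity) fun p _ => h p
    _ = _ := by
        rw [Finset.prod_mul_distrib, ← Real.exp_sum, ← Finset.sum_div]
        simp

/-- Moment bound for a quantity `X` within `B` of a Rademacher sum of variance at most `B`. -/
theorem moment {ι : Type} [Fintype ι] [DecidableEq ι] (x : ι → ℝ)
    (X : (ι → ℤˣ) → ℝ) (B z : ℝ) (hz : 0 < z)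
    (hB : ∑ p, x p ^ 2 ≤ B)
    (hX : ∀ e : ι → ℤˣ, |X e - ∑ p, ((e p : ℤ) : ℝ) * x p| ≤ B) (s : ℕ) :
    ∑ e, X e ^ s ≤ (Fintype.card (ι → ℤˣ) : ℝ) *
      (2 * (s.factorial / z ^ s * Real.exp (z * B + z ^ 2 * B / 2))) := by
  set R : (ι → ℤˣ) → ℝ := fun e => ∑ p, ((e p : ℤ) : ℝ) * x p with hR
  have h1 : ∀ e, X e ^ s ≤ s.factorial / z ^ s * Real.exp (z * B) *
      (Real.exp (∑ p, ((e p : ℤ) : ℝ) * (z * x p)) +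
        Real.exp (∑ p, ((e p : ℤ) : ℝ) * (-z * x p))) := by
    intro e
    have e1 : ∑ p, ((e p : ℤ) : ℝ) * (z * x p) = z * R e := by
      rw [hR, Finset.mul_sum]; exact Finset.sum_congr rfl fun _ _ => by ring
    have e2 : ∑ p, ((e p : ℤ) : ℝ) * (-z * x p) = -z * R e := by
      rw [hR, Finset.mul_sum]; exact Finset.sum_congr rfl fun _ _ => by ring
    rw [e1, e2]
    have h := Real.pow_div_factorial_le_exp (z * |X e|) (by positivity) s
    have h2 : Real.exp (z * |X e|) ≤ Real.exp (z * B) *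
        (Real.exp (z * R e) + Real.exp (-z * R e)) := by
      have h3 : |X e| ≤ B + |R e| := by
        have := abs_sub_abs_le_abs_sub (X e) (R e)
        linarith [hX e]
      calc Real.exp (z * |X e|) ≤ Real.exp (z * B + z * |R e|) := by
            apply Real.exp_le_exp.2; nlinarith
        _ = Real.exp (z * B) * Real.exp (z * |R e|) := Real.exp_add _ _
        _ ≤ _ := by
            gcongr
            rcases abs_cases (R e) with ⟨h, _⟩ | ⟨h, _⟩ <;> rw [h]
            · linarith [Real.exp_pos (-z * R e)]
            · rw [mul_neg, ← neg_mul]; linarith [Real.exp_pos (z * R e)]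
    have h4 : X e ^ s ≤ |X e| ^ s := by rw [← abs_pow]; exact le_abs_self _
    calc X e ^ s ≤ |X e| ^ s := h4
      _ = s.factorial / z ^ s * ((z * |X e|) ^ s / s.factorial) := by
          rw [mul_pow]
          have : (s.factorial : ℝ) ≠ 0 := by positivity
          field_simp
      _ ≤ s.factorial / z ^ s * (Real.exp (z * B) *
        (Real.exp (z * R e) + Real.exp (-z * R e))) := by
          gcongr; exact h.trans h2
      _ = _ := by ring
  have hsq : ∀ w : ℝ, w ^ 2 = z ^ 2 → ∑ e : ι → ℤˣ, Real.exp (∑ p, ((e p : ℤ) : ℝ) * (w * x p)) ≤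
      (Fintype.card (ι → ℤˣ) : ℝ) * Real.exp (z ^ 2 * B / 2) := by
    intro w hw
    refine (hoeffding fun p => w * x p).trans ?_
    gcongr
    simp only [mul_pow, hw, ← Finset.mul_sum]
    gcongr
  calc ∑ e, X e ^ s ≤ _ := Finset.sum_le_sum fun e _ => h1 e
    _ = s.factorial / z ^ s * Real.exp (z * B) * (_ + _) := by
        rw [← Finset.mul_sum, Finset.sum_add_distrib]
    _ ≤ s.factorial / z ^ s * Real.exp (z * B) *
      ((Fintype.card (ι → ℤˣ) : ℝ) * Real.exp (z ^ 2 * B / 2) +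
       (Fintype.card (ι → ℤˣ) : ℝ) * Real.exp (z ^ 2 * B / 2)) := by
        gcongr
        · exact hsq z rfl
        · exact hsq (-z) (by ring)
    _ = _ := by rw [Real.exp_add]; ring

/-- Expanding the `s`-th power of the signed prime power sum over tuples `g` of pairs
`(p, k)`, where `k` stands for the exponent `k + 1`. -/
theorem sign_average {ι : Type} [Fintype ι] [DecidableEq ι] (x : ι → ℝ) (K s : ℕ) :
   ∑ g : Fin s → ι × Fin (K+1),
     (∏ i, x (g i).1 ^ (((g i).2 : ℕ)+1) / ((((g i).2 : ℕ)+1 : ℕ) : ℝ)) *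
       ∑ e : ι → ℤˣ, ∏ i, ((e (g i).1 : ℤ) : ℝ) ^ (((g i).2 : ℕ)+1) =
   ∑ e : ι → ℤˣ, (∑ p, ∑ k : Fin (K+1), ((e p : ℤ) : ℝ) ^ ((k:ℕ)+1) *
      (x p ^((k:ℕ)+1) / (((k:ℕ)+1 : ℕ) : ℝ))) ^ s := by
  simp_rw [Finset.mul_sum]
  rw [Finset.sum_comm]
  refine Finset.sum_congr rfl fun e _ => ?_
  rw [← Fintype.sum_prod_type', Fintype.sum_pow]
  refine Finset.sum_congr rfl fun g _ => ?_
  rw [← Finset.prod_mul_distrib]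
  exact Finset.prod_congr rfl fun i _ => mul_comm _ _

/-- A sum of a character over the finite group `ι → ℤˣ` is `0` or the order of the group. -/
theorem sign_sum_nonneg {ι : Type} [Fintype ι] [DecidableEq ι] {s : ℕ} (p : Fin s → ι)
    (k : Fin s → ℕ) :
    0 ≤ ∑ e : ι → ℤˣ, ∏ i, ((e (p i) : ℤ) : ℝ) ^ k i := by
  classical
  let χ : (ι → ℤˣ) →* ℝ :=
    { toFun := fun e => ∏ i, ((e (p i) : ℤ) : ℝ) ^ k i
      map_one' := by simp
      map_mul' := fun a b => by simp [mul_pow, Finset.prod_mul_distrib] }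
  have := sum_hom_units χ
  change 0 ≤ ∑ e, χ e
  rw [this]
  split_ifs <;> simp

/-! ### Polynomials over a finite field -/

/-- A completely multiplicative function with values `±1` on the primes is `1` on squares. -/
theorem sign_of_square {F : Type} [Field F] (c : F[X] → ℤˣ) {s : ℕ} (P : Fin s → F[X])
    (k : Fin s → ℕ)
    (hP : ∀ i, (P i).Monic ∧ Irreducible (P i)) (hsq : IsSquare (∏ i, P i ^ k i)) :
    ∏ i, c (P i) ^ k i = 1 := by
  classical
  have hne : ∀ i, P i ≠ 0 := fun i => (hP i).2.ne_zero
  let χ : F[X] → ℤˣ := fun f => ((UniqueFactorizationMonoid.normalizedFactors f).map c).prod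
  have hmul : ∀ a b : F[X], a ≠ 0 → b ≠ 0 → χ (a * b) = χ a * χ b := fun a b ha hb => by
    simp [χ, UniqueFactorizationMonoid.normalizedFactors_mul ha hb]
  have hpow : ∀ i, χ (P i ^ k i) = c (P i) ^ k i := fun i => by
    simp [χ, UniqueFactorizationMonoid.normalizedFactors_pow,
      UniqueFactorizationMonoid.normalizedFactors_irreducible (hP i).2,
      (hP i).1.normalize_eq_self, Multiset.map_nsmul, Multiset.prod_nsmul]
  have hprod : ∀ t : Finset (Fin s), χ (∏ i ∈ t, P i ^ k i) = ∏ i ∈ t, c (P i) ^ k i := by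
    intro t
    induction t using Finset.induction_on with
    | empty => simp [χ]
    | insert a t ha ih =>
      rw [Finset.prod_insert ha, Finset.prod_insert ha, hmul, ih, hpow]
      · exact pow_ne_zero _ (hne a)
      · exact Finset.prod_ne_zero_iff.2 fun i _ => pow_ne_zero _ (hne i)
  rw [← hprod Finset.univ]
  obtain ⟨h, hh⟩ := hsq
  have h0 : h ≠ 0 := by
    rintro rfl
    exact Finset.prod_ne_zero_iff.2 (fun i _ => pow_ne_zero (k i) (hne i)) (hh.trans (by simp))
  rw [hh, hmul h h h0 h0, Int.units_mul_self]

/-- There are at most `q ^ n` monic polynomials of degree `n`, so the sum is dominated by the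
geometric series `∑_{n ≥ 1} q ^ (-n)`. -/
theorem sum_norm_sq (F : Type) [Field F] [Fintype F] (A : Finset F[X])
    (hA : ∀ P ∈ A, P.Monic ∧ 0 < P.natDegree) :
    ∑ P ∈ A, (((Fintype.card F : ℝ) ^ P.natDegree)⁻¹) ^ 2 ≤ 2 / Fintype.card F := by
  classical
  set q : ℝ := ((Fintype.card F : ℕ) : ℝ) with hq
  have hq2 : (2:ℝ) ≤ q := by
    rw [hq]; exact_mod_cast (Fintype.one_lt_card : 1 < Fintype.card F)
  have hq0 : 0 < q := by linarith
  have hcard : ∀ n, ((A.filter fun P => P.natDegree = n).card : ℝ) ≤ q ^ n := by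
    intro n
    have : (A.filter fun P => P.natDegree = n).card ≤ (Finset.univ : Finset (Fin n → F)).card := by
      refine Finset.card_le_card_of_injOn (fun P i => P.coeff i) (fun _ _ => Finset.mem_coe.2 (Finset.mem_univ _)) ?_
      intro P hP Q hQ h
      simp only [Finset.coe_filter, Set.mem_ofPred_eq] at hP hQ
      ext m
      rcases lt_trichotomy m n with hm | hm | hm
      · exact congrFun h ⟨m, hm⟩
      · have h1 := (hA P hP.1).1.coeff_natDegree
        have h2 := (hA Q hQ.1).1.coeff_natDegree
        rw [hP.2] at h1; rw [hQ.2] at h2; rw [hm, h1, h2]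
      · rw [coeff_eq_zero_of_natDegree_lt (hP.2 ▸ hm), coeff_eq_zero_of_natDegree_lt (hQ.2 ▸ hm)]
    rw [Finset.card_univ, Fintype.card_fun, Fintype.card_fin] at this
    rw [hq]; exact_mod_cast this
  set N := A.sup natDegree
  have hmaps : ∀ P ∈ A, P.natDegree ∈ Finset.Icc 1 N := fun P hP =>
    Finset.mem_Icc.2 ⟨(hA P hP).2, Finset.le_sup (f := natDegree) hP⟩
  rw [← Finset.sum_fiberwise_of_maps_to hmaps]
  calc _ ≤ ∑ n ∈ Finset.Icc 1 N, (q⁻¹) ^ n := by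
        refine Finset.sum_le_sum fun n _ => ?_
        calc _ = ∑ P ∈ A with P.natDegree = n, ((q ^ n)⁻¹) ^ 2 :=
              Finset.sum_congr rfl fun P hP => by rw [(Finset.mem_filter.1 hP).2]
          _ = ((A.filter fun P => P.natDegree = n).card : ℝ) * ((q ^ n)⁻¹) ^ 2 := by
              rw [Finset.sum_const, nsmul_eq_mul]
          _ ≤ q ^ n * ((q ^ n)⁻¹) ^ 2 := by gcongr; exact hcard n
          _ = (q⁻¹) ^ n := by rw [inv_pow q n]; field_simp
    _ = q⁻¹ * ∑ n ∈ Finset.range N, (q⁻¹) ^ n := by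
        rw [Finset.mul_sum, ← Finset.Ico_succ_right_eq_Icc, Finset.sum_Ico_eq_sum_range]
        exact Finset.sum_congr (by simp) fun n _ => by rw [pow_add, pow_one]
    _ ≤ q⁻¹ * ∑ n ∈ Finset.range N, (1/2) ^ n := by
        gcongr
        rw [one_div]; gcongr
    _ ≤ q⁻¹ * 2 := by gcongr; exact sum_geometric_two_le N
    _ = 2 / q := by ring

/-! ### Comparison of the bounds -/

open Filter Topology in
/-- The ratio `r s` of the two bases is eventually at most `1`, so `r s ^ s` is bounded. -/
theorem final_const : ∃ C : ℝ, 0 < C ∧ ∀ s : ℕ, 4 ≤ s →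
    2 * (Real.exp 3 * √s) ^ s ≤ C * (4 * s * Real.log (Real.log s) / Real.log s) ^ s := by
  set r : ℕ → ℝ := fun s => (Real.exp 3 * √s) / (4 * s * Real.log (Real.log s) / Real.log s) with hr
  have hlog : ∀ s : ℕ, 4 ≤ s → 1 < Real.log s := fun s hs => by
    rw [Real.lt_log_iff_exp_lt (by positivity)]
    have : (4:ℝ) ≤ s := by exact_mod_cast hs
    linarith [Real.exp_one_lt_d9]
  have hpos : ∀ s : ℕ, 4 ≤ s → 0 < 4 * s * Real.log (Real.log s) / Real.log s := fun s hs => by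
    have h1 := hlog s hs
    have := Real.log_pos h1
    positivity
  have hev : ∀ᶠ s : ℕ in atTop, r s ≤ 1 := by
    have h1 : ∀ᶠ s : ℝ in atTop, ‖Real.log s‖ ≤ 4 / Real.exp 3 * ‖s ^ (1/2 : ℝ)‖ :=
      (isLittleO_log_rpow_atTop (by norm_num : (0:ℝ) < 1/2)).bound (by positivity)
    have h2 : ∀ᶠ s : ℝ in atTop, 1 ≤ Real.log (Real.log s) :=
      (Real.tendsto_log_atTop.comp Real.tendsto_log_atTop).eventually_ge_atTop 1
    filter_upwards [tendsto_natCast_atTop_atTop.eventually h1,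
      tendsto_natCast_atTop_atTop.eventually h2, eventually_ge_atTop 4] with s h1 h2 hs
    have hl := hlog s hs
    rw [hr]
    simp only
    rw [div_le_one (hpos s hs), le_div_iff₀ (by linarith)]
    rw [← Real.sqrt_eq_rpow, Real.norm_of_nonneg (by linarith), Real.norm_of_nonneg (by positivity)] at h1
    have hss : √(s:ℝ) * √s = s := Real.mul_self_sqrt (by positivity)
    calc Real.exp 3 * √s * Real.log s ≤ Real.exp 3 * √s * (4 / Real.exp 3 * √s) := by gcongr
      _ = 4 * (√(s:ℝ) * √s) := by field_simp
      _ = 4 * s := by rw [hss]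
      _ ≤ 4 * s * Real.log (Real.log s) := le_mul_of_one_le_right (by positivity) h2
  obtain ⟨N, hN⟩ := eventually_atTop.1 hev
  have hr0 : ∀ s : ℕ, 4 ≤ s → 0 ≤ r s := fun s hs => div_nonneg (by positivity) (hpos s hs).le
  have hb : ∀ s : ℕ, 4 ≤ s → r s ^ s ≤ 1 + ∑ t ∈ Finset.range N, |r t ^ t| := by
    intro s hs
    by_cases h : N ≤ s
    · have := pow_le_one₀ (n := s) (hr0 s hs) (hN s h)
      have h' : 0 ≤ ∑ t ∈ Finset.range N, |r t ^ t| := Finset.sum_nonneg fun _ _ => abs_nonneg _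
      linarith
    · have := Finset.single_le_sum (f := fun t => |r t ^ t|) (fun _ _ => abs_nonneg _)
        (Finset.mem_range.2 (not_le.1 h))
      linarith [le_abs_self (r s ^ s)]
  refine ⟨2 * (1 + ∑ t ∈ Finset.range N, |r t ^ t|), ?_, fun s hs => ?_⟩
  · have h' : 0 ≤ ∑ t ∈ Finset.range N, |r t ^ t| := Finset.sum_nonneg fun _ _ => abs_nonneg _
    linarith
  · have hp := hpos s hs
    have : Real.exp 3 * √s = r s * (4 * s * Real.log (Real.log s) / Real.log s) :=
      (div_mul_cancel₀ _ hp.ne').symm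
    rw [this, mul_pow, ← mul_assoc]
    gcongr
    exact hb s hs

/-! ### The bound for `H(s)` -/

theorem vonMangoldt_nonneg_s4 {F : Type} [Field F] (f : F[X]) : 0 ≤ vonMangoldt f := by
  unfold vonMangoldt
  split_ifs <;> positivity

/-- Where `Λ` does not vanish, `f = P ^ (k + 1)` and `Λ(f) q ^ (-deg f) / deg f` equals
`|P| ^ (-(k + 1)) / (k + 1)`. -/
theorem prime_power_weight {F : Type} [Field F] [Fintype F] (f : F[X]) (hf : vonMangoldt f ≠ 0) :
    ∃ (P : F[X]) (k : ℕ), P.Monic ∧ Irreducible P ∧ f = P ^ (k + 1) ∧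
      vonMangoldt f * ((Fintype.card F : ℝ) ^ f.natDegree)⁻¹ / (f.natDegree : ℝ) =
        ((Fintype.card F : ℝ) ^ P.natDegree)⁻¹ ^ (k + 1) / ((k + 1 : ℕ) : ℝ) := by
  unfold vonMangoldt at hf ⊢
  split_ifs at hf ⊢ with h
  · obtain ⟨k, hm, hi, hk, hfk⟩ := h.choose_spec
    set P := h.choose
    obtain ⟨k, rfl⟩ : ∃ j, k = j + 1 := ⟨k - 1, by omega⟩
    refine ⟨P, k, hm, hi, hfk, ?_⟩
    have hd : (f.natDegree : ℝ) = ((k + 1 : ℕ) : ℝ) * P.natDegree := by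
      rw [hfk, natDegree_pow]; push_cast; ring
    have hd' : f.natDegree = P.natDegree * (k + 1) := by
      rw [hfk, natDegree_pow, mul_comm]
    have h0 : ((k + 1 : ℕ) : ℝ) ≠ 0 := by positivity
    rw [hd, hd', pow_mul, inv_pow]
    field_simp
  · exact absurd rfl hf

/-- Bound for finite partial sums of `H(s)` without the factor `∏ (1 + |P|⁻¹)⁻¹`, with a free
parameter `z`. -/
theorem sum_tuples_le (F : Type) [Field F] [Fintype F] (s : ℕ) (z : ℝ) (hz : 0 < z)
    (u : Finset {f : Fin s → F[X] //
      (∀ i, (f i).Monic ∧ 0 < (f i).natDegree) ∧ IsSquare (∏ i, f i)}) :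
    ∑ f ∈ u, ∏ i, vonMangoldt (f.1 i) * ((Fintype.card F : ℝ) ^ (f.1 i).natDegree)⁻¹ /
        ((f.1 i).natDegree : ℝ) ≤
      2 * (s.factorial / z ^ s *
        Real.exp (z * (2 / Fintype.card F) + z ^ 2 * (2 / Fintype.card F) / 2)) := by
  classical
  choose! b m hbm hbi hbf hbw using prime_power_weight (F := F)
  set u' := u.filter fun f => ∀ i, vonMangoldt (f.1 i) ≠ 0
  -- Tuples with an entry that is not a prime power contribute zero.
  have hred : ∑ f ∈ u', ∏ i, vonMangoldt (f.1 i) *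
        ((Fintype.card F : ℝ) ^ (f.1 i).natDegree)⁻¹ / ((f.1 i).natDegree : ℝ) =
      ∑ f ∈ u, ∏ i, vonMangoldt (f.1 i) *
        ((Fintype.card F : ℝ) ^ (f.1 i).natDegree)⁻¹ / ((f.1 i).natDegree : ℝ) := by
    refine Finset.sum_filter_of_ne fun f _ hne i hi => hne ?_
    exact Finset.prod_eq_zero (Finset.mem_univ i) (by rw [hi]; simp)
  rw [← hred]
  -- `S`: the prime powers that occur; `A`: their primes; `K + 1`: a bound for their exponents.
  set S := u'.biUnion fun f => Finset.univ.image f.1 with hS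
  have hmem : ∀ f ∈ u', ∀ i, f.1 i ∈ S := fun f hf i =>
    Finset.mem_biUnion.2 ⟨f, hf, Finset.mem_image_of_mem _ (Finset.mem_univ i)⟩
  have hSL : ∀ f ∈ S, vonMangoldt f ≠ 0 := by
    intro f hf
    obtain ⟨g, hg, hfg⟩ := Finset.mem_biUnion.1 hf
    obtain ⟨i, _, rfl⟩ := Finset.mem_image.1 hfg
    exact (Finset.mem_filter.1 hg).2 i
  set A := S.image b with hA
  set K := S.sup m with hK
  have hAirr : ∀ P ∈ A, P.Monic ∧ Irreducible P := by
    intro P hP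
    obtain ⟨f, hf, rfl⟩ := Finset.mem_image.1 hP
    exact ⟨hbm f (hSL f hf), hbi f (hSL f hf)⟩
  let x : A → ℝ := fun P => ((Fintype.card F : ℝ) ^ P.1.natDegree)⁻¹
  have hq2 : (2 : ℝ) ≤ Fintype.card F := by
    exact_mod_cast (Fintype.one_lt_card : 1 < Fintype.card F)
  have hx0 : ∀ P, 0 ≤ x P := fun P => by positivity
  have hx2 : ∀ P, x P ≤ 1 / 2 := by
    intro P
    rw [one_div]
    refine inv_anti₀ two_pos (hq2.trans ?_)
    exact le_self_pow₀ (by linarith) (hAirr P.1 P.2).2.natDegree_pos.ne'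
  have hxB : ∑ P, x P ^ 2 ≤ 2 / Fintype.card F := by
    have := sum_norm_sq F A fun P hP => ⟨(hAirr P hP).1, (hAirr P hP).2.natDegree_pos⟩
    rwa [← Finset.sum_coe_sort] at this
  set X : (A → ℤˣ) → ℝ := fun e => ∑ p, ∑ k : Fin (K+1), ((e p : ℤ) : ℝ) ^ ((k:ℕ)+1) *
      (x p ^((k:ℕ)+1) / (((k:ℕ)+1 : ℕ) : ℝ)) with hX
  have hXb : ∀ e : A → ℤˣ, |X e - ∑ p, ((e p : ℤ) : ℝ) * x p| ≤ 2 / Fintype.card F := by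
    intro e
    rw [hX, ← Finset.sum_sub_distrib]
    refine (Finset.abs_sum_le_sum_abs _ _).trans (le_trans ?_ hxB)
    refine Finset.sum_le_sum fun p _ => local_series _ _ (hx0 p) (hx2 p) ?_ K
    rcases Int.units_eq_one_or (e p) with h | h <;> simp [h]
  have hmom := moment x X _ z hz hxB hXb s
  rw [hX, ← sign_average x K s] at hmom
  have hc : (0 : ℝ) < Fintype.card (A → ℤˣ) := by exact_mod_cast Fintype.card_pos
  refine le_of_mul_le_mul_left (le_trans ?_ hmom) hc
  set T : (Fin s → A × Fin (K+1)) → ℝ := fun g =>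
    (∏ i, x (g i).1 ^ (((g i).2 : ℕ)+1) / ((((g i).2 : ℕ)+1 : ℕ) : ℝ)) *
       ∑ e : A → ℤˣ, ∏ i, ((e (g i).1 : ℤ) : ℝ) ^ (((g i).2 : ℕ)+1) with hT
  have hT0 : ∀ g, 0 ≤ T g := fun g =>
    mul_nonneg (Finset.prod_nonneg fun i _ => div_nonneg (pow_nonneg (hx0 _) _) (Nat.cast_nonneg _))
      (sign_sum_nonneg (fun i => (g i).1) fun i => ((g i).2 : ℕ) + 1)
  let φ : u' → (Fin s → A × Fin (K+1)) := fun f i =>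
    (⟨b (f.1.1 i), Finset.mem_image_of_mem b (hmem f.1 f.2 i)⟩,
      ⟨m (f.1.1 i), Nat.lt_succ_of_le (Finset.le_sup (f := m) (hmem f.1 f.2 i))⟩)
  have hφf : ∀ (f : u') i, f.1.1 i = ((φ f i).1 : F[X]) ^ (((φ f i).2 : ℕ) + 1) := fun f i =>
    hbf _ (hSL _ (hmem f.1 f.2 i))
  have hφ : Function.Injective φ := by
    intro f g h
    refine Subtype.ext (Subtype.ext (funext fun i => ?_))
    rw [hφf f i, hφf g i, h]
  have hterm : ∀ f : u', (Fintype.card (A → ℤˣ) : ℝ) * ∏ i, (vonMangoldt (f.1.1 i) *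
        ((Fintype.card F : ℝ) ^ (f.1.1 i).natDegree)⁻¹ / ((f.1.1 i).natDegree : ℝ)) = T (φ f) := by
    intro f
    have hone : ∀ e : A → ℤˣ,
        ∏ i, ((e (φ f i).1 : ℤ) : ℝ) ^ (((φ f i).2 : ℕ)+1) = 1 := by
      intro e
      have hsq := f.1.2.2
      simp_rw [hφf f] at hsq
      have := sign_of_square (fun P => if h : P ∈ A then e ⟨P, h⟩ else 1)
        (fun i => ((φ f i).1 : F[X])) _ (fun i => hAirr _ (φ f i).1.2) hsq
      simp only [Subtype.coe_eta, Finset.coe_mem, dite_true] at this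
      have h2 := congrArg (fun v : ℤˣ => ((v : ℤ) : ℝ)) this
      simpa using h2
    rw [hT]
    simp only [hone, Finset.sum_const, Finset.card_univ, nsmul_eq_mul, mul_one]
    rw [mul_comm]
    congr 1
    exact Finset.prod_congr rfl fun i _ => hbw _ (hSL _ (hmem f.1 f.2 i))
  rw [← Finset.sum_coe_sort u', Finset.mul_sum]
  calc _ = ∑ f : u', T (φ f) := Finset.sum_congr rfl fun f _ => hterm f
    _ = ∑ g ∈ Finset.univ.image φ, T g := (Finset.sum_image fun a _ b _ h => hφ h).symm
    _ ≤ ∑ g, T g := Finset.sum_le_univ_sum_of_nonneg hT0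

theorem Hfun_le (F : Type) [Field F] [Fintype F] (s : ℕ) (hs : 1 ≤ s) :
    Hfun F s ≤ 2 * (Real.exp 3 * √s / √(Fintype.card F)) ^ s := by
  set q : ℝ := ((Fintype.card F : ℕ) : ℝ) with hq
  have hq2 : (2 : ℝ) ≤ q := by
    rw [hq]; exact_mod_cast (Fintype.one_lt_card : 1 < Fintype.card F)
  have hs1 : (1 : ℝ) ≤ s := by exact_mod_cast hs
  have hq0 : 0 < q := by linarith
  set z : ℝ := √s * √q with hz
  have hz0 : 0 < z := by positivity
  have hsum : Hfun F s ≤ 2 * (s.factorial / z ^ s * Real.exp (z * (2 / q) + z ^ 2 * (2 / q) / 2)) := by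
    unfold Hfun
    have hw : ∀ f : {f : Fin s → F[X] //
        (∀ i, (f i).Monic ∧ 0 < (f i).natDegree) ∧ IsSquare (∏ i, f i)},
        0 ≤ ∏ i, vonMangoldt (f.1 i) * ((Fintype.card F : ℝ) ^ (f.1 i).natDegree)⁻¹ /
          ((f.1 i).natDegree : ℝ) := fun f =>
      Finset.prod_nonneg fun i _ => by
        have := vonMangoldt_nonneg_s4 (f.1 i)
        positivity
    have hP : ∀ s : Set F[X], 0 ≤ (∏ᶠ P ∈ s, (1 + ((Fintype.card F : ℝ) ^ P.natDegree)⁻¹)⁻¹) ∧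
        (∏ᶠ P ∈ s, (1 + ((Fintype.card F : ℝ) ^ P.natDegree)⁻¹)⁻¹) ≤ 1 := fun s =>
      finprod_mem_induction (fun y : ℝ => 0 ≤ y ∧ y ≤ 1) ⟨zero_le_one, le_rfl⟩
        (fun a b ha hb => ⟨mul_nonneg ha.1 hb.1, mul_le_one₀ ha.2 hb.1 hb.2⟩)
        (fun P _ => ⟨by positivity, inv_le_one_of_one_le₀ (le_add_of_nonneg_right (by positivity))⟩)
    refine Real.tsum_le_of_sum_le (fun f => mul_nonneg (hw f) (hP _).1) fun u => ?_
    refine le_trans (Finset.sum_le_sum fun f _ => mul_le_of_le_one_right (hw f) (hP _).2) ?_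
    exact sum_tuples_le F s z hz0 u
  have hsq : √(s:ℝ) * √s = s := Real.mul_self_sqrt (by positivity)
  have hqq : √q * √q = q := Real.mul_self_sqrt hq0.le
  have hz2 : z ^ 2 = s * q := by rw [hz, mul_pow, Real.sq_sqrt (by positivity), Real.sq_sqrt hq0.le]
  have hzle : z ≤ s * q := by
    have h1 : 1 ≤ √(s:ℝ) := Real.one_le_sqrt.2 hs1
    have h2 : 1 ≤ √q := Real.one_le_sqrt.2 (by linarith)
    have : 1 ≤ z := by rw [hz]; nlinarith
    nlinarith
  have hexp : z * (2 / q) + z ^ 2 * (2 / q) / 2 ≤ s * 3 := by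
    have e1 : z ^ 2 * (2 / q) / 2 = s := by rw [hz2]; field_simp
    have e2 : z * (2 / q) ≤ 2 * s := by
      rw [mul_div_assoc', div_le_iff₀ hq0]; linarith
    linarith
  have hfac : (s.factorial : ℝ) ≤ (s : ℝ) ^ s := by exact_mod_cast Nat.factorial_le_pow s
  calc Hfun F s ≤ _ := hsum
    _ ≤ 2 * ((s : ℝ) ^ s / z ^ s * Real.exp (s * 3)) := by gcongr
    _ = 2 * (Real.exp 3 * √s / √q) ^ s := by
      rw [Real.exp_nat_mul, ← div_pow, ← mul_pow]
      congr 2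
      rw [hz]
      nth_rewrite 1 [← hsq]
      field_simp

/-- There is an absolute constant `C > 0` such that for every prime power `q`
(realized as the cardinality of a finite field `Fq`) and every integer `s ≥ 4`, one has
`H(s) ≤ C (4 s log log s / (√q log s))^s`. -/
theorem Hfun_upper_bound :
    ∃ C : ℝ, 0 < C ∧
      ∀ (Fq : Type) [Field Fq] [Fintype Fq], ∀ s : ℕ, 4 ≤ s →
        Hfun Fq s ≤ C * (4 * s * Real.log (Real.log s) /
            (Real.sqrt (Fintype.card Fq) * Real.log s)) ^ s := by
  obtain ⟨C, hC, h⟩ := final_const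
  refine ⟨C, hC, fun Fq _ _ s hs => (Hfun_le Fq s (by omega)).trans ?_⟩
  have hq : 0 < √(Fintype.card Fq : ℝ) :=
    Real.sqrt_pos.2 (by exact_mod_cast Fintype.card_pos)
  have e : 4 * (s : ℝ) * Real.log (Real.log s) / (√(Fintype.card Fq : ℝ) * Real.log s) =
      4 * s * Real.log (Real.log s) / Real.log s / √(Fintype.card Fq : ℝ) := by
    rw [div_div, mul_comm (Real.log (s : ℝ))]
  rw [e, div_pow, div_pow, ← mul_div_assoc, ← mul_div_assoc]
  exact div_le_div_of_nonneg_right (h s hs) (by positivity)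
end

section
/- For every positive integer s there is a constant C_s > 0, depending only on s, such that for every prime power q: if s is even then |H(s) − (s!/(2^{s/2} (s/2)!)) q^{−s/2}| ≤ C_s q^{−(s+1)/2}, and if s is odd then H(s) ≤ C_s q^{−(s+1)/2}. -/
/-!
Writing `f i = P i ^ k i`, the sum `H(s)` runs over tuples of prime powers whose product is a
square. Group the indices into blocks carrying the same prime. With `v = q ^ (-1/2)`, a block of
size `b` contributes at most

* `O(v ^ 2)` if `b = 1`, since then the exponent is at least two,
* `v ^ 2 + O(v ^ 3)` if `b = 2`,
* `O(q ^ (1 - b)) = O(v ^ (b + 1))` if `b ≥ 3`,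

because there are at most `q ^ d` primes of degree `d` (`blockSum_bound`). So only perfect
matchings of the indices contribute to the order `v ^ s`. The upper bound (`tupleSum_bound`) is
proved by induction on the number of indices, splitting off the block of one index
(`tupleSum_le`); the number of perfect matchings enters through the recursion
`matchings (n + 2) = (n + 1) * matchings n`. The sums are taken in `ℝ≥0∞`, so that summability of
the real series is a consequence of the bound. The squares are only used through the fact that no
prime occurs exactly once (`Squareful`).

For the lower bound with `s = 2 * m`, only tuples of linear polynomials `X - a` are kept. Adding a
new pair of equal entries shows that the number `N n` of those with square product satisfies
`N (n + 2) ≥ (n + 1) * (q - n) * N n` (`card_linearTuples_step`), each has weight `q ^ (-s)`, and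
the product over the primes dividing it is at least `1 - s / q` (`finprod_ge`).
-/


open Polynomial

open scoped ENNReal

namespace HfunAux

/-! ### Sums over tuples of prime powers in which no prime occurs exactly once -/

/-- For a tuple of pairs `(P, k)`, standing for the prime powers `P ^ (k + 1)`: no entry with
exponent exactly one has a prime different from all the others. Every tuple with square product
satisfies this, and it is all the upper bound uses. -/
def Squareful {Pr I : Type} (x : I → Pr × ℕ) : Prop :=
  ∀ i, (x i).2 = 0 → ∃ j, j ≠ i ∧ (x j).1 = (x i).1

/-- The prime power `P ^ (k + 1)` gets the weight `t P ^ (k + 1)`. -/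
noncomputable def wt {Pr : Type} (t : Pr → ℝ≥0∞) (x : Pr × ℕ) : ℝ≥0∞ := t x.1 ^ (x.2 + 1)

open Classical in
/-- The total weight of all squareful tuples of prime powers indexed by `I`. -/
noncomputable def tupleSum {Pr : Type} (t : Pr → ℝ≥0∞) (I : Type) [Fintype I] : ℝ≥0∞ :=
  ∑' x : I → Pr × ℕ, if Squareful x then ∏ i, wt t (x i) else 0

open Classical in
/-- The total weight of the squareful tuples indexed by `I` that are powers of one prime. -/
noncomputable def blockSum {Pr : Type} (t : Pr → ℝ≥0∞) (I : Type) [Fintype I] : ℝ≥0∞ :=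
  ∑' x : I → Pr × ℕ,
    if (∀ i j, (x i).1 = (x j).1) ∧ Squareful x then ∏ i, wt t (x i) else 0

theorem tupleSum_of_isEmpty {Pr : Type} (t : Pr → ℝ≥0∞) (I : Type) [Fintype I] [IsEmpty I] :
    tupleSum t I = 1 := by
  classical
  simp [tupleSum, Squareful, tsum_fintype]

/-- Split a tuple according to the block `B` of indices carrying the same prime as `i₀`; both the
block and its complement remain squareful. -/
theorem tupleSum_le {Pr : Type} (t : Pr → ℝ≥0∞) (I : Type) [Fintype I] [DecidableEq I] (i₀ : I) :
    tupleSum t I ≤ ∑ B : Finset I with i₀ ∈ B,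
      blockSum t {i // i ∈ B} * tupleSum t {i // ¬ i ∈ B} := by
  classical
  let F : Finset I → (I → Pr × ℕ) → ℝ≥0∞ := fun B x =>
    (if (∀ i j : {i // i ∈ B}, (x i).1 = (x j).1) ∧ Squareful (fun i : {i // i ∈ B} => x i)
      then ∏ i : {i // i ∈ B}, wt t (x i) else 0) *
    (if Squareful (fun i : {i // ¬ i ∈ B} => x i)
      then ∏ i : {i // ¬ i ∈ B}, wt t (x i) else 0)
  have hF : ∀ B, ∑' x, F B x = blockSum t {i // i ∈ B} * tupleSum t {i // ¬ i ∈ B} := by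
    intro B
    rw [← (Equiv.piEquivPiSubtypeProd (fun i => i ∈ B) (fun _ => Pr × ℕ)).symm.tsum_eq,
      ENNReal.tsum_prod', blockSum, tupleSum, ← ENNReal.tsum_mul_right]
    refine tsum_congr fun y => ?_
    rw [← ENNReal.tsum_mul_left]
    refine tsum_congr fun z => ?_
    have h1 : ∀ i : {i // i ∈ B}, (Equiv.piEquivPiSubtypeProd (fun i => i ∈ B)
        (fun _ => Pr × ℕ)).symm (y, z) i = y i := fun i => by
      simp [Equiv.piEquivPiSubtypeProd]
    have h2 : ∀ i : {i // ¬ i ∈ B}, (Equiv.piEquivPiSubtypeProd (fun i => i ∈ B)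
        (fun _ => Pr × ℕ)).symm (y, z) i = z i := fun i => by
      simp [Equiv.piEquivPiSubtypeProd, i.2]
    simp only [F, h1, h2]
  rw [← Finset.sum_congr rfl (fun B _ => hF B),
    ← Summable.tsum_finsetSum (fun _ _ => ENNReal.summable), tupleSum]
  refine ENNReal.tsum_le_tsum fun x => ?_
  split_ifs with hx
  swap
  · exact zero_le
  let B : Finset I := Finset.univ.filter fun i => (x i).1 = (x i₀).1
  have hB : ∀ i, i ∈ B ↔ (x i).1 = (x i₀).1 := fun i => by simp [B]
  have hmem : B ∈ Finset.univ.filter (fun B : Finset I => i₀ ∈ B) := by simp [hB]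
  refine le_trans (le_of_eq ?_) (Finset.single_le_sum (f := fun B => F B x)
    (fun _ _ => zero_le) hmem)
  have c1 : ∀ i j : {i // i ∈ B}, (x i).1 = (x j).1 := fun i j =>
    ((hB _).1 i.2).trans ((hB _).1 j.2).symm
  have c2 : Squareful (fun i : {i // i ∈ B} => x i) := by
    intro i hi
    obtain ⟨j, hj, hj'⟩ := hx i hi
    exact ⟨⟨j, (hB j).2 (hj'.trans ((hB _).1 i.2))⟩, fun h => hj (by rw [← h]), hj'⟩
  have c3 : Squareful (fun i : {i // ¬ i ∈ B} => x i) := by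
    intro i hi
    obtain ⟨j, hj, hj'⟩ := hx i hi
    exact ⟨⟨j, fun h => i.2 ((hB _).2 (hj'.symm.trans ((hB _).1 h)))⟩,
      fun h => hj (by rw [← h]), hj'⟩
  simp only [F]
  rw [if_pos ⟨c1, c2⟩, if_pos c3]
  convert (Fintype.prod_subtype_mul_prod_subtype (fun i => i ∈ B) (fun i => wt t (x i))).symm

theorem tsum_pi_prod (c : ℕ → ℝ≥0∞) (I : Type) [Fintype I] :
    ∑' k : I → ℕ, ∏ i, c (k i) = (∑' k, c k) ^ Fintype.card I := by
  have key : ∀ n : ℕ, ∑' k : Fin n → ℕ, ∏ i, c (k i) = (∑' k, c k) ^ n := by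
    intro n
    induction n with
    | zero => simp [tsum_fintype]
    | succ n ih =>
      rw [← (Fin.consEquiv (fun _ : Fin (n + 1) => ℕ)).tsum_eq, ENNReal.tsum_prod', pow_succ',
        ← ENNReal.tsum_mul_right, ← ih]
      refine tsum_congr fun a => ?_
      rw [← ENNReal.tsum_mul_left]
      refine tsum_congr fun b => ?_
      simp [Fin.consEquiv, Fin.prod_univ_succ]
  rw [← key, ← (Equiv.arrowCongr (Fintype.equivFin I) (Equiv.refl ℕ)).symm.tsum_eq]
  refine tsum_congr fun k => ?_
  rw [← (Fintype.equivFin I).prod_comp]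
  simp [Equiv.arrowCongr]

/-- A block is a prime together with a family of exponents; a block with a single index must have
exponent at least two. -/
theorem blockSum_le {Pr : Type} (t : Pr → ℝ≥0∞) (I : Type) [Fintype I] [Nonempty I] :
    blockSum t I ≤ ∑' P, (∑' k : ℕ, if Fintype.card I = 1 ∧ k = 0 then 0 else t P ^ (k + 1)) ^
      Fintype.card I := by
  classical
  obtain ⟨i₀⟩ := ‹Nonempty I›
  simp only [← tsum_pi_prod]
  rw [← ENNReal.tsum_prod]
  let G : Pr × (I → ℕ) → ℝ≥0∞ := fun p =>
    ∏ i, if Fintype.card I = 1 ∧ p.2 i = 0 then 0 else t p.1 ^ (p.2 i + 1)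
  change _ ≤ ∑' p, G p
  let S : Set (I → Pr × ℕ) := {x | ∀ i j, (x i).1 = (x j).1}
  let e : S → Pr × (I → ℕ) := fun x => ((x.1 i₀).1, fun i => (x.1 i).2)
  have he : Function.Injective e := by
    intro x y h
    simp only [e, Prod.mk.injEq] at h
    refine Subtype.ext (funext fun i => Prod.ext ?_ (congrFun h.2 i))
    rw [x.2 i i₀, y.2 i i₀, h.1]
  refine le_trans ?_ (ENNReal.tsum_comp_le_tsum_of_injective he G)
  rw [tsum_subtype S (fun x => G ((x i₀).1, fun i => (x i).2)), blockSum]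
  refine ENNReal.tsum_le_tsum fun x => ?_
  split_ifs with h
  swap
  · exact zero_le
  rw [Set.indicator_of_mem (show x ∈ S from h.1)]
  refine le_of_eq (Finset.prod_congr rfl fun i _ => ?_)
  rw [if_neg, wt, h.1 i i₀]
  rintro ⟨hc, hk⟩
  obtain ⟨j, hj, -⟩ := h.2 i hk
  exact hj (Fintype.card_le_one_iff.1 hc.le j i)

theorem inv_one_sub_le {r : ℝ≥0∞} (hr : r ≤ 2⁻¹) : (1 - r)⁻¹ ≤ 1 + 2 * r := by
  lift r to NNReal using ne_top_of_le_ne_top (by simp) hr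
  have hr' : r ≤ 2⁻¹ := by
    have : (r : ℝ≥0∞) ≤ ((2⁻¹ : NNReal) : ℝ≥0∞) := by simpa using hr
    exact_mod_cast this
  have h1 : (r : ℝ) ≤ 2⁻¹ := by exact_mod_cast hr'
  have h0 : (0 : ℝ) ≤ r := r.2
  have hr1 : r ≤ 1 := by rw [← NNReal.coe_le_coe]; push_cast; linarith
  have hpos : (1 - r) ≠ 0 := by
    rw [← NNReal.coe_ne_zero, NNReal.coe_sub hr1]; push_cast; linarith
  rw [← ENNReal.coe_one, ← ENNReal.coe_sub, ← ENNReal.coe_inv hpos]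
  have : (1 - r)⁻¹ ≤ 1 + 2 * r := by
    rw [← NNReal.coe_le_coe]
    push_cast [NNReal.coe_sub hr1]
    rw [inv_le_iff_one_le_mul₀ (by linarith)]
    nlinarith
  exact_mod_cast this

theorem inv_one_sub_le_two {r : ℝ≥0∞} (hr : r ≤ 2⁻¹) : (1 - r)⁻¹ ≤ 2 := by
  refine (inv_one_sub_le hr).trans ?_
  calc 1 + 2 * r ≤ 1 + 2 * 2⁻¹ := by gcongr
    _ = 2 := by rw [ENNReal.mul_inv_cancel (by simp) (by simp)]; norm_num

/-- The block estimate, with `v = q ^ (-1/2)`: a block of size `b` contributes `O(v ^ (b + 1))`,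
except that blocks of size two have the main term `v ^ 2`. -/
theorem blockSum_bound {Pr : Type} (t : Pr → ℝ≥0∞) (v : ℝ≥0∞) (hv : v ^ 2 ≤ 2⁻¹)
    (ht : ∀ P, t P ≤ 2⁻¹)
    (hS : ∀ b, ∑' P, t P ^ (b + 2) ≤ v ^ (2 * b + 2) * (1 - v ^ (2 * b + 2))⁻¹)
    (I : Type) [Fintype I] [Nonempty I] :
    blockSum t I ≤ (if Fintype.card I = 2 then 1 else 0) * v ^ Fintype.card I +
      ((14 + 2 ^ (Fintype.card I + 1) : ℕ) : ℝ≥0∞) * v ^ (Fintype.card I + 1) := by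
  have hv1 : v ≤ 1 := by
    by_contra h
    have h1 : (1 : ℝ≥0∞) ≤ v ^ 2 := one_le_pow₀ (not_le.1 h).le
    exact absurd (h1.trans hv) (by simp)
  have hr : ∀ b, v ^ (2 * b + 2) ≤ 2⁻¹ := fun b =>
    (pow_le_pow_right_of_le_one' hv1 (by omega)).trans hv
  have hS2 : ∀ b, ∑' P, t P ^ (b + 2) ≤ v ^ (2 * b + 2) * 2 := fun b =>
    (hS b).trans (by gcongr; exact inv_one_sub_le_two (hr b))
  refine (blockSum_le t I).trans ?_
  have hpos : 0 < Fintype.card I := Fintype.card_pos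
  generalize Fintype.card I = b at *
  rcases b with _ | _ | _ | b
  · omega
  · calc _ ≤ ∑' P, 2 * t P ^ 2 := by
          refine ENNReal.tsum_le_tsum fun P => ?_
          rw [zero_add, pow_one, tsum_eq_zero_add' ENNReal.summable]
          have h : ∀ k : ℕ, (if 1 = 1 ∧ k + 1 = 0 then 0 else t P ^ (k + 1 + 1)) =
              t P ^ 2 * t P ^ k := fun k => by rw [if_neg (by omega)]; ring
          rw [if_pos ⟨rfl, rfl⟩, zero_add, tsum_congr h, ENNReal.tsum_mul_left,
            ENNReal.tsum_geometric]
          rw [mul_comm]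
          gcongr
          exact inv_one_sub_le_two (ht P)
      _ ≤ 2 * (v ^ 2 * 2) := by
          rw [ENNReal.tsum_mul_left]; gcongr; simpa using hS2 0
      _ = 4 * v ^ 2 := by ring
      _ ≤ _ := by
          norm_num
          gcongr
          norm_num
  · calc _ ≤ ∑' P, (t P ^ 2 + 6 * t P ^ 3) := by
          refine ENNReal.tsum_le_tsum fun P => ?_
          simp only [show ¬ (0 + 1 + 1 = 1) by omega, false_and, if_false,
            ENNReal.tsum_geometric_add_one]
          calc (t P * (1 - t P)⁻¹) ^ 2 ≤ (t P * (1 + 2 * t P)) ^ 2 := by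
                gcongr; exact inv_one_sub_le (ht P)
            _ = t P ^ 2 + 4 * t P ^ 3 + 4 * t P ^ 3 * t P := by ring
            _ ≤ t P ^ 2 + 4 * t P ^ 3 + 4 * t P ^ 3 * 2⁻¹ := by gcongr; exact ht P
            _ = t P ^ 2 + 4 * t P ^ 3 + 2 * (2 * 2⁻¹) * t P ^ 3 := by ring
            _ = _ := by rw [ENNReal.mul_inv_cancel (by simp) (by simp)]; ring
      _ ≤ v ^ 2 * (1 + 2 * v ^ 2) + 6 * (v ^ 4 * 2) := by
          rw [ENNReal.tsum_add, ENNReal.tsum_mul_left]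
          gcongr
          · refine (hS 0).trans ?_
            simp only [mul_zero, zero_add]
            gcongr
            exact inv_one_sub_le hv
          · simpa using hS2 1
      _ = v ^ 2 + 14 * v ^ 4 := by ring
      _ ≤ v ^ 2 + 14 * v ^ 3 := by
          gcongr 1
          gcongr 1
          exact pow_le_pow_right_of_le_one' hv1 (by omega)
      _ ≤ _ := by
          norm_num
          gcongr
          norm_num
  · calc _ ≤ ∑' P, 2 ^ (b + 3) * t P ^ (b + 1 + 2) := by
          refine ENNReal.tsum_le_tsum fun P => ?_
          simp only [show ¬ (b + 1 + 1 + 1 = 1) by omega, false_and, if_false,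
            ENNReal.tsum_geometric_add_one]
          rw [show b + 1 + 2 = b + 3 by ring, ← mul_pow, mul_comm]
          gcongr
          exact inv_one_sub_le_two (ht P)
      _ ≤ 2 ^ (b + 3) * (v ^ (2 * (b + 1) + 2) * 2) := by
          rw [ENNReal.tsum_mul_left]; gcongr; exact hS2 (b + 1)
      _ = 2 ^ (b + 4) * v ^ (2 * (b + 1) + 2) := by ring
      _ ≤ 2 ^ (b + 4) * v ^ (b + 4) := by
          gcongr 1
          exact pow_le_pow_right_of_le_one' hv1 (by omega)
      _ ≤ _ := by
          rw [if_neg (by omega), zero_mul, zero_add]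
          push_cast
          gcongr
          exact le_add_self

/-- The number of perfect matchings of an `n`-element set. -/
def matchings : ℕ → ℕ
  | 0 => 1
  | 1 => 0
  | n + 2 => (n + 1) * matchings n

theorem card_pairs_le {I : Type} [Fintype I] [DecidableEq I] (i₀ : I) :
    (Finset.univ.filter fun B : Finset I => i₀ ∈ B ∧ B.card = 2).card ≤ Fintype.card I - 1 := by
  rw [← Finset.card_univ, ← Finset.card_erase_of_mem (Finset.mem_univ i₀)]
  refine le_trans (Finset.card_le_card ?_) (Finset.card_image_le (f := fun j => {i₀, j}))
  intro B hB
  simp only [Finset.mem_filter, Finset.mem_univ, true_and, Finset.card_eq_two] at hB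
  obtain ⟨h, a, b, hab, rfl⟩ := hB
  simp only [Finset.mem_insert, Finset.mem_singleton] at h
  rcases h with rfl | rfl
  · exact Finset.mem_image.2 ⟨b, by simp [hab.symm], rfl⟩
  · exact Finset.mem_image.2 ⟨a, by simp [hab], Finset.pair_comm _ _⟩

/-- The upper bound: by induction on the number of indices, splitting off the block of one of
them, only perfect matchings contribute to the leading order. -/
theorem tupleSum_bound (n : ℕ) : ∃ D : ℕ, ∀ (Pr : Type) (t : Pr → ℝ≥0∞) (v : ℝ≥0∞),
    v ^ 2 ≤ 2⁻¹ → (∀ P, t P ≤ 2⁻¹) →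
    (∀ b, ∑' P, t P ^ (b + 2) ≤ v ^ (2 * b + 2) * (1 - v ^ (2 * b + 2))⁻¹) →
    ∀ (I : Type) [Fintype I], Fintype.card I = n →
      tupleSum t I ≤ matchings n * v ^ n + D * v ^ (n + 1) := by
  induction n using Nat.strong_induction_on with
  | _ n ih =>
  rcases n with _ | n
  · refine ⟨0, fun Pr t v _ _ _ I _ hI => ?_⟩
    have := Fintype.card_eq_zero_iff.1 hI
    simp [tupleSum_of_isEmpty, matchings]
  choose! D hD using ih
  let M : ℕ := ∑ m ∈ Finset.range (n + 1), (D m + matchings m)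
  let K : ℕ := 14 + 2 ^ (n + 2)
  have hDM : ∀ m < n + 1, D m + matchings m ≤ M := fun m hm =>
    Finset.single_le_sum (f := fun m => D m + matchings m) (fun _ _ => Nat.zero_le _)
      (Finset.mem_range.2 hm)
  refine ⟨2 ^ (n + 1) * (M + K * M), fun Pr t v hv ht hS I _ hI => ?_⟩
  classical
  have hv1 : v ≤ 1 := by
    by_contra h
    have h1 : (1 : ℝ≥0∞) ≤ v ^ 2 := one_le_pow₀ (not_le.1 h).le
    exact absurd (h1.trans hv) (by simp)
  have : Nonempty I := Fintype.card_pos_iff.1 (by omega)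
  obtain ⟨i₀⟩ := this
  have hterm : ∀ B ∈ Finset.univ.filter (fun B : Finset I => i₀ ∈ B),
      blockSum t {i // i ∈ B} * tupleSum t {i // ¬ i ∈ B} ≤
        (if B.card = 2 then (matchings (n - 1) : ℝ≥0∞) * v ^ (n + 1) else 0) +
          ((M + K * M : ℕ) : ℝ≥0∞) * v ^ (n + 2) := by
    intro B hB
    simp only [Finset.mem_filter, Finset.mem_univ, true_and] at hB
    have : Nonempty {i // i ∈ B} := ⟨⟨i₀, hB⟩⟩
    have hb0 : 0 < B.card := Finset.card_pos.2 ⟨i₀, hB⟩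
    have hbn : B.card ≤ n + 1 := hI ▸ Finset.card_le_univ B
    have h1 := blockSum_bound t v hv ht hS {i // i ∈ B}
    have h2 := hD (n + 1 - B.card) (by omega) Pr t v hv ht hS {i // ¬ i ∈ B} (by
      rw [Fintype.card_subtype_compl, hI, Fintype.card_coe])
    rw [Fintype.card_coe] at h1
    have hM := hDM (n + 1 - B.card) (by omega)
    obtain ⟨c, hc⟩ : ∃ c, n + 1 = B.card + c := ⟨n + 1 - B.card, by omega⟩
    rw [show n + 1 - B.card = c by omega] at h2 hM
    have hK : 14 + 2 ^ (B.card + 1) ≤ K := by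
      have : 2 ^ (B.card + 1) ≤ 2 ^ (n + 2) := Nat.pow_le_pow_right (by norm_num) (by omega)
      omega
    have hmain : (if B.card = 2 then (1 : ℝ≥0∞) else 0) * v ^ B.card * (matchings c * v ^ c) ≤
        if B.card = 2 then (matchings (n - 1) : ℝ≥0∞) * v ^ (n + 1) else 0 := by
      split_ifs with h
      · rw [show n - 1 = c by omega, hc, pow_add]
        exact le_of_eq (by ring)
      · simp
    have hone : (if B.card = 2 then (1 : ℝ≥0∞) else 0) ≤ 1 := by split_ifs <;> simp
    calc _ ≤ ((if B.card = 2 then 1 else 0) * v ^ B.card +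
          ((14 + 2 ^ (B.card + 1) : ℕ) : ℝ≥0∞) * v ^ (B.card + 1)) *
          (matchings c * v ^ c + D c * v ^ (c + 1)) := mul_le_mul' h1 h2
      _ ≤ ((if B.card = 2 then 1 else 0) * v ^ B.card + (K : ℝ≥0∞) * v ^ (B.card + 1)) *
          (matchings c * v ^ c + D c * v ^ (c + 1)) := by gcongr
      _ = (if B.card = 2 then (1 : ℝ≥0∞) else 0) * v ^ B.card * (matchings c * v ^ c) +
          ((if B.card = 2 then (1 : ℝ≥0∞) else 0) * (D c * v ^ (n + 2)) +
            K * (matchings c * v ^ (n + 2) + D c * (v ^ (n + 2) * v))) := by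
          rw [show n + 2 = B.card + c + 1 by omega]; ring
      _ ≤ (if B.card = 2 then (matchings (n - 1) : ℝ≥0∞) * v ^ (n + 1) else 0) +
          (1 * (M * v ^ (n + 2)) +
            K * (matchings c * v ^ (n + 2) + D c * (v ^ (n + 2) * 1))) := by
          gcongr
          omega
      _ = (if B.card = 2 then (matchings (n - 1) : ℝ≥0∞) * v ^ (n + 1) else 0) +
          (M * v ^ (n + 2) + K * ((D c + matchings c : ℕ) * v ^ (n + 2))) := by
          push_cast; ring
      _ ≤ (if B.card = 2 then (matchings (n - 1) : ℝ≥0∞) * v ^ (n + 1) else 0) +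
          (M * v ^ (n + 2) + K * (M * v ^ (n + 2))) := by gcongr
      _ = _ := by push_cast; ring
  refine (tupleSum_le t I i₀).trans ((Finset.sum_le_sum hterm).trans ?_)
  rw [Finset.sum_add_distrib, ← Finset.sum_filter, Finset.filter_filter, Finset.sum_const,
    Finset.sum_const, nsmul_eq_mul, nsmul_eq_mul]
  have hcard := card_pairs_le i₀
  rw [hI] at hcard
  have hcard2 : (Finset.univ.filter fun B : Finset I => i₀ ∈ B).card ≤ 2 ^ (n + 1) := by
    refine (Finset.card_le_univ _).trans ?_
    rw [Fintype.card_finset, hI]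
  have hmat : (Finset.univ.filter fun B : Finset I => i₀ ∈ B ∧ B.card = 2).card *
      matchings (n - 1) ≤ matchings (n + 1) := by
    rcases n with _ | n
    · have : (Finset.univ.filter fun B : Finset I => i₀ ∈ B ∧ B.card = 2).card = 0 := by omega
      simp [this]
    · exact Nat.mul_le_mul_right _ hcard
  rw [← mul_assoc, ← mul_assoc, ← Nat.cast_mul, ← Nat.cast_mul]
  gcongr

end HfunAux

namespace HfunAux

/-! ### From polynomials to prime powers -/

section Upper

variable {Fq : Type} [Field Fq]

theorem vonMangoldt_nonneg (f : Fq[X]) : 0 ≤ vonMangoldt f := by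
  unfold vonMangoldt
  split_ifs <;> positivity

theorem vonMangoldt_le (f : Fq[X]) : vonMangoldt f ≤ f.natDegree := by
  unfold vonMangoldt
  split_ifs with h
  · obtain ⟨k, _, _, hk, hf⟩ := h.choose_spec
    have h1 : f.natDegree = k * h.choose.natDegree := by
      conv_lhs => rw [hf]
      exact natDegree_pow _ _
    rw [h1]
    exact_mod_cast Nat.le_mul_of_pos_left _ hk
  · positivity

theorem exists_of_vonMangoldt_ne_zero {f : Fq[X]} (h : vonMangoldt f ≠ 0) :
    ∃ P : {P : Fq[X] // P.Monic ∧ Irreducible P}, ∃ k : ℕ, f = P.1 ^ (k + 1) := by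
  unfold vonMangoldt at h
  split_ifs at h with h'
  · obtain ⟨P, k, hm, hi, hk, hf⟩ := h'
    exact ⟨⟨P, hm, hi⟩, k - 1, by rw [Nat.sub_add_cancel hk, hf]⟩
  · exact absurd rfl h

theorem vonMangoldt_X_sub_C (a : Fq) : vonMangoldt (X - C a) = 1 := by
  have h : ∃ P : Polynomial Fq, ∃ k : ℕ, P.Monic ∧ Irreducible P ∧ 1 ≤ k ∧ X - C a = P ^ k :=
    ⟨X - C a, 1, monic_X_sub_C a, irreducible_X_sub_C a, le_rfl, (pow_one _).symm⟩
  unfold vonMangoldt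
  rw [dif_pos h]
  obtain ⟨k, _, _, hk, hf⟩ := h.choose_spec
  have h1 := congrArg natDegree hf
  rw [natDegree_X_sub_C, natDegree_pow] at h1
  exact_mod_cast Nat.eq_one_of_mul_eq_one_left h1.symm

/-- A prime occurring in a square product occurs at least twice. -/
theorem squareful_of_isSquare {s : ℕ}
    (x : Fin s → {P : Fq[X] // P.Monic ∧ Irreducible P} × ℕ)
    (h : IsSquare (∏ i, (x i).1.1 ^ ((x i).2 + 1))) : Squareful x := by
  classical
  intro i hi
  obtain ⟨c, hc⟩ := h
  have hP : Prime (x i).1.1 := (x i).1.2.2.prime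
  rw [← Finset.mul_prod_erase _ _ (Finset.mem_univ i), hi, zero_add, pow_one] at hc
  have hdvd : (x i).1.1 ∣ c := by
    have : (x i).1.1 ∣ c * c := hc ▸ dvd_mul_right _ _
    exact (hP.dvd_or_dvd this).elim id id
  obtain ⟨e, rfl⟩ := hdvd
  have h2 : (x i).1.1 ∣ ∏ j ∈ Finset.univ.erase i, (x j).1.1 ^ ((x j).2 + 1) := by
    refine ⟨e * e, mul_left_cancel₀ hP.ne_zero ?_⟩
    rw [hc]; ring
  obtain ⟨j, hj, hj'⟩ := (hP.dvd_finsetProd_iff _).1 h2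
  refine ⟨j, (Finset.mem_erase.1 hj).1, Subtype.ext ?_⟩
  have hd := hP.dvd_of_dvd_pow hj'
  exact (eq_of_monic_of_associated (x i).1.2.1 (x j).1.2.1
    ((x i).1.2.2.associated_of_dvd (x j).1.2.2 hd)).symm

variable [Fintype Fq]

/-- The summand in the definition of `Hfun`. -/
noncomputable def summand {s : ℕ} (f : Fin s → Fq[X]) : ℝ :=
  (∏ i, vonMangoldt (f i) * ((Fintype.card Fq : ℝ) ^ (f i).natDegree)⁻¹ /
      ((f i).natDegree : ℝ)) *
    ∏ᶠ P ∈ {P : Polynomial Fq | P.Monic ∧ Irreducible P ∧ P ∣ ∏ i, f i},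
      (1 + ((Fintype.card Fq : ℝ) ^ P.natDegree)⁻¹)⁻¹

theorem finprod_nonneg_and_le_one (S : Set Fq[X]) :
    0 ≤ ∏ᶠ P ∈ S, (1 + ((Fintype.card Fq : ℝ) ^ P.natDegree)⁻¹)⁻¹ ∧
    ∏ᶠ P ∈ S, (1 + ((Fintype.card Fq : ℝ) ^ P.natDegree)⁻¹)⁻¹ ≤ 1 := by
  have hle : ∀ P : Fq[X], 0 ≤ (1 + ((Fintype.card Fq : ℝ) ^ P.natDegree)⁻¹)⁻¹ ∧
      (1 + ((Fintype.card Fq : ℝ) ^ P.natDegree)⁻¹)⁻¹ ≤ 1 := fun P =>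
    ⟨by positivity, inv_le_one_of_one_le₀ (by simp)⟩
  have key : ∀ x y : ℝ, (0 ≤ x ∧ x ≤ 1) → (0 ≤ y ∧ y ≤ 1) → (0 ≤ x * y ∧ x * y ≤ 1) :=
    fun x y hx hy => ⟨mul_nonneg hx.1 hy.1, mul_le_one₀ hx.2 hy.1 hy.2⟩
  refine finprod_induction (fun x : ℝ => 0 ≤ x ∧ x ≤ 1) (by norm_num) key fun P => ?_
  exact finprod_induction (fun x : ℝ => 0 ≤ x ∧ x ≤ 1) (by norm_num) key fun _ => hle P

theorem factor_nonneg (f : Fq[X]) :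
    0 ≤ vonMangoldt f * ((Fintype.card Fq : ℝ) ^ f.natDegree)⁻¹ / (f.natDegree : ℝ) := by
  have := vonMangoldt_nonneg f
  positivity

theorem summand_nonneg {s : ℕ} (f : Fin s → Fq[X]) : 0 ≤ summand f :=
  mul_nonneg (Finset.prod_nonneg fun _ _ => factor_nonneg _) (finprod_nonneg_and_le_one _).1

theorem summand_le {s : ℕ} (f : Fin s → Fq[X]) :
    summand f ≤ ∏ i, ((Fintype.card Fq : ℝ) ^ (f i).natDegree)⁻¹ := by
  refine le_trans (mul_le_of_le_one_right (Finset.prod_nonneg fun _ _ => factor_nonneg _)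
    (finprod_nonneg_and_le_one _).2) ?_
  refine Finset.prod_le_prod (fun _ _ => factor_nonneg _) fun i _ => ?_
  rw [mul_div_right_comm]
  refine mul_le_of_le_one_left (by positivity) ?_
  exact div_le_one_of_le₀ (vonMangoldt_le _) (by positivity)

/-- The inverse norm `|P|⁻¹ = q ^ (-deg P)` of a monic irreducible polynomial. -/
noncomputable def invNorm (P : {P : Fq[X] // P.Monic ∧ Irreducible P}) : ℝ≥0∞ :=
  (Fintype.card Fq : ℝ≥0∞)⁻¹ ^ P.1.natDegree

theorem card_ge_two : 2 ≤ Fintype.card Fq := Fintype.one_lt_card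

theorem inv_card_le : (Fintype.card Fq : ℝ≥0∞)⁻¹ ≤ 2⁻¹ := by
  rw [ENNReal.inv_le_inv]
  exact_mod_cast card_ge_two (Fq := Fq)

theorem invNorm_le (P : {P : Fq[X] // P.Monic ∧ Irreducible P}) : invNorm P ≤ 2⁻¹ := by
  have h1 : (Fintype.card Fq : ℝ≥0∞)⁻¹ ≤ 1 := inv_card_le.trans (by simp)
  refine le_trans ?_ (inv_card_le (Fq := Fq))
  calc invNorm P ≤ (Fintype.card Fq : ℝ≥0∞)⁻¹ ^ 1 :=
        pow_le_pow_right_of_le_one' h1 P.2.2.natDegree_pos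
    _ = _ := pow_one _

/-- Bounding the number of primes of degree `d` by the number `q ^ d` of monic polynomials. -/
theorem tsum_invNorm_le (b : ℕ) :
    ∑' P : {P : Fq[X] // P.Monic ∧ Irreducible P}, invNorm P ^ (b + 2) ≤
      (Fintype.card Fq : ℝ≥0∞)⁻¹ ^ (b + 1) * (1 - (Fintype.card Fq : ℝ≥0∞)⁻¹ ^ (b + 1))⁻¹ := by
  let e : {P : Fq[X] // P.Monic ∧ Irreducible P} → Σ d : ℕ, (Fin (d + 1) → Fq) :=
    fun P => ⟨P.1.natDegree - 1, fun i => P.1.coeff i⟩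
  let p : (Σ d : ℕ, (Fin (d + 1) → Fq)) → Fq[X] := fun a =>
    X ^ (a.1 + 1) + ∑ i : Fin (a.1 + 1), C (a.2 i) * X ^ (i : ℕ)
  have hd : ∀ P : {P : Fq[X] // P.Monic ∧ Irreducible P},
      P.1.natDegree - 1 + 1 = P.1.natDegree := fun P =>
    Nat.sub_add_cancel P.2.2.natDegree_pos
  have hpe : ∀ P, p (e P) = P.1 := by
    intro P
    simp only [p, e]
    rw [← Finset.sum_range (fun i => C (P.1.coeff i) * X ^ i), hd P]
    exact P.2.1.as_sum.symm
  have he : Function.Injective e := fun P Q h => Subtype.ext (by rw [← hpe, ← hpe, h])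
  set u : ℝ≥0∞ := (Fintype.card Fq : ℝ≥0∞)⁻¹ with hu
  have hq0 : (Fintype.card Fq : ℝ≥0∞) ≠ 0 := by
    have := card_ge_two (Fq := Fq)
    exact_mod_cast (by omega : Fintype.card Fq ≠ 0)
  have hqu : (Fintype.card Fq : ℝ≥0∞) * u = 1 :=
    ENNReal.mul_inv_cancel hq0 (ENNReal.natCast_ne_top _)
  calc _ = ∑' P, (fun a : Σ d : ℕ, (Fin (d + 1) → Fq) => (u ^ (a.1 + 1)) ^ (b + 2)) (e P) := by
        refine tsum_congr fun P => ?_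
        simp only [e, hd, invNorm, hu]
    _ ≤ ∑' a : Σ d : ℕ, (Fin (d + 1) → Fq), (u ^ (a.1 + 1)) ^ (b + 2) :=
        ENNReal.tsum_comp_le_tsum_of_injective he _
    _ = ∑' d : ℕ, (u ^ (b + 1)) ^ (d + 1) := by
        rw [ENNReal.tsum_sigma']
        refine tsum_congr fun d => ?_
        dsimp only
        rw [tsum_fintype, Finset.sum_const, Finset.card_univ, Fintype.card_fun, Fintype.card_fin,
          nsmul_eq_mul, Nat.cast_pow]
        calc (Fintype.card Fq : ℝ≥0∞) ^ (d + 1) * (u ^ (d + 1)) ^ (b + 2)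
            = (Fintype.card Fq * u) ^ (d + 1) * (u ^ (b + 1)) ^ (d + 1) := by
              rw [mul_pow]; ring
          _ = _ := by rw [hqu, one_pow, one_mul]
    _ = _ := ENNReal.tsum_geometric_add_one _

/-- Only tuples of prime powers have a nonzero summand, and it is at most the product of their
inverse norms. -/
theorem tsum_summand_le (s : ℕ) :
    ∑' f : {f : Fin s → Polynomial Fq //
      (∀ i, (f i).Monic ∧ 0 < (f i).natDegree) ∧ IsSquare (∏ i, f i)}, ENNReal.ofReal (summand f.1)
      ≤ tupleSum (invNorm (Fq := Fq)) (Fin s) := by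
  classical
  set F : {f : Fin s → Polynomial Fq //
      (∀ i, (f i).Monic ∧ 0 < (f i).natDegree) ∧ IsSquare (∏ i, f i)} → ℝ≥0∞ :=
    fun f => ENNReal.ofReal (summand f.1) with hF
  have hex : ∀ f : Function.support F, ∀ i, ∃ y : {P : Fq[X] // P.Monic ∧ Irreducible P} × ℕ,
      f.1.1 i = y.1.1 ^ (y.2 + 1) := by
    intro f i
    have h0 : summand f.1.1 ≠ 0 := fun h => f.2 (by simp [hF, h])
    have h1 := Finset.prod_ne_zero_iff.1 (left_ne_zero_of_mul h0) i (Finset.mem_univ i)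
    obtain ⟨P, k, h⟩ := exists_of_vonMangoldt_ne_zero (f := f.1.1 i)
      (fun h => h1 (by simp [h]))
    exact ⟨(P, k), h⟩
  choose e he using hex
  have hinj : Function.Injective e := by
    intro f g h
    refine Subtype.ext (Subtype.ext (funext fun i => ?_))
    rw [he, he, h]
  rw [← tsum_subtype_support, tupleSum]
  refine le_trans (ENNReal.tsum_le_tsum fun f => ?_)
    (ENNReal.tsum_comp_le_tsum_of_injective hinj _)
  rw [if_pos]
  · refine (ENNReal.ofReal_le_ofReal (summand_le f.1.1)).trans (le_of_eq ?_)
    rw [ENNReal.ofReal_prod_of_nonneg (fun _ _ => by positivity)]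
    refine Finset.prod_congr rfl fun i _ => ?_
    have hq : (0 : ℝ) < Fintype.card Fq := by exact_mod_cast Fintype.card_pos
    rw [wt, invNorm, ← pow_mul, he f i, natDegree_pow, ENNReal.ofReal_inv_of_pos (by positivity),
      ENNReal.ofReal_pow hq.le, ENNReal.ofReal_natCast, ENNReal.inv_pow, mul_comm]
  · apply squareful_of_isSquare
    simp only [← he]
    exact f.1.2.2

theorem tupleSum_finite_bound (s : ℕ) : ∃ D : ℕ, ∀ (Fq : Type) [Field Fq] [Fintype Fq],
    tupleSum (invNorm (Fq := Fq)) (Fin s) ≤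
      ENNReal.ofReal (matchings s * (Fintype.card Fq : ℝ) ^ (-(s : ℝ) / 2) +
        D * (Fintype.card Fq : ℝ) ^ (-((s : ℝ) + 1) / 2)) := by
  obtain ⟨D, hD⟩ := tupleSum_bound s
  refine ⟨D, fun Fq _ _ => ?_⟩
  have hq : (0 : ℝ) < Fintype.card Fq := by exact_mod_cast Fintype.card_pos
  set x : ℝ := (Fintype.card Fq : ℝ) ^ (-1 / 2 : ℝ) with hx
  have hx0 : 0 ≤ x := by positivity
  have hpow : ∀ n : ℕ, x ^ n = (Fintype.card Fq : ℝ) ^ (-(n : ℝ) / 2) := fun n => by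
    rw [hx, ← Real.rpow_natCast, ← Real.rpow_mul hq.le]
    congr 1; ring
  have hv : ENNReal.ofReal x ^ 2 = (Fintype.card Fq : ℝ≥0∞)⁻¹ := by
    rw [← ENNReal.ofReal_pow hx0, hpow]
    norm_num
    rw [Real.rpow_neg_one, ENNReal.ofReal_inv_of_pos hq, ENNReal.ofReal_natCast]
  have h := hD _ (invNorm (Fq := Fq)) (ENNReal.ofReal x) (hv ▸ inv_card_le) invNorm_le (fun b => by
    rw [show 2 * b + 2 = 2 * (b + 1) by ring, pow_mul, hv]
    exact tsum_invNorm_le b) (Fin s) (Fintype.card_fin s)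
  refine h.trans (le_of_eq ?_)
  rw [show -((s : ℝ) + 1) / 2 = -((s + 1 : ℕ) : ℝ) / 2 by push_cast; rfl, ← hpow, ← hpow,
    ENNReal.ofReal_add (by positivity) (by positivity), ENNReal.ofReal_mul (by positivity),
    ENNReal.ofReal_mul (by positivity), ENNReal.ofReal_natCast, ENNReal.ofReal_natCast,
    ENNReal.ofReal_pow hx0, ENNReal.ofReal_pow hx0]

theorem summable_summand (s : ℕ) :
    Summable fun f : {f : Fin s → Polynomial Fq //
      (∀ i, (f i).Monic ∧ 0 < (f i).natDegree) ∧ IsSquare (∏ i, f i)} => summand f.1 := by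
  obtain ⟨D, hD⟩ := tupleSum_finite_bound s
  have h := ENNReal.summable_toReal (ne_top_of_le_ne_top ENNReal.ofReal_ne_top
    ((tsum_summand_le (Fq := Fq) s).trans (hD Fq)))
  simpa only [ENNReal.toReal_ofReal (summand_nonneg _)] using h

theorem Hfun_eq (s : ℕ) :
    Hfun Fq s = ∑' f : {f : Fin s → Polynomial Fq //
      (∀ i, (f i).Monic ∧ 0 < (f i).natDegree) ∧ IsSquare (∏ i, f i)}, summand f.1 := rfl

end Upper

theorem Hfun_upper (s : ℕ) : ∃ D : ℕ, ∀ (Fq : Type) [Field Fq] [Fintype Fq],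
    Hfun Fq s ≤ matchings s * (Fintype.card Fq : ℝ) ^ (-(s : ℝ) / 2) +
        D * (Fintype.card Fq : ℝ) ^ (-((s : ℝ) + 1) / 2) := by
  obtain ⟨D, hD⟩ := tupleSum_finite_bound s
  refine ⟨D, fun Fq _ _ => ?_⟩
  rw [Hfun_eq, ← ENNReal.ofReal_le_ofReal_iff (by positivity),
    ENNReal.ofReal_tsum_of_nonneg (fun _ => summand_nonneg _) (summable_summand s)]
  exact (tsum_summand_le s).trans (hD Fq)

/-! ### The lower bound from products of linear polynomials -/

open Classical in
/-- Tuples of field elements for which the product of the linear polynomials `X - a` is a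
square. -/
noncomputable def linearTuples (Fq : Type) [Field Fq] [Fintype Fq] (n : ℕ) :
    Finset (Fin n → Fq) :=
  Finset.univ.filter fun g => IsSquare (∏ i, (X - C (g i)))

/-- A good tuple of length `n`, a new value `a` and a position `j` give a good tuple of length
`n + 2`: put `a` in front and insert it once more at `j`. Since `a` is new, all three can be read
off from the result. -/
theorem card_linearTuples_step (Fq : Type) [Field Fq] [Fintype Fq] (n : ℕ) :
    ((n : ℝ) + 1) * ((Fintype.card Fq : ℝ) - n) * (linearTuples Fq n).card ≤
      (linearTuples Fq (n + 2)).card := by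
  classical
  let A : Finset (Σ _ : Fin n → Fq, Fin (n + 1) × Fq) :=
    (linearTuples Fq n).sigma fun g => Finset.univ ×ˢ (Finset.univ \ Finset.univ.image g)
  let φ : (Σ _ : Fin n → Fq, Fin (n + 1) × Fq) → (Fin (n + 2) → Fq) := fun y =>
    Fin.cons y.2.2 (Fin.insertNth (α := fun _ => Fq) y.2.1 y.2.2 y.1 : Fin (n + 1) → Fq)
  have hle : A.card ≤ (linearTuples Fq (n + 2)).card := by
    refine Finset.card_le_card_of_injOn φ ?_ ?_
    · rintro ⟨g, j, a⟩ h
      simp only [A, Finset.coe_sigma, Set.mem_sigma_iff, Finset.mem_coe, linearTuples,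
        Finset.mem_filter, Finset.mem_univ, true_and] at h ⊢
      obtain ⟨c, hc⟩ := h.1
      refine ⟨(X - C a) * c, ?_⟩
      rw [Fin.prod_univ_succ, Fin.prod_univ_succAbove _ j]
      simp only [φ, Fin.cons_zero, Fin.cons_succ, Fin.insertNth_apply_same,
        Fin.insertNth_apply_succAbove]
      rw [hc]; ring
    · rintro ⟨g, j, a⟩ h ⟨g', j', a'⟩ h' heq
      simp only [A, Finset.coe_sigma, Set.mem_sigma_iff, Finset.mem_coe, Finset.mem_product,
        Finset.mem_sdiff, Finset.mem_image, Finset.mem_univ, true_and, not_exists] at h h'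
      obtain ⟨rfl, h2⟩ := (Fin.cons_inj (α := fun _ => Fq)).1 heq
      dsimp only at h2
      have hj : j = j' := by
        by_contra hne
        obtain ⟨i, hi⟩ := Fin.exists_succAbove_eq hne
        have h3 := congrFun h2 j
        rw [Fin.insertNth_apply_same, ← hi, Fin.insertNth_apply_succAbove] at h3
        exact h'.2 i h3.symm
      subst hj
      have h4 : g = g' := funext fun i => by
        have h3 := congrFun h2 (j.succAbove i)
        rwa [Fin.insertNth_apply_succAbove, Fin.insertNth_apply_succAbove] at h3
      rw [h4]
  refine le_trans ?_ (Nat.cast_le.2 hle)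
  rw [Finset.card_sigma, Nat.cast_sum, mul_comm _ ((linearTuples Fq n).card : ℝ), ← nsmul_eq_mul,
    ← Finset.sum_const]
  refine Finset.sum_le_sum fun g _ => ?_
  rw [Finset.card_product, Finset.card_univ, Fintype.card_fin, Nat.cast_mul, Nat.cast_add,
    Nat.cast_one]
  refine mul_le_mul_of_nonneg_left ?_ (by positivity)
  have h1 : (Finset.univ.image g).card ≤ n := by
    simpa using Finset.card_image_le (s := Finset.univ) (f := g)
  rw [Finset.cast_card_sdiff (Finset.subset_univ _), Finset.card_univ]
  have h2 : ((Finset.univ.image g).card : ℝ) ≤ n := by exact_mod_cast h1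
  linarith

/-- The error term is written with the factor `q ^ m * q⁻¹` rather than `q ^ (m - 1)` to include
`m = 0`. -/
theorem card_linearTuples_ge (m : ℕ) : ∃ C : ℝ, 0 ≤ C ∧ ∀ (Fq : Type) [Field Fq] [Fintype Fq],
    (matchings (2 * m) : ℝ) * (Fintype.card Fq : ℝ) ^ m -
      C * ((Fintype.card Fq : ℝ) ^ m * (Fintype.card Fq : ℝ)⁻¹) ≤
      (linearTuples Fq (2 * m)).card := by
  induction m with
  | zero =>
    refine ⟨0, le_rfl, fun Fq _ _ => ?_⟩
    simp [linearTuples, matchings]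
  | succ m ih =>
    obtain ⟨C, hC, h⟩ := ih
    refine ⟨(2 * m + 1) * (C + 2 * m * matchings (2 * m)), by positivity, fun Fq _ _ => ?_⟩
    have h := h Fq
    have hs := card_linearTuples_step Fq (2 * m)
    have hq : (0 : ℝ) < Fintype.card Fq := by exact_mod_cast Fintype.card_pos
    rw [show 2 * (m + 1) = 2 * m + 2 by ring,
      show matchings (2 * m + 2) = (2 * m + 1) * matchings (2 * m) from rfl]
    push_cast at hs ⊢
    set q : ℝ := (Fintype.card Fq : ℝ)
    set a : ℝ := (matchings (2 * m) : ℝ)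
    have ha : 0 ≤ a := Nat.cast_nonneg _
    have hqq : q ^ (m + 1) * q⁻¹ = q ^ m := by rw [pow_succ, mul_inv_cancel_right₀ hq.ne']
    rw [hqq]
    by_cases hc : 2 * (m : ℝ) ≤ q
    · refine le_trans ?_ hs
      have h1 := mul_le_mul_of_nonneg_left h
        (show 0 ≤ (2 * (m : ℝ) + 1) * (q - 2 * m) from mul_nonneg (by positivity) (by linarith))
      refine le_trans ?_ h1
      have h2 : 0 ≤ (2 * (m : ℝ) + 1) * (2 * m * (C * (q ^ m * q⁻¹))) := by positivity
      have h3 : (2 * (m : ℝ) + 1) * (q - 2 * m) * (a * q ^ m - C * (q ^ m * q⁻¹)) =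
          (2 * m + 1) * a * q ^ (m + 1) - (2 * m + 1) * (C + 2 * m * a) * q ^ m +
          (2 * (m : ℝ) + 1) * (2 * m * (C * (q ^ m * q⁻¹))) := by
        field_simp
        ring
      linarith
    · refine le_trans ?_ (Nat.cast_nonneg _)
      have h1 : (2 * (m : ℝ) + 1) * a * q ^ m * q ≤ (2 * (m : ℝ) + 1) * a * q ^ m * (2 * m) :=
        mul_le_mul_of_nonneg_left (by linarith) (by positivity)
      have h2 : 0 ≤ (2 * (m : ℝ) + 1) * C * q ^ m := by positivity
      rw [pow_succ]
      linarith

/-- The primes dividing the product are among the `n` factors, each contributing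
`(1 + q⁻¹)⁻¹ ≥ 1 - q⁻¹`; conclude by Bernoulli's inequality. -/
theorem finprod_ge {Fq : Type} [Field Fq] [Fintype Fq] {n : ℕ} (g : Fin n → Fq) :
    1 - n * (Fintype.card Fq : ℝ)⁻¹ ≤
    ∏ᶠ P ∈ {P : Polynomial Fq | P.Monic ∧ Irreducible P ∧ P ∣ ∏ i, (X - C (g i))},
        (1 + ((Fintype.card Fq : ℝ) ^ P.natDegree)⁻¹)⁻¹ := by
  classical
  have hq : (2 : ℝ) ≤ Fintype.card Fq := by exact_mod_cast card_ge_two (Fq := Fq)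
  set q : ℝ := (Fintype.card Fq : ℝ)
  have hset : {P : Polynomial Fq | P.Monic ∧ Irreducible P ∧ P ∣ ∏ i, (X - C (g i))} =
      ((Finset.univ.image fun i => X - C (g i) : Finset Fq[X]) : Set Fq[X]) := by
    ext P
    simp only [Set.mem_ofPred_eq, Finset.coe_image, Finset.coe_univ, Set.image_univ, Set.mem_range]
    constructor
    · rintro ⟨hm, hi, hd⟩
      obtain ⟨i, -, hi'⟩ := (hi.prime.dvd_finsetProd_iff _).1 hd
      exact ⟨i, (eq_of_monic_of_associated hm (monic_X_sub_C _)
        (hi.associated_of_dvd (irreducible_X_sub_C _) hi')).symm⟩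
    · rintro ⟨i, rfl⟩
      exact ⟨monic_X_sub_C _, irreducible_X_sub_C _,
        Finset.dvd_prod_of_mem (fun i => X - C (g i)) (Finset.mem_univ i)⟩
  rw [hset, finprod_mem_coe_finset]
  have hcard : (Finset.univ.image fun i => X - C (g i) : Finset Fq[X]).card ≤ n := by
    simpa using Finset.card_image_le (s := Finset.univ) (f := fun i => X - C (g i))
  have hcongr : ∀ P ∈ (Finset.univ.image fun i => X - C (g i) : Finset Fq[X]),
      (1 + (q ^ P.natDegree)⁻¹)⁻¹ = (1 + q⁻¹)⁻¹ := by
    intro P hP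
    obtain ⟨i, -, rfl⟩ := Finset.mem_image.1 hP
    rw [natDegree_X_sub_C, pow_one]
  rw [Finset.prod_congr rfl hcongr, Finset.prod_const]
  have hu0 : 0 < q⁻¹ := by positivity
  have hu1 : q⁻¹ ≤ 2⁻¹ := inv_anti₀ (by norm_num) hq
  calc 1 - n * q⁻¹ = 1 + n * (-q⁻¹) := by ring
    _ ≤ (1 + -q⁻¹) ^ n := one_add_mul_le_pow (by linarith) n
    _ ≤ (1 + -q⁻¹) ^ (Finset.univ.image fun i => X - C (g i) : Finset Fq[X]).card :=
        pow_le_pow_of_le_one (by linarith) (by linarith) hcard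
    _ ≤ _ := by
        refine pow_le_pow_left₀ (by linarith) ?_ _
        rw [← one_div (1 + q⁻¹), le_div_iff₀ (by positivity)]
        nlinarith

theorem Hfun_nonneg (Fq : Type) [Field Fq] [Fintype Fq] (n : ℕ) : 0 ≤ Hfun Fq n := by
  rw [Hfun_eq]
  exact tsum_nonneg fun _ => summand_nonneg _

theorem Hfun_ge_card (Fq : Type) [Field Fq] [Fintype Fq] (n : ℕ) :
    (linearTuples Fq n).card *
      ((Fintype.card Fq : ℝ)⁻¹ ^ n * (1 - n * (Fintype.card Fq : ℝ)⁻¹)) ≤ Hfun Fq n := by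
  classical
  let e : {g // g ∈ linearTuples Fq n} → {f : Fin n → Polynomial Fq //
      (∀ i, (f i).Monic ∧ 0 < (f i).natDegree) ∧ IsSquare (∏ i, f i)} := fun g =>
    ⟨fun i => X - C (g.1 i), fun i => ⟨monic_X_sub_C _, by rw [natDegree_X_sub_C]; norm_num⟩,
      (Finset.mem_filter.1 g.2).2⟩
  have he : Function.Injective e := by
    intro g h hgh
    refine Subtype.ext (funext fun i => ?_)
    have h1 := congrFun (congrArg Subtype.val hgh) i
    simpa [e] using h1
  have h1 := tsum_comp_le_tsum_of_inj (summable_summand (Fq := Fq) n) (fun f => summand_nonneg f.1) he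
  rw [← Hfun_eq, tsum_fintype] at h1
  refine le_trans ?_ h1
  rw [← nsmul_eq_mul, ← Fintype.card_coe, ← Finset.card_univ, ← Finset.sum_const]
  refine Finset.sum_le_sum fun g _ => ?_
  simp only [Function.comp, e, summand, vonMangoldt_X_sub_C, natDegree_X_sub_C, pow_one, one_mul,
    Nat.cast_one, div_one, Finset.prod_const, Finset.card_univ, Fintype.card_fin]
  exact mul_le_mul_of_nonneg_left (finprod_ge g.1) (by positivity)

theorem Hfun_lower (m : ℕ) : ∃ C : ℝ, 0 ≤ C ∧ ∀ (Fq : Type) [Field Fq] [Fintype Fq],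
    (matchings (2 * m) : ℝ) * (Fintype.card Fq : ℝ)⁻¹ ^ m -
      C * (Fintype.card Fq : ℝ)⁻¹ ^ (m + 1) ≤ Hfun Fq (2 * m) := by
  obtain ⟨C, hC, h⟩ := card_linearTuples_ge m
  refine ⟨C + 2 * m * matchings (2 * m), by positivity, fun Fq _ _ => ?_⟩
  have h := h Fq
  have h1 := Hfun_ge_card Fq (2 * m)
  have h0 := Hfun_nonneg Fq (2 * m)
  have hq : (0 : ℝ) < Fintype.card Fq := by exact_mod_cast Fintype.card_pos
  push_cast at h1
  set q : ℝ := (Fintype.card Fq : ℝ)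
  set a : ℝ := (matchings (2 * m) : ℝ)
  have ha : 0 ≤ a := Nat.cast_nonneg _
  obtain ⟨y, hy⟩ : ∃ y, y = q⁻¹ := ⟨_, rfl⟩
  have hy0 : 0 < y := by rw [hy]; positivity
  have hqy : q * y = 1 := by rw [hy]; field_simp
  rw [← hy] at h h1 ⊢
  by_cases hc : 2 * (m : ℝ) * y ≤ 1
  · refine le_trans ?_ h1
    have h2 := mul_le_mul_of_nonneg_right h
      (show 0 ≤ y ^ (2 * m) * (1 - 2 * m * y) from mul_nonneg (by positivity) (by linarith))
    refine le_trans ?_ h2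
    have h3 : (a * q ^ m - C * (q ^ m * y)) * (y ^ (2 * m) * (1 - 2 * m * y)) =
        (q * y) ^ m * ((a * y ^ m - C * y ^ (m + 1)) * (1 - 2 * m * y)) := by
      rw [mul_pow]; ring
    rw [h3, hqy, one_pow, one_mul]
    have h4 : 0 ≤ 2 * m * C * y ^ (m + 2) := by positivity
    have h5 : (a * y ^ m - C * y ^ (m + 1)) * (1 - 2 * m * y) =
      a * y ^ m - (C + 2 * m * a) * y ^ (m + 1) + 2 * m * C * y ^ (m + 2) := by ring
    linarith
  · refine le_trans ?_ h0
    have h2 : a * y ^ m * 1 ≤ a * y ^ m * (2 * m * y) :=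
      mul_le_mul_of_nonneg_left (by linarith) (by positivity)
    have h3 : 0 ≤ C * y ^ (m + 1) := by positivity
    rw [pow_succ] at h3 ⊢
    linarith

theorem matchings_odd (m : ℕ) : matchings (2 * m + 1) = 0 := by
  induction m with
  | zero => rfl
  | succ m ih =>
    rw [show 2 * (m + 1) + 1 = 2 * m + 1 + 2 by ring, matchings, ih, mul_zero]

theorem matchings_even (m : ℕ) : matchings (2 * m) * (2 ^ m * m.factorial) = (2 * m).factorial := by
  induction m with
  | zero => rfl
  | succ m ih =>
    rw [show 2 * (m + 1) = 2 * m + 2 by ring, matchings, Nat.factorial_succ (2 * m + 1),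
      Nat.factorial_succ (2 * m), ← ih, Nat.factorial_succ m]
    ring

end HfunAux

open HfunAux in
/-- For every positive integer `s` there is a constant `C_s > 0` such that for every
prime power `q` (realized as the cardinality of a finite field `Fq`): if `s` is even then
`|H(s) - (s!/(2^(s/2) (s/2)!)) q^(-s/2)| ≤ C_s q^(-(s+1)/2)`, and if `s` is odd then
`H(s) ≤ C_s q^(-(s+1)/2)`. -/
theorem Hfun_asymptotic (s : ℕ) (hs : 1 ≤ s) :
    ∃ C : ℝ, 0 < C ∧
      ∀ (Fq : Type) [Field Fq] [Fintype Fq],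
        (Even s →
          |Hfun Fq s - (s.factorial : ℝ) / (2 ^ (s / 2) * ((s / 2).factorial : ℝ)) *
              (Fintype.card Fq : ℝ) ^ (-(s : ℝ) / 2)|
            ≤ C * (Fintype.card Fq : ℝ) ^ (-((s : ℝ) + 1) / 2)) ∧
        (Odd s →
          Hfun Fq s ≤ C * (Fintype.card Fq : ℝ) ^ (-((s : ℝ) + 1) / 2)) := by
  obtain ⟨D, hD⟩ := Hfun_upper s
  obtain ⟨C, hC, hL⟩ := Hfun_lower (s / 2)
  refine ⟨D + C + 1, by positivity, fun Fq _ _ => ⟨fun he => ?_, fun ho => ?_⟩⟩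
  · obtain ⟨m, hm⟩ := even_iff_two_dvd.1 he
    have hm2 : s / 2 = m := by omega
    have hU := hD Fq
    have hL := hL Fq
    rw [hm2] at hL ⊢
    have hq : (1 : ℝ) ≤ Fintype.card Fq := by exact_mod_cast Fintype.card_pos
    have hmat : (s.factorial : ℝ) / (2 ^ m * (m.factorial : ℝ)) = matchings s := by
      rw [div_eq_iff (by positivity), hm]
      exact_mod_cast (matchings_even m).symm
    have e1 : (Fintype.card Fq : ℝ)⁻¹ ^ m = (Fintype.card Fq : ℝ) ^ (-(s : ℝ) / 2) := by
      rw [hm, inv_pow, ← Real.rpow_natCast, ← Real.rpow_neg (by positivity)]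
      congr 1; push_cast; ring
    have e2 : (Fintype.card Fq : ℝ)⁻¹ ^ (m + 1) ≤
        (Fintype.card Fq : ℝ) ^ (-((s : ℝ) + 1) / 2) := by
      rw [hm, inv_pow, ← Real.rpow_natCast, ← Real.rpow_neg (by positivity)]
      refine Real.rpow_le_rpow_of_exponent_le hq ?_
      push_cast; linarith
    rw [← hm, e1] at hL
    rw [hmat]
    have hE : 0 ≤ (Fintype.card Fq : ℝ) ^ (-((s : ℝ) + 1) / 2) := by positivity
    have hD0 : 0 ≤ (D : ℝ) * (Fintype.card Fq : ℝ) ^ (-((s : ℝ) + 1) / 2) := by positivity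
    have hC1 := mul_le_mul_of_nonneg_left e2 hC
    have hC0 := mul_nonneg hC hE
    rw [abs_le]
    constructor <;> linarith
  · obtain ⟨m, hm⟩ := ho
    have hU := hD Fq
    rw [show (matchings s : ℝ) = 0 by rw [hm, matchings_odd]; simp, zero_mul, zero_add] at hU
    refine hU.trans (mul_le_mul_of_nonneg_right (by linarith) (by positivity))
end

section
/- For every prime power q and every integer λ ≥ 2, one has h(2 + λ) < h(2) · h(λ). -/
/-!
Write `t_l(P) = u_P^l + (-1)^l v_P^l`, where `0 < v_P < u_P`. For `l ≥ 2` one has the termwise bound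
`t_{2+l}(P) ≤ t_2(P) t_l(P)`, because the difference of the two sides is
`u_P² v_P² (u_P^{l-2} + (-1)^l v_P^{l-2}) ≥ 0` (`term_two_add_le`). Summing over `P` and using
`t_2(P) ≤ h(2)` gives `h(2+l) ≤ h(2) h(l)`. The inequality is strict because all `t_2(P)` are
positive and there are at least two monic irreducibles, so that `t_2(X) < h(2)`, while `t_l(X) > 0`
as `v_X < u_X`.

Convergence (`summable_term`) comes from `v_P ≤ u_P ≤ 2|P|⁻¹ ≤ 1`, which gives
`|t_l(P)| ≤ 8 |P|⁻²`, and from the crude count of at most `q^(d+1)` polynomials of degree `d`.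
-/

open Polynomial

/-- `h(λ) = ∑_P (u_P^λ + (-1)^λ v_P^λ)`, the sum over all monic irreducible
polynomials `P ∈ Fq[X]`. -/
noncomputable def hfun (Fq : Type) [Field Fq] [Fintype Fq] (l : ℕ) : ℝ :=
  ∑' P : {P : Polynomial Fq // P.Monic ∧ Irreducible P},
    (uP P.1 ^ l + (-1 : ℝ) ^ l * vP P.1 ^ l)

/-- Nonnegativity of `t_l(P)`, and of the last factor of `u² v² (u^k + (-1)^k v^k)`, the gap in
`term_two_add_le`. -/
lemma pow_add_neg_one_pow_mul_nonneg {u v : ℝ} (hv : 0 ≤ v) (huv : v ≤ u) (l : ℕ) :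
    0 ≤ u ^ l + (-1 : ℝ) ^ l * v ^ l := by
  have h1 : v ^ l ≤ u ^ l := pow_le_pow_left₀ hv huv l
  have h2 : 0 ≤ v ^ l := pow_nonneg hv l
  rcases neg_one_pow_eq_or ℝ l with h | h <;> rw [h] <;> linarith

lemma term_two_add_le {u v : ℝ} (hv : 0 ≤ v) (huv : v ≤ u) {l : ℕ} (hl : 2 ≤ l) :
    u ^ (2 + l) + (-1 : ℝ) ^ (2 + l) * v ^ (2 + l) ≤
      (u ^ 2 + (-1 : ℝ) ^ 2 * v ^ 2) * (u ^ l + (-1 : ℝ) ^ l * v ^ l) := by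
  obtain ⟨k, rfl⟩ := Nat.exists_eq_add_of_le hl
  have h := mul_nonneg (mul_nonneg (sq_nonneg u) (sq_nonneg v))
    (pow_add_neg_one_pow_mul_nonneg hv huv k)
  have e : (u ^ 2 + (-1 : ℝ) ^ 2 * v ^ 2) * (u ^ (2 + k) + (-1 : ℝ) ^ (2 + k) * v ^ (2 + k)) -
      (u ^ (2 + (2 + k)) + (-1 : ℝ) ^ (2 + (2 + k)) * v ^ (2 + (2 + k))) =
      u ^ 2 * v ^ 2 * (u ^ k + (-1 : ℝ) ^ k * v ^ k) := by
    simp only [pow_add]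
    ring
  linarith

section

variable {Fq : Type} [Field Fq] [Fintype Fq]

lemma inv_norm_bounds {P : Fq[X]} (hP : Irreducible P) :
    0 < ((Fintype.card Fq : ℝ) ^ P.natDegree)⁻¹ ∧
      ((Fintype.card Fq : ℝ) ^ P.natDegree)⁻¹ ≤ 1 / 2 := by
  have hq : (2 : ℝ) ≤ Fintype.card Fq := by exact_mod_cast Fintype.one_lt_card (α := Fq)
  have hd : P.natDegree ≠ 0 := hP.natDegree_pos.ne'
  have h2 : (2 : ℝ) ≤ (Fintype.card Fq : ℝ) ^ P.natDegree :=
    hq.trans (le_self_pow₀ (by linarith) hd)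
  refine ⟨by positivity, ?_⟩
  rw [one_div]
  exact inv_anti₀ (by norm_num) h2

lemma vP_pos {P : Fq[X]} (hP : Irreducible P) : 0 < vP P :=
  Real.log_pos (by linarith [(inv_norm_bounds hP).1])

lemma vP_lt_uP {P : Fq[X]} (hP : Irreducible P) : vP P < uP P := by
  obtain ⟨h0, h1⟩ := inv_norm_bounds hP
  unfold vP uP
  set x := ((Fintype.card Fq : ℝ) ^ P.natDegree)⁻¹
  rw [← Real.log_inv]
  apply Real.log_lt_log (by linarith)
  rw [lt_inv_comm₀ (by linarith) (by linarith), inv_eq_one_div, lt_div_iff₀ (by linarith)]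
  nlinarith

lemma uP_le {P : Fq[X]} (hP : Irreducible P) :
    uP P ≤ 2 * ((Fintype.card Fq : ℝ) ^ P.natDegree)⁻¹ := by
  obtain ⟨h0, h1⟩ := inv_norm_bounds hP
  unfold uP
  set x := ((Fintype.card Fq : ℝ) ^ P.natDegree)⁻¹
  have h := Real.one_sub_inv_le_log_of_pos (show 0 < 1 - x by linarith)
  have h' : (1 - x)⁻¹ ≤ 1 + 2 * x := by
    rw [inv_le_iff_one_le_mul₀ (by linarith)]
    nlinarith
  linarith

/-- `∑_P |P|⁻²` converges: degree `d` contributes at most `q^(d+1) q^(-2d) = q · q^(-d)`. -/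
lemma summable_inv_norm_sq :
    Summable fun P : {P : Fq[X] // P.Monic ∧ Irreducible P} =>
      (((Fintype.card Fq : ℝ) ^ P.1.natDegree)⁻¹) ^ 2 := by
  have hq : (1 : ℝ) < Fintype.card Fq := by exact_mod_cast Fintype.one_lt_card (α := Fq)
  let f : {P : Fq[X] // P.Monic ∧ Irreducible P} → ℕ := fun P => P.1.natDegree
  -- A polynomial of degree `d` is determined by its coefficients of index `0, …, d`.
  let c : ∀ d, {P // f P = d} → (Fin (d + 1) → Fq) := fun d P i => P.1.1.coeff i
  have hc : ∀ d, Function.Injective (c d) := by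
    intro d P Q h
    apply Subtype.ext
    apply Subtype.ext
    ext i
    by_cases hi : i < d + 1
    · exact congrFun h ⟨i, hi⟩
    · have hP : P.1.1.natDegree = d := P.2
      have hQ : Q.1.1.natDegree = d := Q.2
      rw [coeff_eq_zero_of_natDegree_lt (by omega), coeff_eq_zero_of_natDegree_lt (by omega)]
  have hfin : ∀ d, Finite {P // f P = d} := fun d => Finite.of_injective _ (hc d)
  have hcard : ∀ d, Nat.card {P // f P = d} ≤ Fintype.card Fq ^ (d + 1) := by
    intro d
    simpa using Nat.card_le_card_of_injective _ (hc d)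
  rw [← (Equiv.sigmaFiberEquiv f).summable_iff]
  refine (summable_sigma_of_nonneg fun _ => sq_nonneg _).mpr ?_
  have key : ∀ d (P : {P // f P = d}),
      ((fun P : {P : Fq[X] // P.Monic ∧ Irreducible P} =>
        (((Fintype.card Fq : ℝ) ^ P.1.natDegree)⁻¹) ^ 2) ∘ Equiv.sigmaFiberEquiv f) ⟨d, P⟩ =
      (((Fintype.card Fq : ℝ) ^ d)⁻¹) ^ 2 := by
    intro d P
    have hP : P.1.1.natDegree = d := P.2
    simp [Equiv.sigmaFiberEquiv, hP]
  refine ⟨fun d => Summable.of_finite, ?_⟩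
  have hgeo : Summable fun d : ℕ => (Fintype.card Fq : ℝ) * ((Fintype.card Fq : ℝ)⁻¹) ^ d :=
    (summable_geometric_of_lt_one (by positivity) (inv_lt_one_of_one_lt₀ hq)).mul_left _
  refine hgeo.of_nonneg_of_le (fun d => tsum_nonneg fun _ => sq_nonneg _) fun d => ?_
  refine (tsum_congr (key d)).trans_le ?_
  rw [tsum_const, nsmul_eq_mul]
  have h1 : (Nat.card {P // f P = d} : ℝ) ≤ (Fintype.card Fq : ℝ) ^ (d + 1) := by
    exact_mod_cast hcard d
  calc (Nat.card {P // f P = d} : ℝ) * (((Fintype.card Fq : ℝ) ^ d)⁻¹) ^ 2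
      ≤ (Fintype.card Fq : ℝ) ^ (d + 1) * (((Fintype.card Fq : ℝ) ^ d)⁻¹) ^ 2 := by gcongr
    _ = (Fintype.card Fq : ℝ) * ((Fintype.card Fq : ℝ)⁻¹) ^ d := by
      have : (Fintype.card Fq : ℝ) ≠ 0 := by positivity
      simp only [inv_pow]
      field_simp
      ring

lemma summable_term {l : ℕ} (hl : 2 ≤ l) :
    Summable fun P : {P : Fq[X] // P.Monic ∧ Irreducible P} =>
      (uP P.1 ^ l + (-1 : ℝ) ^ l * vP P.1 ^ l) := by
  refine (summable_inv_norm_sq.mul_left 8).of_nonneg_of_le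
    (fun P => pow_add_neg_one_pow_mul_nonneg (vP_pos P.2.2).le (vP_lt_uP P.2.2).le l) fun P => ?_
  obtain ⟨h0, h1⟩ := inv_norm_bounds P.2.2
  have hv := vP_pos P.2.2
  have huv := vP_lt_uP P.2.2
  have hu := uP_le P.2.2
  set x := ((Fintype.card Fq : ℝ) ^ P.1.natDegree)⁻¹
  have a : uP P.1 ^ l ≤ uP P.1 ^ 2 := pow_le_pow_of_le_one (by linarith) (by linarith) hl
  have b : uP P.1 ^ 2 ≤ (2 * x) ^ 2 := pow_le_pow_left₀ (by linarith) hu 2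
  have c : vP P.1 ^ l ≤ uP P.1 ^ l := pow_le_pow_left₀ hv.le huv.le l
  have d : 0 ≤ vP P.1 ^ l := by positivity
  rcases neg_one_pow_eq_or ℝ l with h | h <;> rw [h] <;> nlinarith

end

/-- For every prime power `q` (realized as the cardinality of a finite field `Fq`)
and every integer `λ ≥ 2`, one has `h(2 + λ) < h(2) h(λ)`. -/
theorem hfun_two_add_lt (Fq : Type) [Field Fq] [Fintype Fq] (l : ℕ) (hl : 2 ≤ l) :
    hfun Fq (2 + l) < hfun Fq 2 * hfun Fq l := by
  have hpos : ∀ k, k ≠ 0 → ∀ P : {P : Fq[X] // P.Monic ∧ Irreducible P},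
      0 < uP P.1 ^ k + (-1 : ℝ) ^ k * vP P.1 ^ k := by
    intro k hk P
    have h1 : vP P.1 ^ k < uP P.1 ^ k := pow_lt_pow_left₀ (vP_lt_uP P.2.2) (vP_pos P.2.2).le hk
    have h2 : 0 < vP P.1 ^ k := pow_pos (vP_pos P.2.2) k
    rcases neg_one_pow_eq_or ℝ k with h | h <;> rw [h] <;> linarith
  have hs2 := summable_term (Fq := Fq) (le_refl 2)
  let A : {P : Fq[X] // P.Monic ∧ Irreducible P} := ⟨X, monic_X, irreducible_X⟩
  let B : {P : Fq[X] // P.Monic ∧ Irreducible P} :=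
    ⟨X - C 1, monic_X_sub_C 1, irreducible_X_sub_C 1⟩
  have hAB : B ≠ A := by
    intro h
    have h' : (X - C 1 : Fq[X]) = X := congrArg Subtype.val h
    simpa using congrArg (eval 0) h'
  have hle : ∀ P : {P : Fq[X] // P.Monic ∧ Irreducible P},
      uP P.1 ^ 2 + (-1 : ℝ) ^ 2 * vP P.1 ^ 2 ≤ hfun Fq 2 := fun P =>
    hs2.le_tsum P fun Q _ => (hpos 2 two_ne_zero Q).le
  have hlt : uP A.1 ^ 2 + (-1 : ℝ) ^ 2 * vP A.1 ^ 2 < hfun Fq 2 := by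
    classical
    have h := hs2.sum_le_tsum {B, A} fun Q _ => (hpos 2 two_ne_zero Q).le
    rw [Finset.sum_pair hAB] at h
    have hB := hpos 2 two_ne_zero B
    unfold hfun
    linarith
  have e : hfun Fq 2 * hfun Fq l = ∑' P : {P : Fq[X] // P.Monic ∧ Irreducible P},
      hfun Fq 2 * (uP P.1 ^ l + (-1 : ℝ) ^ l * vP P.1 ^ l) := tsum_mul_left.symm
  have hterm := fun P : {P : Fq[X] // P.Monic ∧ Irreducible P} =>
    term_two_add_le (vP_pos P.2.2).le (vP_lt_uP P.2.2).le hl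
  rw [e]
  refine Summable.tsum_lt_tsum (i := A) (fun P => ?_) ?_ (summable_term (by omega))
    ((summable_term hl).mul_left _)
  · exact (hterm P).trans (mul_le_mul_of_nonneg_right (hle P) (hpos l (by omega) P).le)
  · exact (hterm A).trans_lt (mul_lt_mul_of_pos_right hlt (hpos l (by omega) A))
end

section
/- For every prime power q, one has h(3) < h(2)^{3/2}. -/
/-!
Write `a_P = u_P² + v_P²`, so that `h(2) = ∑ a_P`. Since all `a_P` are positive,
`u_P ≤ √a_P ≤ √h(2)` for every `P`, hence
`u_P³ - v_P³ < u_P³ ≤ √h(2) · u_P² ≤ √h(2) · a_P`.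
Summing over `P` gives `h(3) < √h(2) · h(2) = h(2)^(3/2)`.

The only analytic input is the convergence of `h(2)` (`summable_sq_add_sq`): `a_P ≤ 5 |P|⁻²`, and
`∑ |P|⁻²` converges because there are at most `q^(n+1)` polynomials of degree `n`.
-/

open Polynomial

/-- `∑ |P|⁻²` converges even over all polynomials; at `P = 0` the summand is `1`,
since `natDegree 0 = 0`. -/
lemma summable_inv_sq_norm (Fq : Type) [Field Fq] [Fintype Fq] :
    Summable (fun P : Polynomial Fq => (((Fintype.card Fq : ℝ) ^ P.natDegree)⁻¹) ^ 2) := by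
  have hq : (1 : ℝ) < Fintype.card Fq := by exact_mod_cast Fintype.one_lt_card
  have hq0 : (0 : ℝ) < Fintype.card Fq := by linarith
  set q : ℝ := (Fintype.card Fq : ℝ) with hqdef
  -- A polynomial of degree `n` is determined by its coefficients of index `≤ n`.
  let coeffs (n : ℕ) (P : {P : Polynomial Fq // P.natDegree = n}) (i : Fin (n + 1)) : Fq :=
    P.1.coeff i
  have hinj : ∀ n, Function.Injective (coeffs n) := by
    rintro n ⟨P, hP⟩ ⟨Q, hQ⟩ h
    apply Subtype.ext
    change P = Q
    ext i
    by_cases hi : i < n + 1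
    · exact congrFun h ⟨i, hi⟩
    · rw [coeff_eq_zero_of_natDegree_lt (by omega), coeff_eq_zero_of_natDegree_lt (by omega)]
  have hfin : ∀ n, Finite {P : Polynomial Fq // P.natDegree = n} := fun n =>
    Finite.of_injective _ (hinj n)
  have hcard : ∀ n, (Nat.card {P : Polynomial Fq // P.natDegree = n} : ℝ) ≤ q ^ (n + 1) := by
    intro n
    have := Nat.card_le_card_of_injective _ (hinj n)
    simp only [Nat.card_eq_fintype_card, Fintype.card_fun, Fintype.card_fin] at this
    rw [hqdef]
    exact_mod_cast this
  rw [← (Equiv.sigmaFiberEquiv (fun P : Polynomial Fq => P.natDegree)).summable_iff,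
    summable_sigma_of_nonneg (fun _ => by simp only [Function.comp]; positivity)]
  refine ⟨fun n => Summable.of_finite, ?_⟩
  have hgeo : Summable (fun n : ℕ => q * (q⁻¹) ^ n) :=
    (summable_geometric_of_lt_one (by positivity) (inv_lt_one_of_one_lt₀ hq)).mul_left q
  refine Summable.of_nonneg_of_le (fun n => tsum_nonneg fun _ => ?_) (fun n => ?_) hgeo
  · simp only [Function.comp]; positivity
  · have hconst : ∀ P : {P : Polynomial Fq // P.natDegree = n},
        ((fun P : Polynomial Fq => ((q ^ P.natDegree)⁻¹) ^ 2) ∘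
          (Equiv.sigmaFiberEquiv (fun P : Polynomial Fq => P.natDegree))) ⟨n, P⟩
          = ((q ^ n)⁻¹) ^ 2 := by
      rintro ⟨P, hP⟩
      simp [Equiv.sigmaFiberEquiv, hP]
    rw [tsum_congr hconst, tsum_const, nsmul_eq_mul]
    calc _ ≤ q ^ (n + 1) * ((q ^ n)⁻¹) ^ 2 := by gcongr; exact hcard n
      _ = q * (q⁻¹) ^ n := by rw [inv_pow q n, pow_succ]; field_simp

lemma uP_vP_bounds {Fq : Type} [Field Fq] [Fintype Fq] {P : Polynomial Fq} (hP : Irreducible P) :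
    0 < vP P ∧ vP P ≤ ((Fintype.card Fq : ℝ) ^ P.natDegree)⁻¹ ∧
    ((Fintype.card Fq : ℝ) ^ P.natDegree)⁻¹ ≤ uP P ∧
    uP P ≤ 2 * ((Fintype.card Fq : ℝ) ^ P.natDegree)⁻¹ := by
  have hq : (2 : ℝ) ≤ Fintype.card Fq := by
    exact_mod_cast (Fintype.one_lt_card : 1 < Fintype.card Fq)
  have hx : (2 : ℝ) ≤ (Fintype.card Fq : ℝ) ^ P.natDegree :=
    hq.trans (le_self_pow₀ (by linarith) hP.natDegree_pos.ne')
  have hx0 : 0 < ((Fintype.card Fq : ℝ) ^ P.natDegree)⁻¹ := by positivity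
  have hx2 : ((Fintype.card Fq : ℝ) ^ P.natDegree)⁻¹ ≤ 1 / 2 := by
    rw [one_div]; exact inv_anti₀ (by norm_num) hx
  unfold uP vP
  generalize ((Fintype.card Fq : ℝ) ^ P.natDegree)⁻¹ = x at hx0 hx2 ⊢
  refine ⟨Real.log_pos (by linarith), ?_, ?_, ?_⟩
  · linarith [Real.log_le_sub_one_of_pos (x := 1 + x) (by linarith)]
  · linarith [Real.log_le_sub_one_of_pos (x := 1 - x) (by linarith)]
  · have h1 := Real.one_sub_inv_le_log_of_pos (x := 1 - x) (by linarith)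
    have h2 : (1 - x)⁻¹ ≤ 1 + 2 * x := by
      rw [inv_le_iff_one_le_mul₀ (by linarith)]
      nlinarith
    linarith

lemma summable_sq_add_sq (Fq : Type) [Field Fq] [Fintype Fq] :
    Summable (fun P : {P : Polynomial Fq // P.Monic ∧ Irreducible P} =>
      uP P.1 ^ 2 + vP P.1 ^ 2) := by
  have h := ((summable_inv_sq_norm Fq).comp_injective
    (Subtype.val_injective (p := fun P : Polynomial Fq => P.Monic ∧ Irreducible P))).mul_left 5
  refine Summable.of_nonneg_of_le (fun P => by positivity) (fun P => ?_) h
  obtain ⟨hv, hv', hxu, hu'⟩ := uP_vP_bounds P.2.2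
  have hu : 0 < uP P.1 := by linarith
  have h1 := pow_le_pow_left₀ hu.le hu' 2
  have h2 := pow_le_pow_left₀ hv.le hv' 2
  simp only [Function.comp]
  linarith [mul_pow (2 : ℝ) ((Fintype.card Fq : ℝ) ^ P.1.natDegree)⁻¹ 2]

/-- For every prime power `q` (realized as the cardinality of a finite field `Fq`),
one has `h(3) < h(2)^(3/2)` (real power). -/
theorem hfun_three_lt (Fq : Type) [Field Fq] [Fintype Fq] :
    hfun Fq 3 < hfun Fq 2 ^ ((3 : ℝ) / 2) := by
  have hs := summable_sq_add_sq Fq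
  have h2 : hfun Fq 2 = ∑' P : {P : Polynomial Fq // P.Monic ∧ Irreducible P},
      (uP P.1 ^ 2 + vP P.1 ^ 2) := by
    simp [hfun]
  have h0 : 0 ≤ hfun Fq 2 := by
    rw [h2]; exact tsum_nonneg fun P => by positivity
  have hpow : hfun Fq 2 ^ ((3 : ℝ) / 2) = √(hfun Fq 2) * hfun Fq 2 := by
    rw [Real.sqrt_eq_rpow, show (3 : ℝ) / 2 = 1 / 2 + 1 by norm_num,
      Real.rpow_add_one' h0 (by norm_num)]
  have hu_le : ∀ P : {P : Polynomial Fq // P.Monic ∧ Irreducible P},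
      uP P.1 ≤ √(hfun Fq 2) := by
    intro P
    apply Real.le_sqrt_of_sq_le
    have := hs.le_tsum P (fun Q _ => by positivity)
    rw [h2]
    nlinarith [sq_nonneg (vP P.1)]
  have hlt : ∀ P : {P : Polynomial Fq // P.Monic ∧ Irreducible P},
      uP P.1 ^ 3 + (-1 : ℝ) ^ 3 * vP P.1 ^ 3 < √(hfun Fq 2) * (uP P.1 ^ 2 + vP P.1 ^ 2) := by
    intro P
    obtain ⟨hv, hvx, hxu, -⟩ := uP_vP_bounds P.2.2
    have hu : 0 < uP P.1 := by linarith
    have h3 : 0 < vP P.1 ^ 3 := by positivity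
    have h4 := mul_le_mul_of_nonneg_right (hu_le P)
      (by positivity : 0 ≤ uP P.1 ^ 2 + vP P.1 ^ 2)
    have h5 : 0 < uP P.1 * vP P.1 ^ 2 := by positivity
    linarith
  have hnonneg : ∀ P : {P : Polynomial Fq // P.Monic ∧ Irreducible P},
      0 ≤ uP P.1 ^ 3 + (-1 : ℝ) ^ 3 * vP P.1 ^ 3 := by
    intro P
    obtain ⟨hv, hvx, hxu, -⟩ := uP_vP_bounds P.2.2
    linarith [pow_le_pow_left₀ hv.le (hvx.trans hxu) 3]
  have hs3 := Summable.of_nonneg_of_le hnonneg (fun P => (hlt P).le)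
    (hs.mul_left √(hfun Fq 2))
  rw [hpow]
  nth_rewrite 2 [h2]
  rw [← tsum_mul_left]
  exact Summable.tsum_lt_tsum (i := ⟨X, monic_X, irreducible_X⟩) (fun P => (hlt P).le) (hlt _)
    hs3 (hs.mul_left _)
end
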